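/- arXiv:0902.3037 — 4 statements merged into one kernel-verified Lean document; each statement's English description precedes it below -/
import Mathlib

section
/- Let R be a commutative noetherian local ring and M a nonzero finitely generated R-module with finite projective dimension and finite injective dimension. Then R is Gorenstein (i.e., R has finite injective dimension as a module over itself). -/
set_option linter.unusedVariables false
open CategoryTheory TensorProduct

/-- `pdLE R n M`: the `R`-module `M` has projective dimension at most `n`,
i.e. it admits a projective resolution of length `n`. -/
def pdLE (R : Type) [CommRing R] : ℕ → (M : Type) → (iM : AddCommGroup M) → (jM : Module R M) → Prop
  | 0, M, iM, jM => Module.Projective R M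
  | n+1, M, iM, jM =>
      ∃ (P : Type) (iP : AddCommGroup P) (jP : Module R P) (f : P →ₗ[R] M),
        Module.Projective R P ∧ Function.Surjective f ∧
          pdLE R n (LinearMap.ker f) inferInstance inferInstance

/-- `idLE R n M`: `M` has injective dimension at most `n`,
i.e. it admits an injective resolution of length `n`. -/
def idLE (R : Type) [CommRing R] : ℕ → (M : Type) → (iM : AddCommGroup M) → (jM : Module R M) → Prop
  | 0, M, iM, jM => Module.Injective R M
  | n+1, M, iM, jM =>
      ∃ (I : Type) (iI : AddCommGroup I) (jI : Module R I) (f : M →ₗ[R] I),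
        Module.Injective R I ∧ Function.Injective f ∧
          idLE R n (I ⧸ LinearMap.range f) inferInstance inferInstance

/-- The projective dimension of `M`, as an element of `ℕ∞` (`⊤` means infinite). -/
noncomputable def projDim (R : Type) [CommRing R] (M : Type) [AddCommGroup M] [Module R M] : ℕ∞ :=
  sInf {n : ℕ∞ | ∃ m : ℕ, n = m ∧ pdLE R m M inferInstance inferInstance}

/-- The injective dimension of `M`, as an element of `ℕ∞`. -/
noncomputable def injDim (R : Type) [CommRing R] (M : Type) [AddCommGroup M] [Module R M] : ℕ∞ :=
  sInf {n : ℕ∞ | ∃ m : ℕ, n = m ∧ idLE R m M inferInstance inferInstance}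

/-- A commutative noetherian (local) ring is Gorenstein if it has finite injective
dimension as a module over itself. -/
def IsGorensteinRing (R : Type) [CommRing R] : Prop :=
  ∃ n : ℕ, idLE R n R inferInstance inferInstance

/-- `extGroup R M N i` : the `i`-th Ext module `Ext^i_R(M,N)`. -/
noncomputable def extGroup (R : Type) [CommRing R] (M N : Type) [AddCommGroup M] [Module R M]
    [AddCommGroup N] [Module R N] (i : ℕ) : ModuleCat R :=
  ((Ext R (ModuleCat R) i).obj (Opposite.op (ModuleCat.of R M))).obj (ModuleCat.of R N)

/-- `torGroup R M N i` : the `i`-th Tor module `Tor_i^R(M,N)`. -/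
noncomputable def torGroup (R : Type) [CommRing R] (M N : Type) [AddCommGroup M] [Module R M]
    [AddCommGroup N] [Module R N] (i : ℕ) : ModuleCat R :=
  ((Tor (ModuleCat R) i).obj (ModuleCat.of R M)).obj (ModuleCat.of R N)

/-- `C` is a semidualizing `R`-module: it is finitely generated, the homothety map
`R → Hom_R(C,C)` is bijective, and `Ext^i_R(C,C) = 0` for all `i > 0`. -/
def IsSemidualizing (R : Type) [CommRing R] (C : Type) [AddCommGroup C] [Module R C] : Prop :=
  Module.Finite R C ∧ Function.Bijective (LinearMap.lsmul R C) ∧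
    ∀ i : ℕ, 0 < i → Subsingleton (extGroup R C C i)

/-- `CpdLE R C n M` : `M` has `C`-projective dimension at most `n`, i.e. there is an exact
sequence `0 → C⊗Pₙ → ⋯ → C⊗P₀ → M → 0` with each `Pᵢ` projective. -/
def CpdLE (R C : Type) [CommRing R] [AddCommGroup C] [Module R C] :
    ℕ → (M : Type) → (iM : AddCommGroup M) → (jM : Module R M) → Prop
  | 0, M, iM, jM =>
      ∃ (P : Type) (iP : AddCommGroup P) (jP : Module R P),
        Module.Projective R P ∧ Nonempty ((TensorProduct R C P) ≃ₗ[R] M)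
  | n+1, M, iM, jM =>
      ∃ (P : Type) (iP : AddCommGroup P) (jP : Module R P)
        (f : TensorProduct R C P →ₗ[R] M),
        Module.Projective R P ∧ Function.Surjective f ∧
          CpdLE R C n (LinearMap.ker f) inferInstance inferInstance

/-- `CidLE R C n M` : `M` has `C`-injective dimension at most `n`, i.e. there is an exact
sequence `0 → M → Hom(C,I⁰) → ⋯ → Hom(C,Iⁿ) → 0` with each `Iⁱ` injective. -/
def CidLE (R C : Type) [CommRing R] [AddCommGroup C] [Module R C] :
    ℕ → (M : Type) → (iM : AddCommGroup M) → (jM : Module R M) → Prop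
  | 0, M, iM, jM =>
      ∃ (I : Type) (iI : AddCommGroup I) (jI : Module R I),
        Module.Injective R I ∧ Nonempty (M ≃ₗ[R] (C →ₗ[R] I))
  | n+1, M, iM, jM =>
      ∃ (I : Type) (iI : AddCommGroup I) (jI : Module R I)
        (f : M →ₗ[R] (C →ₗ[R] I)),
        Module.Injective R I ∧ Function.Injective f ∧
          CidLE R C n ((C →ₗ[R] I) ⧸ LinearMap.range f) inferInstance inferInstance

/-- The depth of a module over a local ring: the supremum of lengths of `M`-regular
sequences contained in the maximal ideal. -/
noncomputable def rdepth (R : Type) [CommRing R] [IsLocalRing R]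
    (M : Type) [AddCommGroup M] [Module R M] : ℕ∞ :=
  sSup {n : ℕ∞ | ∃ rs : List R, (rs.length : ℕ∞) = n ∧
    (∀ r ∈ rs, r ∈ IsLocalRing.maximalIdeal R) ∧ RingTheory.Sequence.IsRegular M rs}

section FiniteDimensions

variable {R : Type} [CommRing R]

/-- A bilinear map out of projective modules lifts along any linear map whose range contains its
values. -/
lemma exists_bilinear_lift {G P X Y : Type} [AddCommGroup G] [Module R G] [AddCommGroup P]
    [Module R P] [AddCommGroup X] [Module R X] [AddCommGroup Y] [Module R Y]
    [Module.Projective R G] [Module.Projective R P] (d : Y →ₗ[R] X) (u : G →ₗ[R] P →ₗ[R] X)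
    (hu : ∀ g p, u g p ∈ LinearMap.range d) :
    ∃ h : G →ₗ[R] P →ₗ[R] Y, ∀ g p, d (h g p) = u g p := by
  have hmem : ∀ t, TensorProduct.lift u t ∈ LinearMap.range d := by
    intro t
    induction t with
    | zero => simp
    | tmul g p => simpa using hu g p
    | add a b ha hb => simpa using add_mem ha hb
  obtain ⟨h, hh⟩ := Module.projective_lifting_property d.rangeRestrict
    ((TensorProduct.lift u).codRestrict _ hmem) d.surjective_rangeRestrict
  refine ⟨TensorProduct.curry h, fun g p => ?_⟩
  have := congrArg Subtype.val (LinearMap.congr_fun hh (g ⊗ₜ[R] p))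
  simpa using this

/-- A linear family of chain maps, parametrised by a projective module, from a complex of
projectives to an exact complex is a boundary of a linear family of homotopies as soon as it
vanishes in homology in degree zero. -/
lemma exists_linear_homotopy {G : Type} [AddCommGroup G] [Module R G] [Module.Projective R G]
    {P Q : ℕ → Type} [∀ i, AddCommGroup (P i)] [∀ i, Module R (P i)]
    [∀ i, AddCommGroup (Q i)] [∀ i, Module R (Q i)] [∀ i, Module.Projective R (P i)]
    (dP : ∀ i, P (i + 1) →ₗ[R] P i) (dQ : ∀ i, Q (i + 1) →ₗ[R] Q i)
    (hP : ∀ i p, dP i (dP (i + 1) p) = 0)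
    (hQ : ∀ i q, dQ i q = 0 → q ∈ LinearMap.range (dQ (i + 1)))
    (θ : ∀ i, G →ₗ[R] P i →ₗ[R] Q i)
    (hθ : ∀ i g p, dQ i (θ (i + 1) g p) = θ i g (dP i p))
    (hθ₀ : ∀ g p, θ 0 g p ∈ LinearMap.range (dQ 0)) :
    ∃ h : ∀ i, G →ₗ[R] P i →ₗ[R] Q (i + 1),
      (∀ g p, dQ 0 (h 0 g p) = θ 0 g p) ∧
      ∀ i g p, dQ (i + 1) (h (i + 1) g p) + h i g (dP i p) = θ (i + 1) g p := by
  let S (i : ℕ) := {h : G →ₗ[R] P i →ₗ[R] Q (i + 1) //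
    ∀ g p, dQ i (h g (dP i p)) = θ i g (dP i p)}
  have step (i : ℕ) (h : S i) : ∃ h' : S (i + 1),
      ∀ g p, dQ (i + 1) (h'.1 g p) + h.1 g (dP i p) = θ (i + 1) g p := by
    obtain ⟨h', hh'⟩ := exists_bilinear_lift (dQ (i + 1))
      (θ (i + 1) - h.1.compl₂ (dP i)) (fun g p => hQ _ _ (by simp [hθ, h.2]))
    simp only [LinearMap.sub_apply, LinearMap.compl₂_apply] at hh'
    exact ⟨⟨h', fun g p => by simp [hh', hP]⟩, fun g p => by simp [hh']⟩
  obtain ⟨h₀, hh₀⟩ := exists_bilinear_lift (dQ 0) (θ 0) hθ₀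
  choose next hnext using step
  let f : ∀ i, S i := fun i => Nat.rec ⟨h₀, fun g p => hh₀ g _⟩ next i
  exact ⟨fun i => (f i).1, hh₀, fun i => hnext i (f i)⟩

variable (R) in
/-- `FiniteFreeResolution R n Z`: the module `Z` has a resolution by finite free modules
with at most `n` nonzero terms. -/
def FiniteFreeResolution : ℕ → (Z : Type) → (iZ : AddCommGroup Z) → (jZ : Module R Z) → Prop
  | 0, Z, _, _ => Subsingleton Z
  | n + 1, Z, _, _ =>
      ∃ (G : Type) (_ : AddCommGroup G) (_ : Module R G) (π : G →ₗ[R] Z),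
        Module.Free R G ∧ Module.Finite R G ∧ Function.Surjective π ∧
          FiniteFreeResolution n (LinearMap.ker π) inferInstance inferInstance

/-- The contraction of a family of maps `P → Q` parametrised by `G` with a map `Q → G`. -/
noncomputable def traceContraction {G P Q : Type} [AddCommGroup G] [Module R G] [AddCommGroup P]
    [Module R P] [AddCommGroup Q] [Module R Q] (β : Q →ₗ[R] G) (h : G →ₗ[R] P →ₗ[R] Q) :
    P →ₗ[R] R :=
  LinearMap.trace R G ∘ₗ LinearMap.compRight R β ∘ₗ h.flip

lemma traceContraction_apply {G P Q : Type} [AddCommGroup G] [Module R G] [AddCommGroup P]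
    [Module R P] [AddCommGroup Q] [Module R Q] (β : Q →ₗ[R] G) (h : G →ₗ[R] P →ₗ[R] Q) (p : P) :
    traceContraction β h p = LinearMap.trace R G (β ∘ₗ h.flip p) := rfl

/-- The contraction of a chain map parametrised by `Z` with a cocycle with values in `Z`
is a coboundary if `Z` has a finite free resolution. -/
lemma exists_traceContraction_eq (n : ℕ) {P : ℕ → Type} [∀ i, AddCommGroup (P i)]
    [∀ i, Module R (P i)] [∀ i, Module.Projective R (P i)]
    (dP : ∀ i, P (i + 1) →ₗ[R] P i) (hP : ∀ i p, dP i (dP (i + 1) p) = 0)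
    {Q : ℕ → Type} [∀ i, AddCommGroup (Q i)] [∀ i, Module R (Q i)]
    [∀ i, Module.Projective R (Q i)] (dQ : ∀ i, Q (i + 1) →ₗ[R] Q i)
    (hQ₀ : ∀ i q, dQ i (dQ (i + 1) q) = 0)
    (hQ : ∀ i q, dQ i q = 0 → q ∈ LinearMap.range (dQ (i + 1)))
    {Z G : Type} [AddCommGroup Z] [Module R Z] [AddCommGroup G] [Module R G]
    [Module.Free R G] [Module.Finite R G] (π : G →ₗ[R] Z)
    (hker : FiniteFreeResolution R n (LinearMap.ker π) inferInstance inferInstance)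
    (θ : ∀ i, Z →ₗ[R] P i →ₗ[R] Q i)
    (hθ : ∀ i z p, dQ i (θ (i + 1) z p) = θ i z (dP i p))
    (hθ₀ : ∀ z p, θ 0 z p ∈ LinearMap.range (dQ 0))
    (m : ℕ) (β : Q (m + 1) →ₗ[R] G) (hβ : ∀ q, π (β (dQ (m + 1) q)) = 0) :
    ∃ γ : P m →ₗ[R] R, traceContraction β (θ (m + 1) ∘ₗ π) = γ ∘ₗ dP m := by
  induction n generalizing Q Z G with
  | zero =>
    obtain ⟨h, -, hh⟩ := exists_linear_homotopy dP dQ hP hQ (fun i => θ i ∘ₗ π)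
      (fun i g p => hθ i _ p) (fun g p => hθ₀ _ p)
    have hsub : Subsingleton (LinearMap.ker π) := hker
    have hβ' (q) : β (dQ (m + 1) q) = 0 :=
      congrArg Subtype.val (Subsingleton.elim (⟨_, hβ q⟩ : LinearMap.ker π) 0)
    refine ⟨traceContraction β (h m), LinearMap.ext fun p => ?_⟩
    rw [LinearMap.comp_apply, traceContraction_apply, traceContraction_apply]
    congr 1
    ext g
    simpa [hβ'] using (congrArg β (hh m g p)).symm
  | succ n ih =>
    obtain ⟨h, hh₀, hh⟩ := exists_linear_homotopy dP dQ hP hQ (fun i => θ i ∘ₗ π)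
      (fun i g p => hθ i _ p) (fun g p => hθ₀ _ p)
    obtain ⟨G', _, _, π', _, _, hπ', hker'⟩ := hker
    obtain ⟨β', hβ'⟩ := Module.projective_lifting_property π'
      ((β ∘ₗ dQ (m + 1)).codRestrict (LinearMap.ker π) hβ) hπ'
    have hβ'' (q) : (π' (β' q) : G) = β (dQ (m + 1) q) :=
      congrArg Subtype.val (LinearMap.congr_fun hβ' q)
    obtain ⟨γ, hγ⟩ := ih (Q := fun i => Q (i + 1)) (fun i => -dQ (i + 1))
      (fun i q => by simp [hQ₀])
      (fun i q hq => by
        obtain ⟨y, hy⟩ := hQ (i + 1) q (by simpa using hq)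
        exact ⟨-y, by simpa using hy⟩)
      π' hker' (fun i => h i ∘ₗ (LinearMap.ker π).subtype)
      (fun i z p => by
        have := hh i z p
        have hz : π z = 0 := z.2
        simp only [LinearMap.comp_apply, hz, map_zero, LinearMap.zero_apply] at this
        simp only [LinearMap.comp_apply, LinearMap.neg_apply, Submodule.subtype_apply]
        exact neg_eq_of_add_eq_zero_right this)
      (fun z p => by
        obtain ⟨y, hy⟩ := hQ 0 (h 0 z p) (by
          rw [hh₀]
          have hz : π z = 0 := z.2
          simp [hz])
        exact ⟨-y, by simpa using hy⟩)
      β' (fun q => Subtype.ext (by simp [hβ'', hQ₀]))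
    refine ⟨γ + traceContraction β (h m), LinearMap.ext fun p => ?_⟩
    have e : β ∘ₗ (θ (m + 1) ∘ₗ π).flip p = ((LinearMap.ker π).subtype ∘ₗ π') ∘ₗ
        (β' ∘ₗ (h (m + 1)).flip p) + β ∘ₗ (h m).flip (dP m p) := by
      ext g
      simpa [hβ''] using (congrArg β (hh m g p)).symm
    rw [LinearMap.comp_apply, LinearMap.add_apply, ← LinearMap.comp_apply, ← hγ,
      traceContraction_apply, traceContraction_apply, traceContraction_apply, e, map_add,
      LinearMap.trace_comp_comm']
    rfl

/-- Cocycles in degrees larger than the injective dimension are coboundaries. -/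
lemma idLE.exists_eq_comp {P : ℕ → Type} [∀ i, AddCommGroup (P i)] [∀ i, Module R (P i)]
    [∀ i, Module.Projective R (P i)] (dP : ∀ i, P (i + 1) →ₗ[R] P i)
    (hP : ∀ i p, dP i (dP (i + 1) p) = 0)
    (hexact : ∀ i p, dP i p = 0 → p ∈ LinearMap.range (dP (i + 1)))
    {s : ℕ} {M : Type} {iM : AddCommGroup M} {jM : Module R M} (h : idLE R s M iM jM)
    {i : ℕ} (hi : s ≤ i) (α : P (i + 1) →ₗ[R] M) (hα : ∀ p, α (dP (i + 1) p) = 0) :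
    ∃ β : P i →ₗ[R] M, α = β ∘ₗ dP i := by
  have factor {I : Type} [AddCommGroup I] [Module R I] [Module.Injective R I] (i : ℕ)
      (α : P (i + 1) →ₗ[R] I) (hα : ∀ p, α (dP (i + 1) p) = 0) :
      ∃ β : P i →ₗ[R] I, α = β ∘ₗ dP i := by
    have hker : LinearMap.ker (dP i) ≤ LinearMap.ker α := by
      intro p hp
      obtain ⟨q, rfl⟩ := hexact i p hp
      exact hα q
    obtain ⟨β, hβ⟩ := Module.Injective.out ((LinearMap.ker (dP i)).liftQ (dP i) le_rfl)
      (LinearMap.ker_eq_bot.mp (Submodule.ker_liftQ_eq_bot' _ _ rfl))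
      ((LinearMap.ker (dP i)).liftQ α hker)
    exact ⟨β, LinearMap.ext fun p => (hβ (Submodule.Quotient.mk p)).symm⟩
  induction s generalizing M i with
  | zero =>
    have : Module.Injective R M := h
    exact factor i α hα
  | succ s ih =>
    obtain ⟨I, _, _, f, _, hf, hC⟩ := h
    obtain ⟨i, rfl⟩ : ∃ i', i = i' + 1 := ⟨i - 1, by lia⟩
    obtain ⟨β, hβ⟩ := factor (i + 1) (f ∘ₗ α) (by simp [hα])
    have hβ' (p) : f (α p) = β (dP (i + 1) p) := LinearMap.congr_fun hβ p
    obtain ⟨γ, hγ⟩ := ih hC (i := i) (by lia) ((LinearMap.range f).mkQ ∘ₗ β) (fun p => by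
      simp [← hβ'])
    obtain ⟨γ', hγ'⟩ := Module.projective_lifting_property (LinearMap.range f).mkQ γ
      (Submodule.mkQ_surjective _)
    have hmem (p) : (β - γ' ∘ₗ dP i) p ∈ LinearMap.range f := by
      rw [← Submodule.ker_mkQ (LinearMap.range f), LinearMap.mem_ker]
      have h₁ := LinearMap.congr_fun hγ p
      have h₂ := LinearMap.congr_fun hγ' (dP i p)
      simp only [LinearMap.comp_apply] at h₁ h₂
      simp [h₁, h₂, -Submodule.mkQ_apply]
    refine ⟨(LinearEquiv.ofInjective f hf).symm ∘ₗ (β - γ' ∘ₗ dP i).codRestrict _ hmem,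
      LinearMap.ext fun p => ?_⟩
    simp only [LinearMap.comp_apply, LinearEquiv.coe_coe]
    rw [LinearEquiv.eq_symm_apply]
    ext
    simp [hβ', hP]

lemma pdLE.hasProjectiveDimensionLE {n : ℕ} {M : Type} {iM : AddCommGroup M} {jM : Module R M}
    (h : pdLE R n M iM jM) : HasProjectiveDimensionLE (ModuleCat.of R M) n := by
  induction n generalizing M with
  | zero =>
    have : Module.Projective R M := h
    have := (IsProjective.iff_projective M).mp this
    exact projective_iff_hasProjectiveDimensionLT_one.mp this
  | succ n ih =>
    obtain ⟨P, _, _, f, hP, hf, hK⟩ := h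
    exact ((LinearMap.shortExact_shortComplexKer hf).hasProjectiveDimensionLT_X₃_iff n
      ((IsProjective.iff_projective P).mp hP)).mpr (ih hK)

lemma finiteFreeResolution_of_hasProjectiveDimensionLE [IsNoetherianRing R] [IsLocalRing R] {n : ℕ}
    {M : Type} [AddCommGroup M] [Module R M] [Module.Finite R M]
    (h : HasProjectiveDimensionLE (ModuleCat.of R M) n) :
    FiniteFreeResolution R (n + 2) M inferInstance inferInstance := by
  induction n generalizing M with
  | zero =>
    have : Module.Projective R M :=
      (IsProjective.iff_projective M).mpr (projective_iff_hasProjectiveDimensionLT_one.mpr h)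
    have := Module.free_of_flat_of_isLocalRing (R := R) (P := M)
    have : Subsingleton (LinearMap.ker (LinearMap.id : M →ₗ[R] M)) := by
      rw [LinearMap.ker_id]; infer_instance
    refine ⟨M, _, _, LinearMap.id, inferInstance, inferInstance, Function.surjective_id,
      PUnit, inferInstance, inferInstance, 0, inferInstance, inferInstance,
      Function.surjective_to_subsingleton _, ?_⟩
    exact (inferInstance : Subsingleton (LinearMap.ker (0 : PUnit →ₗ[R] LinearMap.ker (LinearMap.id : M →ₗ[R] M))))
  | succ n ih =>
    obtain ⟨b, f, hf⟩ := Module.Finite.exists_fin' R M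
    have hproj := (IsProjective.iff_projective (R := R) (Fin b → R)).mp inferInstance
    refine ⟨_, _, _, f, inferInstance, inferInstance, hf, ih ?_⟩
    exact ((LinearMap.shortExact_shortComplexKer hf).hasProjectiveDimensionLT_X₃_iff n hproj).mp h


/-- A nonzero finite module over a local ring, covered by a projective module `G`, admits a
functional on `G` taking the value one and mapping all relations into the maximal ideal. -/
lemma exists_functional_of_nontrivial [IsLocalRing R] {M G : Type} [AddCommGroup M] [Module R M]
    [Module.Finite R M] [Nontrivial M] [AddCommGroup G] [Module R G] [Module.Projective R G]
    (π : G →ₗ[R] M) (hπ : Function.Surjective π) :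
    ∃ (φ : G →ₗ[R] R) (e : G), φ e = 1 ∧
      ∀ z ∈ LinearMap.ker π, φ z ∈ IsLocalRing.maximalIdeal R := by
  obtain ⟨N, hN⟩ := IsCoatomic.exists_coatom (Submodule R M)
  obtain ⟨I, hI, ⟨ε⟩⟩ := isSimpleModule_iff_quot_maximal.mp (isSimpleModule_iff_isCoatom.mpr hN)
  obtain rfl := IsLocalRing.eq_maximalIdeal hI
  let I := IsLocalRing.maximalIdeal R
  let χ : M →ₗ[R] R ⧸ I := ε.toLinearMap ∘ₗ N.mkQ
  have hχ : Function.Surjective (χ ∘ₗ π) :=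
    (ε.surjective.comp N.mkQ_surjective).comp hπ
  obtain ⟨φ, hφ⟩ := Module.projective_lifting_property (Submodule.mkQ I) (χ ∘ₗ π)
    (Submodule.mkQ_surjective I)
  have hφ' (g) : Ideal.Quotient.mk I (φ g) = χ (π g) := LinearMap.congr_fun hφ g
  obtain ⟨e, he⟩ := hχ 1
  have hu : IsUnit (φ e) := by
    rw [← IsLocalRing.notMem_maximalIdeal]
    intro h
    rw [← Ideal.Quotient.eq_zero_iff_mem] at h
    exact one_ne_zero ((he.symm.trans (hφ' e).symm).trans h)
  obtain ⟨u, hu⟩ := hu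
  refine ⟨φ, (↑u⁻¹ : R) • e, by simp [← hu], fun z hz => ?_⟩
  rw [← Ideal.Quotient.eq_zero_iff_mem]
  exact (hφ' z).trans (by rw [LinearMap.mem_ker.mp hz, map_zero])

/-- In the presence of a nonzero finite module of finite projective and injective dimension,
a projective resolution of a module annihilated by the maximal ideal has no cohomology with
coefficients in the ring in large degrees. -/
lemma exists_eq_comp_of_pdLE_of_idLE [IsNoetherianRing R] [IsLocalRing R]
    {M : Type} [AddCommGroup M] [Module R M] [Module.Finite R M] [Nontrivial M] {n s : ℕ}
    (hpd : pdLE R n M inferInstance inferInstance) (hid : idLE R s M inferInstance inferInstance)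
    {P : ℕ → Type} [∀ i, AddCommGroup (P i)] [∀ i, Module R (P i)]
    [∀ i, Module.Projective R (P i)] (dP : ∀ i, P (i + 1) →ₗ[R] P i)
    (hP : ∀ i p, dP i (dP (i + 1) p) = 0)
    (hexact : ∀ i p, dP i p = 0 → p ∈ LinearMap.range (dP (i + 1)))
    (hP₀ : ∀ r ∈ IsLocalRing.maximalIdeal R, ∀ p, r • p ∈ LinearMap.range (dP 0))
    {m : ℕ} (hm : s ≤ m) (α : P (m + 1) →ₗ[R] R) (hα : ∀ p, α (dP (m + 1) p) = 0) :
    ∃ γ : P m →ₗ[R] R, α = γ ∘ₗ dP m := by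
  obtain ⟨G, _, _, π, _, _, hπ, G', _, _, π', _, _, hπ', hker⟩ :=
    finiteFreeResolution_of_hasProjectiveDimensionLE hpd.hasProjectiveDimensionLE
  obtain ⟨φ, e, he, hφ⟩ := exists_functional_of_nontrivial π hπ
  obtain ⟨βM, hβM⟩ := hid.exists_eq_comp dP hP hexact hm (α.smulRight (π e)) (by simp [hα])
  obtain ⟨β₀, hβ₀⟩ := Module.projective_lifting_property π βM hπ
  have hδ (p) : (β₀ ∘ₗ dP m - α.smulRight e) p ∈ LinearMap.ker π := by
    have h₁ := LinearMap.congr_fun hβM p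
    have h₂ := LinearMap.congr_fun hβ₀ (dP m p)
    simp only [LinearMap.comp_apply, LinearMap.smulRight_apply] at h₁ h₂
    simp [h₁, h₂]
  obtain ⟨β, hβ⟩ := Module.projective_lifting_property π'
    ((β₀ ∘ₗ dP m - α.smulRight e).codRestrict _ hδ) hπ'
  have hβ' (p) : (π' (β p) : G) = β₀ (dP m p) - α p • e :=
    congrArg Subtype.val (LinearMap.congr_fun hβ p)
  obtain ⟨γ, hγ⟩ := exists_traceContraction_eq _ dP hP dP hP hexact π' hker
    (fun i => LinearMap.lsmul R (P i) ∘ₗ φ ∘ₗ (LinearMap.ker π).subtype)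
    (fun i z p => by simp) (fun z p => hP₀ _ (hφ z z.2) p) m β
    (fun q => Subtype.ext (by simp [hβ', hP, hα]))
  refine ⟨φ ∘ₗ β₀ - γ, LinearMap.ext fun p => ?_⟩
  have h₁ := LinearMap.congr_fun hγ p
  have h₂ : β ∘ₗ ((LinearMap.lsmul R (P (m + 1)) ∘ₗ φ ∘ₗ (LinearMap.ker π).subtype) ∘ₗ π').flip p =
      (φ ∘ₗ (LinearMap.ker π).subtype ∘ₗ π').smulRight (β p) := by
    ext g
    simp
  rw [traceContraction_apply, h₂, LinearMap.trace_smulRight] at h₁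
  simp only [LinearMap.comp_apply, Submodule.subtype_apply, hβ', map_sub, map_smul, he,
    smul_eq_mul, mul_one] at h₁
  simp [← h₁]

lemma subsingleton_ext_residueField [IsNoetherianRing R] [IsLocalRing R]
    {M : Type} [AddCommGroup M] [Module R M] [Module.Finite R M] [Nontrivial M] {n s : ℕ}
    (hpd : pdLE R n M inferInstance inferInstance) (hid : idLE R s M inferInstance inferInstance)
    {m : ℕ} (hm : s < m) :
    Subsingleton (Abelian.Ext (ModuleCat.of R (R ⧸ IsLocalRing.maximalIdeal R))
      (ModuleCat.of R R) m) := by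
  obtain ⟨m, rfl⟩ : ∃ m', m = m' + 1 := ⟨m - 1, by lia⟩
  let P := ProjectiveResolution.of (ModuleCat.of R (R ⧸ IsLocalRing.maximalIdeal R))
  have (i : ℕ) : Module.Projective R (P.complex.X i) :=
    (IsProjective.iff_projective _).mpr (P.projective i)
  refine subsingleton_of_forall_eq 0 fun x => ?_
  obtain ⟨f, hf, rfl⟩ := P.extMk_surjective x (m + 2) rfl
  rw [P.extMk_eq_zero_iff f _ rfl hf m rfl]
  obtain ⟨γ, hγ⟩ := exists_eq_comp_of_pdLE_of_idLE hpd hid (P := fun i => P.complex.X i)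
    (fun i => (P.complex.d (i + 1) i).hom)
    (fun i p => by rw [← ModuleCat.comp_apply]; simp)
    (fun i p hp => (ShortComplex.moduleCat_exact_iff _).mp (P.exact_succ i) p hp)
    (fun r hr p => (ShortComplex.moduleCat_exact_iff _).mp P.exact₀ _ (by
      have h (y : R ⧸ IsLocalRing.maximalIdeal R) : r • y = 0 := by
        obtain ⟨y, rfl⟩ := Ideal.Quotient.mk_surjective y
        exact Ideal.Quotient.eq_zero_iff_mem.mpr (Ideal.mul_mem_right _ _ hr)
      exact (map_smul (P.π.f 0).hom r p).trans (h _)))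
    (show s ≤ m by lia) f.hom (fun p => by
      have := congrArg (fun g => g.hom p) hf
      simpa using this)
  exact ⟨ModuleCat.ofHom γ, ModuleCat.hom_ext hγ.symm⟩

open Abelian

/-- The short exact sequence attached to an injective linear map and its cokernel. -/
lemma shortExact_of_injective {A B : Type} [AddCommGroup A] [Module R A] [AddCommGroup B]
    [Module R B] (f : A →ₗ[R] B) (hf : Function.Injective f) :
    (ModuleCat.shortComplexOfCompEqZero f (LinearMap.range f).mkQ
      f.exact_map_mkQ_range.linearMap_comp_eq_zero).ShortExact :=
  ModuleCat.shortComplex_shortExact _ f.exact_map_mkQ_range hf (Submodule.mkQ_surjective _)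

/-- Over a noetherian local ring, vanishing of Ext in all large degrees can be tested on the
residue field. -/
lemma subsingleton_ext_of_residueField [IsNoetherianRing R] [IsLocalRing R]
    (X : ModuleCat.{0} R) [Module.Finite R X] {s : ℕ}
    (hX : ∀ j, s < j →
      Subsingleton (Ext (ModuleCat.of R (R ⧸ IsLocalRing.maximalIdeal R)) X j))
    (N : Type) [AddCommGroup N] [Module R N] [Module.Finite R N] {j : ℕ} (hj : s < j) :
    Subsingleton (Ext (ModuleCat.of R N) X j) := by
  suffices h : ∀ (J : Ideal R) (N : Type) [AddCommGroup N] [Module R N] [Module.Finite R N],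
      J ≤ Module.annihilator R N → ∀ j, s < j → Subsingleton (Ext (ModuleCat.of R N) X j) from
    h ⊥ N bot_le j hj
  intro J
  induction J using IsNoetherian.induction with
  | hgt J ih =>
    intro N _ _ hN
    induction hN using IsNoetherianRing.induction_on_isQuotientEquivQuotientPrime with
    | subsingleton N =>
      intro _ j hj
      have hz : Limits.IsZero (ModuleCat.of R N) := ModuleCat.isZero_of_subsingleton _
      refine subsingleton_of_forall_eq 0 fun x => ?_
      rw [← Ext.mk₀_id_comp x, hz.eq_of_src (𝟙 _) 0, Ext.mk₀_zero, Ext.zero_comp]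
    | quotient N p e =>
      intro hJ j hj
      by_cases hp : p.asIdeal = IsLocalRing.maximalIdeal R
      · rw [hp] at e
        have := hX j hj
        refine subsingleton_of_forall_eq 0 fun x => ?_
        have hx : (Ext.mk₀ e.toModuleIso.inv).comp x (zero_add j) = 0 := Subsingleton.elim _ _
        rw [← Ext.mk₀_id_comp x, ← e.toModuleIso.hom_inv_id, ← Ext.mk₀_comp_mk₀_assoc, hx,
          Ext.comp_zero]
      · obtain ⟨r, hr, hrp⟩ : ∃ r ∈ IsLocalRing.maximalIdeal R, r ∉ p.asIdeal := by
          by_contra! h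
          exact hp (le_antisymm (IsLocalRing.le_maximalIdeal p.isPrime.ne_top) h)
        let f : N →ₗ[R] N := r • LinearMap.id
        have hf : Function.Injective f := by
          rw [← LinearMap.ker_eq_bot, LinearMap.ker_eq_bot']
          intro y hy
          obtain ⟨t, ht⟩ := Ideal.Quotient.mk_surjective (e y)
          have h₁ : r • e y = 0 := by rw [← map_smul, ← e.map_zero]; exact congrArg e hy
          rw [← ht] at h₁
          have h₂ := (p.isPrime.mem_or_mem (Ideal.Quotient.eq_zero_iff_mem.mp h₁)).resolve_left hrp
          exact e.map_eq_zero_iff.mp (ht.symm.trans (Ideal.Quotient.eq_zero_iff_mem.mpr h₂))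
        have hann : J ⊔ Ideal.span {r} ≤ Module.annihilator R (N ⧸ LinearMap.range f) := by
          rw [sup_le_iff, Ideal.span_singleton_le_iff_mem]
          refine ⟨hJ.trans (LinearMap.annihilator_le_of_surjective _
            (Submodule.mkQ_surjective (LinearMap.range f))), ?_⟩
          rw [Module.mem_annihilator]
          intro y
          obtain ⟨y, rfl⟩ := Submodule.mkQ_surjective _ y
          rw [← map_smul, ← LinearMap.mem_ker, Submodule.ker_mkQ]
          exact ⟨y, rfl⟩
        have hrJ : r ∉ J := fun h => hrp (by
          have h₁ := Module.mem_annihilator.mp (hJ h) (e.symm 1)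
          rw [← map_smul, e.symm.map_eq_zero_iff] at h₁
          exact Ideal.Quotient.eq_zero_iff_mem.mp
            ((mul_one (Ideal.Quotient.mk p.asIdeal r)).symm.trans h₁))
        have hlt : J < J ⊔ Ideal.span {r} :=
          left_lt_sup.mpr fun h => hrJ (h (Ideal.mem_span_singleton_self r))
        have := ih _ hlt _ hann (j + 1) (by lia)
        have hS := shortExact_of_injective f hf
        have hsurj (y : Ext (ModuleCat.of R N) X j) : ∃ z, r • z = y := by
          obtain ⟨z, hz⟩ := Ext.contravariant_sequence_exact₁ hS X y (add_comm 1 j)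
            (Subsingleton.elim (α := Ext (ModuleCat.of R (N ⧸ LinearMap.range f)) X (j + 1)) _ _)
          have hmk : (ModuleCat.ofHom f : ModuleCat.of R N ⟶ _) = r • 𝟙 (ModuleCat.of R N) := rfl
          refine ⟨z, ?_⟩
          rw [← hz]
          change r • z = (Ext.mk₀ (ModuleCat.ofHom f)).comp z _
          rw [hmk, Ext.mk₀_smul, Ext.smul_comp, Ext.mk₀_id_comp]
        have htop : (⊤ : Submodule R (Ext (ModuleCat.of R N) X j)) = ⊥ := by
          refine Submodule.eq_bot_of_le_smul_of_le_jacobson_bot (IsLocalRing.maximalIdeal R) _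
            Module.Finite.fg_top (fun y _ => ?_)
            (IsLocalRing.maximalIdeal_le_jacobson _)
          obtain ⟨z, rfl⟩ := hsurj y
          exact Submodule.smul_mem_smul hr trivial
        exact (Submodule.subsingleton_iff R).mp (subsingleton_of_bot_eq_top htop.symm)
    | exact N₁ N₂ N₃ f g hf hg hfg h₁ h₃ =>
      intro hJ j hj
      have := h₁ (hJ.trans (LinearMap.annihilator_le_of_injective f hf)) j hj
      have := h₃ (hJ.trans (LinearMap.annihilator_le_of_surjective g hg)) j hj
      have hS : (ModuleCat.shortComplexOfCompEqZero f g hfg.linearMap_comp_eq_zero).ShortExact :=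
        ModuleCat.shortComplex_shortExact _ hfg hf hg
      refine subsingleton_of_forall_eq 0 fun x => ?_
      obtain ⟨y, rfl⟩ := Ext.contravariant_sequence_exact₂ hS X x
        (Subsingleton.elim (α := Ext (ModuleCat.of R N₁) X j) _ _)
      rw [Subsingleton.elim (α := Ext (ModuleCat.of R N₃) X j) y 0, Ext.comp_zero]

/-- A module has injective dimension at most `n` if its Ext modules against cyclic modules
vanish in degree `n + 1`. -/
lemma idLE_of_subsingleton_ext {n : ℕ} {X : Type} [AddCommGroup X] [Module R X]
    (h : ∀ J : Ideal R, Subsingleton (Ext (ModuleCat.of R (R ⧸ J)) (ModuleCat.of R X) (n + 1))) :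
    idLE R n X inferInstance inferInstance := by
  induction n generalizing X with
  | zero =>
    refine Module.Baer.iff_injective.mp fun J g => ?_
    have hS := ModuleCat.shortComplex_shortExact
      (ModuleCat.shortComplexOfCompEqZero J.subtype (Submodule.mkQ J)
        (LinearMap.exact_subtype_mkQ J).linearMap_comp_eq_zero)
      (LinearMap.exact_subtype_mkQ J) J.subtype_injective (Submodule.mkQ_surjective J)
    have := h J
    obtain ⟨z, hz⟩ := Ext.contravariant_sequence_exact₁ hS (ModuleCat.of R X)
      (Ext.mk₀ (ModuleCat.ofHom g)) (add_zero 1)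
      (Subsingleton.elim (α := Ext (ModuleCat.of R (R ⧸ J)) (ModuleCat.of R X) 1) _ _)
    obtain ⟨z, rfl⟩ := (Ext.mk₀_bijective _ _).2 z
    rw [Ext.mk₀_comp_mk₀] at hz
    have hz' := (Ext.mk₀_bijective _ _).1 hz
    exact ⟨z.hom, fun x mem => congrArg (fun k => k.hom ⟨x, mem⟩) hz'⟩
  | succ n ih =>
    obtain ⟨I, _, f, _⟩ := EnoughInjectives.presentation (ModuleCat.of R X)
    have hf : Function.Injective f.hom := (ModuleCat.mono_iff_injective f).mp ‹_›
    refine ⟨I, inferInstance, inferInstance, f.hom,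
      Module.injective_module_of_injective_object R I, hf, ih fun J => ?_⟩
    have hS := shortExact_of_injective f.hom hf
    have := h J
    refine subsingleton_of_forall_eq 0 fun x => ?_
    obtain ⟨y, rfl⟩ := Ext.covariant_sequence_exact₃ _ hS x rfl
      (Subsingleton.elim (α := Ext (ModuleCat.of R (R ⧸ J)) (ModuleCat.of R X) (n + 1 + 1)) _ _)
    have hy : y = 0 := Ext.eq_zero_of_injective (I := ModuleCat.of R I) y
    rw [hy, Ext.zero_comp]

end FiniteDimensions

/-- **Foxby's theorem.** A commutative noetherian local ring admitting a nonzero finitely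
generated module of finite projective dimension and finite injective dimension is Gorenstein. -/
theorem foxby (R : Type) [CommRing R] [IsNoetherianRing R] [IsLocalRing R]
    (M : Type) [AddCommGroup M] [Module R M] [Module.Finite R M] [Nontrivial M]
    (hpd : ∃ n : ℕ, pdLE R n M inferInstance inferInstance)
    (hid : ∃ n : ℕ, idLE R n M inferInstance inferInstance) :
    IsGorensteinRing R := by
  obtain ⟨n, hpd⟩ := hpd
  obtain ⟨s, hid⟩ := hid
  exact ⟨s, idLE_of_subsingleton_ext fun J => subsingleton_ext_of_residueField _
    (fun j hj => subsingleton_ext_residueField hpd hid hj) (R ⧸ J) s.lt_succ_self⟩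
end

section
/- Let R be a commutative noetherian local ring with residue field k, and let M be a nonzero finitely generated R-module of finite injective dimension and finite projective dimension. Then id_R R = id_R M; in particular id_R R is finite. -/
set_option linter.unusedVariables false
open CategoryTheory TensorProduct

section Translation
open Abelian
variable {R : Type} [CommRing R]

theorem idLE_iff_hasInjectiveDimensionLE (n : ℕ) (M : Type) [iM : AddCommGroup M]
    [jM : Module R M] :
    idLE R n M iM jM ↔ HasInjectiveDimensionLE (ModuleCat.of R M) n := by
  induction n generalizing M with
  | zero =>
    change Module.Injective R M ↔ HasInjectiveDimensionLT (ModuleCat.of R M) 1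
    rw [← injective_iff_hasInjectiveDimensionLT_one]
    exact Module.injective_iff_injective_object R M
  | succ n ih =>
    have key (I : Type) [AddCommGroup I] [Module R I] [hI : Module.Injective R I]
        (f : M →ₗ[R] I) (hf : Function.Injective f) :
        HasInjectiveDimensionLE (ModuleCat.of R (I ⧸ LinearMap.range f)) n ↔
          HasInjectiveDimensionLE (ModuleCat.of R M) (n + 1) := by
      let S : ShortComplex (ModuleCat.{0} R) :=
        ModuleCat.shortComplexOfCompEqZero f (LinearMap.range f).mkQ
          f.exact_map_mkQ_range.linearMap_comp_eq_zero
      have hS : S.ShortExact := ModuleCat.shortComplex_shortExact S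
        f.exact_map_mkQ_range hf (Submodule.mkQ_surjective _)
      exact (hS.hasInjectiveDimensionLT_X₃_iff n
        ((Module.injective_iff_injective_object R I).mp hI))
    constructor
    · rintro ⟨I, iI, jI, f, hI, hf, h⟩
      exact (key I f hf).mp ((ih _).mp h)
    · intro h
      let ⟨I, hI, f, hf⟩ := EnoughInjectives.presentation (ModuleCat.of R M)
      have hI' : Module.Injective R I := (Module.injective_iff_injective_object R I).mpr hI
      have injf : Function.Injective f.hom := (ModuleCat.mono_iff_injective f).mp hf
      exact ⟨I, inferInstance, inferInstance, f.hom, hI', injf,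
        (ih _).mpr ((key I f.hom injf).mpr h)⟩

theorem hasProjectiveDimensionLE_of_pdLE (n : ℕ) (M : Type) [iM : AddCommGroup M]
    [jM : Module R M] (h : pdLE R n M iM jM) :
    HasProjectiveDimensionLE (ModuleCat.of R M) n := by
  induction n generalizing M with
  | zero =>
    change HasProjectiveDimensionLT (ModuleCat.of R M) 1
    rw [← projective_iff_hasProjectiveDimensionLT_one]
    exact (IsProjective.iff_projective M).mp h
  | succ n ih =>
    obtain ⟨P, iP, jP, f, hP, hf, h⟩ := h
    have hS := LinearMap.shortExact_shortComplexKer hf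
    exact (hS.hasProjectiveDimensionLT_X₃_iff n
      ((IsProjective.iff_projective P).mp hP)).mpr (ih _ h)

end Translation

section Bass
open Abelian
variable {R : Type} [CommRing R]

theorem subsingleton_ext_of_iso {X Y N : ModuleCat.{0} R} (e : X ≅ Y) (i : ℕ)
    [Subsingleton (Ext Y N i)] : Subsingleton (Ext X N i) := by
  refine subsingleton_of_forall_eq 0 fun x ↦ ?_
  have h : (Ext.mk₀ e.inv).comp x (zero_add i) = 0 := Subsingleton.elim _ _
  have := congrArg (fun y ↦ (Ext.mk₀ e.hom).comp y (zero_add i)) h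
  simpa using this

theorem subsingleton_ext_of_shortExact {S : ShortComplex (ModuleCat.{0} R)} (hS : S.ShortExact)
    (N : ModuleCat.{0} R) (i : ℕ) [Subsingleton (Ext S.X₁ N i)] [Subsingleton (Ext S.X₃ N i)] :
    Subsingleton (Ext S.X₂ N i) := by
  refine subsingleton_of_forall_eq 0 fun x ↦ ?_
  obtain ⟨y, rfl⟩ := Ext.contravariant_sequence_exact₂ hS N x (Subsingleton.elim _ _)
  simp [Subsingleton.elim y 0]

/-- To bound the injective dimension it suffices to test `Ext` on finitely generated modules. -/
theorem hasInjectiveDimensionLE_of_forall_finite (N : ModuleCat.{0} R) (n : ℕ)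
    (h : ∀ X : ModuleCat.{0} R, Module.Finite R X → Subsingleton (Ext X N (n + 1))) :
    HasInjectiveDimensionLE N n := by
  induction n generalizing N with
  | zero =>
    change HasInjectiveDimensionLT N 1
    rw [← injective_iff_hasInjectiveDimensionLT_one]
    suffices Module.Injective R N from (Module.injective_iff_injective_object R N).mp this
    rw [← Module.Baer.iff_injective]
    intro I g
    let S : ShortComplex (ModuleCat.{0} R) := ModuleCat.shortComplexOfCompEqZero I.subtype
      (Submodule.mkQ I) (LinearMap.exact_subtype_mkQ I).linearMap_comp_eq_zero
    have hS : S.ShortExact := ModuleCat.shortComplex_shortExact S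
      (LinearMap.exact_subtype_mkQ I) (Submodule.subtype_injective I) (Submodule.mkQ_surjective _)
    have := h S.X₃ (inferInstanceAs (Module.Finite R (R ⧸ I)))
    obtain ⟨x, hx⟩ := Ext.contravariant_sequence_exact₁ hS N
      (Ext.mk₀ (ModuleCat.ofHom g : S.X₁ ⟶ N)) (add_zero 1) (Subsingleton.elim _ _)
    obtain ⟨f, rfl⟩ := (Ext.mk₀_bijective _ _).2 x
    rw [Ext.mk₀_comp_mk₀, (Ext.mk₀_bijective _ _).1.eq_iff] at hx
    exact ⟨f.hom, fun x hxI ↦ LinearMap.congr_fun (congrArg ModuleCat.Hom.hom hx) ⟨x, hxI⟩⟩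
  | succ n ih =>
    obtain ⟨⟨J, hJ, f, hf⟩⟩ := EnoughInjectives.presentation N
    have hS : (ShortComplex.mk f (Limits.cokernel.π f) (Limits.cokernel.condition f)).ShortExact :=
      { exact := ShortComplex.exact_cokernel f }
    refine (hS.hasInjectiveDimensionLT_X₃_iff n hJ).mp (ih _ fun X hX ↦ ?_)
    have := h X hX
    refine subsingleton_of_forall_eq 0 fun x ↦ ?_
    obtain ⟨y, rfl⟩ := Ext.covariant_sequence_exact₃ X hS x rfl (Subsingleton.elim _ _)
    rw [Ext.eq_zero_of_injective y, Ext.zero_comp]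

variable [IsNoetherianRing R] [IsLocalRing R]

open IsLocalRing in
theorem subsingleton_ext_of_residueField_s1 (N : ModuleCat.{0} R) [Module.Finite R N] (n : ℕ)
    (h : ∀ i, n < i → Subsingleton (Ext (ModuleCat.of R (ResidueField R)) N i))
    (X : ModuleCat.{0} R) [Module.Finite R X] (i : ℕ) (hi : n < i) :
    Subsingleton (Ext X N i) := by
  suffices H : ∀ (J : Ideal R) (Y : Type) [AddCommGroup Y] [Module R Y] [Module.Finite R Y],
      J ≤ Module.annihilator R Y → ∀ i, n < i → Subsingleton (Ext (ModuleCat.of R Y) N i) from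
    H ⊥ X bot_le i hi
  intro J
  induction J using IsNoetherian.induction with
  | hgt J ih =>
  intro Y _ _ hY
  induction hY using IsNoetherianRing.induction_on_isQuotientEquivQuotientPrime R with
  | subsingleton Y =>
    intro _ i _
    refine subsingleton_of_forall_eq 0 fun x ↦ ?_
    have h0 : 𝟙 (ModuleCat.of R Y) = 0 := by ext y; exact Subsingleton.elim _ _
    rw [← Ext.mk₀_id_comp x, h0, Ext.mk₀_zero, Ext.zero_comp]
  | exact Y₁ Y₂ Y₃ f g hf hg hfg h₁ h₃ =>
    intro hJ i hi
    have h₁' := h₁ (hJ.trans (f.annihilator_le_of_injective hf)) i hi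
    have h₃' := h₃ (hJ.trans (g.annihilator_le_of_surjective hg)) i hi
    let S : ShortComplex (ModuleCat.{0} R) :=
      ModuleCat.shortComplexOfCompEqZero f g hfg.linearMap_comp_eq_zero
    have hS : S.ShortExact := ModuleCat.shortComplex_shortExact S hfg hf hg
    have : Subsingleton (Ext S.X₁ N i) := h₁'
    have : Subsingleton (Ext S.X₃ N i) := h₃'
    exact subsingleton_ext_of_shortExact hS N i
  | quotient Y p e =>
    intro hJ i hi
    by_cases hp : p.1 = maximalIdeal R
    · have : Subsingleton (Ext (ModuleCat.of R (R ⧸ maximalIdeal R)) N i) := h i hi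
      exact subsingleton_ext_of_iso
        (e.trans (Submodule.quotEquivOfEq _ _ hp)).toModuleIso i
    · obtain ⟨x, hxm, hxp⟩ := Set.exists_of_ssubset
        (SetLike.coe_ssubset_coe.mpr (lt_of_le_of_ne (le_maximalIdeal p.2.ne_top) hp))
      have ann : Module.annihilator R Y = p.1 := by
        rw [e.annihilator_eq, Ideal.annihilator_quotient]
      have reg : IsSMulRegular Y x := by
        rw [e.isSMulRegular_congr, isSMulRegular_iff_right_eq_zero_of_smul]
        intro y hy
        obtain ⟨y, rfl⟩ := Ideal.Quotient.mk_surjective y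
        rw [← Ideal.Quotient.mk_eq_mk, ← Submodule.Quotient.mk_smul,
          Submodule.Quotient.mk_eq_zero] at hy
        rw [Ideal.Quotient.eq_zero_iff_mem]
        exact (p.2.mem_or_mem hy).resolve_left hxp
      have hS := IsSMulRegular.smulShortComplex_shortExact (M := ModuleCat.of R Y) reg
      have hlt : J < J ⊔ Ideal.span {x} := by
        refine lt_of_le_of_ne le_sup_left fun heq ↦ hxp ?_
        rw [← ann]
        exact hJ (heq ▸ Ideal.mem_sup_right (Ideal.mem_span_singleton_self x))
      have hQ := ih _ hlt (QuotSMulTop x Y) (sup_le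
        (hJ.trans ((Submodule.mkQ _).annihilator_le_of_surjective (Submodule.mkQ_surjective _)))
        ((Ideal.span_singleton_le_iff_mem _).mpr (QuotSMulTop.mem_annihilator Y x))) (i + 1)
        (hi.trans (Nat.lt_succ_self i))
      have hQ' : Subsingleton (Ext ((ModuleCat.of R Y).smulShortComplex x).X₃ N (i + 1)) := hQ
      by_contra ntr
      rw [not_subsingleton_iff_nontrivial] at ntr
      have : x ∈ (Module.annihilator R (Ext (ModuleCat.of R Y) N i)).jacobson :=
        (IsLocalRing.maximalIdeal_le_jacobson _) hxm
      refine Submodule.top_ne_pointwise_smul_of_mem_jacobson_annihilator this ?_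
      refine (eq_top_iff.mpr fun y _ ↦ ?_).symm
      obtain ⟨z, hz⟩ := Ext.contravariant_sequence_exact₁ hS N y (add_comm 1 i)
        (Subsingleton.elim _ _)
      have hz' : x • z = y := by
        have key (z : Ext (ModuleCat.of R Y) N i) :
            (Ext.mk₀ (x • 𝟙 (ModuleCat.of R Y))).comp z (zero_add i) = x • z := by
          rw [Ext.mk₀_smul, Ext.smul_comp, Ext.mk₀_id_comp]
        exact (key z).symm.trans hz
      rw [← hz']
      exact Submodule.smul_mem_pointwise_smul _ _ ⊤ trivial

/-- Over a noetherian local ring, the injective dimension of a finitely generated module is detected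
by the `Ext`-groups out of the residue field. -/
theorem hasInjectiveDimensionLE_of_subsingleton_ext_residueField (N : ModuleCat.{0} R)
    [Module.Finite R N] (n : ℕ)
    (h : ∀ i, n < i →
      Subsingleton (Ext (ModuleCat.of R (IsLocalRing.ResidueField R)) N i)) :
    HasInjectiveDimensionLE N n :=
  hasInjectiveDimensionLE_of_forall_finite N n fun X _ ↦
    subsingleton_ext_of_residueField_s1 N n h X (n + 1) n.lt_succ_self

end Bass

section FreeCover
open Abelian
variable {R : Type} [CommRing R]

theorem hasInjectiveDimensionLT_pi (n : ℕ) (h : HasInjectiveDimensionLT (ModuleCat.of R R) n)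
    (g : ℕ) : HasInjectiveDimensionLT (ModuleCat.of R (Fin g → R)) n := by
  induction g with
  | zero =>
    have := (ModuleCat.isZero_of_subsingleton
      (ModuleCat.of R (Fin 0 → R))).hasInjectiveDimensionLT_zero
    exact hasInjectiveDimensionLT_of_ge _ 0 n n.zero_le
  | succ g ih =>
    exact hasInjectiveDimensionLT_of_iso
      ((ModuleCat.biprodIsoProd (ModuleCat.of R R) (ModuleCat.of R (Fin g → R))) ≪≫
        (Fin.consLinearEquiv R (fun _ ↦ R)).toModuleIso) n

variable [IsLocalRing R]

theorem exists_finite_free_cover (p : ℕ) (K : Type) [AddCommGroup K] [Module R K]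
    [Module.Finite R K] (hK : HasProjectiveDimensionLT (ModuleCat.of R K) (p + 1)) :
    ∃ (g : ℕ) (π : (Fin g → R) →ₗ[R] K), Function.Surjective π ∧
      HasProjectiveDimensionLT (ModuleCat.of R (LinearMap.ker π)) p := by
  cases p with
  | zero =>
    rw [← projective_iff_hasProjectiveDimensionLT_one, ← IsProjective.iff_projective] at hK
    have : Module.Free R K := Module.free_of_flat_of_isLocalRing
    let e := (Module.finBasis R K).equivFun.symm
    refine ⟨_, e.toLinearMap, e.surjective, ?_⟩
    have : Subsingleton (LinearMap.ker e.toLinearMap) := by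
      rw [LinearEquiv.ker]; infer_instance
    exact (ModuleCat.isZero_of_subsingleton _).hasProjectiveDimensionLT_zero
  | succ p =>
    obtain ⟨g, π, hπ⟩ := Module.Finite.exists_fin' R K
    refine ⟨g, π, hπ, ?_⟩
    exact ((LinearMap.shortExact_shortComplexKer hπ).hasProjectiveDimensionLT_X₃_iff p
      ((IsProjective.iff_projective (Fin g → R)).mp inferInstance)).mp hK

variable [IsNoetherianRing R]

theorem hasInjectiveDimensionLE_of_hasProjectiveDimensionLT (n : ℕ)
    (h : HasInjectiveDimensionLE (ModuleCat.of R R) n) (p : ℕ) (K : Type) [AddCommGroup K]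
    [Module R K] [Module.Finite R K] (hK : HasProjectiveDimensionLT (ModuleCat.of R K) p) :
    HasInjectiveDimensionLE (ModuleCat.of R K) n := by
  induction p generalizing K with
  | zero =>
    have := (isZero_of_hasProjectiveDimensionLT_zero
      (ModuleCat.of R K)).hasInjectiveDimensionLT_zero
    exact hasInjectiveDimensionLT_of_ge _ 0 _ (Nat.zero_le _)
  | succ p ih =>
    obtain ⟨g, π, hπ, hker⟩ := exists_finite_free_cover p K hK
    have h₁ : HasInjectiveDimensionLT (ModuleCat.of R (LinearMap.ker π)) (n + 1) := ih _ hker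
    exact (LinearMap.shortExact_shortComplexKer hπ).hasInjectiveDimensionLT_X₃ (n + 1)
      (hasInjectiveDimensionLT_pi (n + 1) h g)
      (hasInjectiveDimensionLT_of_ge _ (n + 1) (n + 1 + 1) (Nat.le_succ _))

end FreeCover

section KInjective
open Abelian Limits DerivedCategory
universe w v u
variable {C : Type u} [Category.{v} C] [Abelian C]

instance : HasFiniteBiproducts (CochainComplex C ℤ) := HasFiniteBiproducts.of_hasFiniteProducts

theorem isKInjective_biproduct {g : ℕ} (J : Fin g → CochainComplex C ℤ)
    (hJ : ∀ j, (J j).IsKInjective) : (⨁ J).IsKInjective where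
  nonempty_homotopy_zero {K} f hK := by
    refine ⟨HomotopyCategory.homotopyOfEq _ _ ?_⟩
    have h (j : Fin g) : (HomotopyCategory.quotient C (.up ℤ)).map (f ≫ biproduct.π J j) = 0 := by
      obtain ⟨h⟩ := (hJ j).nonempty_homotopy_zero (f ≫ biproduct.π J j) hK
      rw [HomotopyCategory.eq_of_homotopy _ _ h, Functor.map_zero]
    rw [← Category.comp_id f, ← biproduct.total, Preadditive.comp_sum, Functor.map_sum,
      Functor.map_zero]
    refine Finset.sum_eq_zero fun j _ ↦ ?_
    rw [← Category.assoc, Functor.map_comp, h, zero_comp]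

theorem isKInjective_mappingCone {E F : CochainComplex C ℤ} (ψ : E ⟶ F)
    [hE : E.IsKInjective] [hF : F.IsKInjective] :
    (CochainComplex.mappingCone ψ).IsKInjective := by
  rw [CochainComplex.isKInjective_iff_rightOrthogonal] at hE hF ⊢
  exact ObjectProperty.ext_of_isTriangulatedClosed₃ _
    (CochainComplex.mappingCone.triangleh ψ)
    (HomotopyCategory.mappingCone_triangleh_distinguished ψ) hE hF

variable [HasDerivedCategory.{w} C]

theorem exists_Q_map_eq_of_isKInjective {F E : CochainComplex C ℤ} [E.IsKInjective]
    (u : Q.obj F ⟶ Q.obj E) : ∃ v : F ⟶ E, Q.map v = u := by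
  obtain ⟨v, hv⟩ := (CochainComplex.IsKInjective.Qh_map_bijective
    ((HomotopyCategory.quotient _ _).obj F) E).2
    ((quotientCompQhIso C).hom.app F ≫ u ≫ (quotientCompQhIso C).inv.app E)
  obtain ⟨v, rfl⟩ := (HomotopyCategory.quotient _ _).map_surjective v
  refine ⟨v, ?_⟩
  have := (quotientCompQhIso C).hom.naturality v
  rw [Functor.comp_map, hv] at this
  simp only [Category.assoc, Iso.inv_hom_id_app, Category.comp_id] at this
  exact ((cancel_epi _).mp this).symm

theorem singleFunctor_shift_hom_eq_zero {X Y : C}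
    (v : ((singleFunctor C 0).obj X)⟦(1 : ℤ)⟧ ⟶ (singleFunctor C 0).obj Y) : v = 0 := by
  have : (((singleFunctor C 0).obj X)⟦(1 : ℤ)⟧).IsLE (-1) :=
    TStructure.t.isLE_shift _ 0 1 (-1) (by simp)
  exact TStructure.t.zero v (-1) 0 (by simp)

theorem eq_zero_of_singleFunctor_map_comp_eq_zero {S : ShortComplex C} (hS : S.ShortExact)
    {Y : C} (u : (singleFunctor C 0).obj S.X₃ ⟶ (singleFunctor C 0).obj Y)
    (hu : (singleFunctor C 0).map S.g ≫ u = 0) : u = 0 := by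
  obtain ⟨v, rfl⟩ := Pretriangulated.Triangle.yoneda_exact₃ _ hS.singleTriangle_distinguished u hu
  rw [singleFunctor_shift_hom_eq_zero v]
  exact comp_zero

end KInjective

section Socle
open Abelian Limits DerivedCategory
universe w v u
variable {C : Type u} [Category.{v} C] [Abelian C]

theorem single_comp_shift_map_eq_zero {X : C} {E J : CochainComplex C ℤ} (φ : E ⟶ J)
    (hφ : ∀ (n : ℤ) (x : X ⟶ E.X n), x ≫ φ.f n = 0) (i : ℤ)
    (v : (HomologicalComplex.single C (ComplexShape.up ℤ) 0).obj X ⟶ E⟦i⟧) : v ≫ φ⟦i⟧' = 0 := by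
  refine HomologicalComplex.from_single_hom_ext ?_
  rw [← cancel_epi (HomologicalComplex.singleObjXSelf (ComplexShape.up ℤ) 0 X).inv,
    HomologicalComplex.comp_f, HomologicalComplex.zero_f, comp_zero, ← Category.assoc]
  exact hφ (0 + i) _

variable [HasDerivedCategory.{w} C]

theorem comp_shift_Q_map_eq_zero {F E J : CochainComplex C ℤ} [E.IsKInjective] (φ : E ⟶ J)
    (i : ℤ) (hφ : ∀ v : F ⟶ E⟦i⟧, v ≫ φ⟦i⟧' = 0) (u : Q.obj F ⟶ (Q.obj E)⟦i⟧) :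
    u ≫ (Q.map φ)⟦i⟧' = 0 := by
  obtain ⟨v, hv⟩ := exists_Q_map_eq_of_isKInjective (u ≫ (Q.commShiftIso i).inv.app E)
  have h := congrArg Q.map (hφ v)
  have h' : (Q.map φ)⟦i⟧' ≫ (Q.commShiftIso i).inv.app J =
      (Q.commShiftIso i).inv.app E ≫ Q.map (φ⟦i⟧') := (Q.commShiftIso i).inv.naturality φ
  rw [Functor.map_comp, Functor.map_zero, hv, Category.assoc, ← h', ← Category.assoc] at h
  exact (Preadditive.IsIso.comp_right_eq_zero _ _).mp h

/-- A morphism out of a complex concentrated in one degree, to a shift of a K-injective complex,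
is killed by every chain map which kills all morphisms from the given object. -/
theorem comp_shift_map_eq_zero {X : C} {E J : CochainComplex C ℤ} [E.IsKInjective] (φ : E ⟶ J)
    (hφ : ∀ (n : ℤ) (x : X ⟶ E.X n), x ≫ φ.f n = 0) (i : ℤ)
    (u : (singleFunctor C 0).obj X ⟶ (Q.obj E)⟦i⟧) : u ≫ (Q.map φ)⟦i⟧' = 0 :=
  comp_shift_Q_map_eq_zero (F := (CochainComplex.singleFunctor C 0).obj X) φ i
    (single_comp_shift_map_eq_zero φ hφ i) u

end Socle

section Model
open Abelian Limits DerivedCategory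
universe w
variable {R : Type} [CommRing R]

/-- A finitely generated module `K` of finite projective dimension has a K-injective model `E`, built
as an iterated mapping cone of finite powers of a K-injective model `J` of `R`, on which linear forms
`K → R` are represented by chain maps `E ⟶ J` whose components are combinations of projections with
coefficients in the range of the form. -/
theorem exists_kInjective_model [IsLocalRing R] [IsNoetherianRing R]
    [HasDerivedCategory.{w} (ModuleCat.{0} R)]
    (J : CochainComplex (ModuleCat.{0} R) ℤ) [J.IsKInjective]
    (ε : (singleFunctor (ModuleCat.{0} R) 0).obj (ModuleCat.of R R) ⟶ Q.obj J) [IsIso ε]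
    (p : ℕ) (K : Type) [AddCommGroup K]
    [Module R K] [Module.Finite R K] (hK : HasProjectiveDimensionLT (ModuleCat.of R K) p) :
    ∃ (E : CochainComplex (ModuleCat.{0} R) ℤ) (_ : E.IsKInjective)
      (ι : (singleFunctor (ModuleCat.{0} R) 0).obj (ModuleCat.of R K) ⟶ Q.obj E)
      (φ : (K →ₗ[R] R) →ₗ[R] (E ⟶ J)),
      (∀ f, ι ≫ Q.map (φ f) = (singleFunctor (ModuleCat.{0} R) 0).map (ModuleCat.ofHom f) ≫ ε) ∧
      ∀ f : K →ₗ[R] R, LinearMap.range f ≤ IsLocalRing.maximalIdeal R →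
        ∀ (X : ModuleCat.{0} R), IsLocalRing.maximalIdeal R ≤ Module.annihilator R X →
          ∀ (n : ℤ) (x : X ⟶ E.X n), x ≫ (φ f).f n = 0 := by
  induction p generalizing K with
  | zero =>
    have h0 := isZero_of_hasProjectiveDimensionLT_zero (ModuleCat.of R K)
    obtain ⟨Z, hZ⟩ := HasZeroObject.zero (C := CochainComplex (ModuleCat.{0} R) ℤ)
    refine ⟨Z, ⟨fun f _ ↦ ⟨Homotopy.ofEq (hZ.eq_of_tgt _ _)⟩⟩, 0, 0, fun f ↦ ?_,
      fun f _ X _ n x ↦ ?_⟩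
    · exact (((singleFunctor (ModuleCat.{0} R) 0).map_isZero h0).eq_of_src _ _)
    · rw [LinearMap.zero_apply, HomologicalComplex.zero_f, comp_zero]
  | succ p ih =>
    obtain ⟨g, π, hπ, hker⟩ := exists_finite_free_cover p K hK
    obtain ⟨E', hE', ι', φ', compat', -⟩ := ih (LinearMap.ker π) hker
    have hS := LinearMap.shortExact_shortComplexKer hπ
    let c (j : Fin g) : LinearMap.ker π →ₗ[R] R := LinearMap.proj j ∘ₗ (LinearMap.ker π).subtype
    let F : CochainComplex (ModuleCat.{0} R) ℤ := ⨁ fun _ : Fin g ↦ J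
    have hF : F.IsKInjective := isKInjective_biproduct _ fun _ ↦ inferInstance
    let ψ : E' ⟶ F := biproduct.lift fun j ↦ φ' (c j)
    let β : (K →ₗ[R] R) →ₗ[R] (F ⟶ J) :=
      { toFun f := ∑ j, f (π (Pi.single j 1)) • biproduct.π (fun _ : Fin g ↦ J) j
        map_add' f f' := by
          simp only [LinearMap.add_apply, add_smul, Finset.sum_add_distrib]
        map_smul' a f := by
          simp only [LinearMap.smul_apply, smul_smul, Finset.smul_sum, RingHom.id_apply,
            smul_eq_mul] }
    have hψβ (f : K →ₗ[R] R) : ψ ≫ β f = 0 := by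
      have h₁ : ψ ≫ β f = φ' (∑ j, f (π (Pi.single j 1)) • c j) := by
        simp [ψ, β, Preadditive.comp_sum]
      rw [h₁]
      convert map_zero φ'
      ext ⟨x, hx⟩
      have : f (π x) = ∑ j, f (π (Pi.single j 1)) * x j := by
        conv_lhs => rw [← LinearMap.comp_apply, LinearMap.pi_apply_eq_sum_univ (f ∘ₗ π) x]
        simp only [LinearMap.comp_apply, smul_eq_mul, mul_comm]
        refine Finset.sum_congr rfl fun i _ ↦ ?_
        congr 4
        ext j
        simp [Pi.single_apply, eq_comm]
      rw [LinearMap.mem_ker] at hx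
      rw [hx, map_zero] at this
      simp [c, ← this]
    let φ : (K →ₗ[R] R) →ₗ[R] (CochainComplex.mappingCone ψ ⟶ J) :=
      { toFun f := CochainComplex.mappingCone.desc ψ 0 (β f) (by simp [hψβ])
        map_add' f f' := by
          ext n : 1
          simp [CochainComplex.mappingCone.desc_f _ _ _ _ n (n + 1) rfl]
        map_smul' a f := by
          ext n : 1
          simp [CochainComplex.mappingCone.desc_f _ _ _ _ n (n + 1) rfl] }
    let ιF : (singleFunctor (ModuleCat.{0} R) 0).obj (ModuleCat.of R (Fin g → R)) ⟶ Q.obj F :=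
      ∑ j, (singleFunctor (ModuleCat.{0} R) 0).map
        (ModuleCat.ofHom (LinearMap.proj j : (Fin g → R) →ₗ[R] R)) ≫ ε ≫
        Q.map (biproduct.ι (fun _ : Fin g ↦ J) j)
    have comm : (singleFunctor (ModuleCat.{0} R) 0).map
        (ModuleCat.ofHom (LinearMap.ker π).subtype) ≫ ιF = ι' ≫ Q.map ψ := by
      have : ψ = ∑ j, φ' (c j) ≫ biproduct.ι (fun _ : Fin g ↦ J) j := by
        simp [ψ, biproduct.lift_eq]
      rw [this, Functor.map_sum, Preadditive.comp_sum, Preadditive.comp_sum]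
      refine Finset.sum_congr rfl fun j _ ↦ ?_
      rw [Functor.map_comp, ← Category.assoc, ← Category.assoc, ← Category.assoc, compat',
        ← Functor.map_comp, Category.assoc, Category.assoc]
      rfl
    obtain ⟨ι₀, hι, -⟩ := Pretriangulated.complete_distinguished_triangle_morphism _ _
      hS.singleTriangle_distinguished (mappingCone_triangle_distinguished ψ) ι' ιF comm
    obtain ⟨ι, hι'⟩ : ∃ ι : (singleFunctor (ModuleCat.{0} R) 0).obj (ModuleCat.of R K) ⟶
        Q.obj (CochainComplex.mappingCone ψ),
        (singleFunctor (ModuleCat.{0} R) 0).map (ModuleCat.ofHom π) ≫ ι =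
          ιF ≫ Q.map (CochainComplex.mappingCone.inr ψ) := ⟨ι₀, hι⟩
    have hβ (f : K →ₗ[R] R) : ιF ≫ Q.map (β f) =
        (singleFunctor (ModuleCat.{0} R) 0).map (ModuleCat.ofHom (f ∘ₗ π)) ≫ ε := by
      have h₁ (j : Fin g) : biproduct.ι (fun _ : Fin g ↦ J) j ≫ β f =
          f (π (Pi.single j 1)) • 𝟙 J := by
        simp only [β, LinearMap.coe_mk, AddHom.coe_mk, Preadditive.comp_sum, Linear.comp_smul]
        rw [Finset.sum_eq_single j]
        · simp
        · intro i _ hij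
          rw [biproduct.ι_π_ne _ hij.symm, smul_zero]
        · simp
      have h₂ : f ∘ₗ π = ∑ j, f (π (Pi.single j 1)) •
          (LinearMap.proj j : (Fin g → R) →ₗ[R] R) := by
        ext i
        simp [Pi.single_apply]
      have h₃ : ModuleCat.ofHom (f ∘ₗ π) = ∑ j, f (π (Pi.single j 1)) •
          ModuleCat.ofHom (LinearMap.proj j : (Fin g → R) →ₗ[R] R) := by
        rw [h₂]
        ext : 1
        simp
      rw [h₃, Functor.map_sum, Preadditive.sum_comp, Preadditive.sum_comp]
      refine Finset.sum_congr rfl fun j _ ↦ ?_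
      rw [Category.assoc, Category.assoc, ← Functor.map_comp, h₁, Functor.map_smul,
        Functor.map_smul, CategoryTheory.Functor.map_id, Linear.comp_smul, Linear.comp_smul,
        Category.comp_id, Linear.smul_comp]
    refine ⟨CochainComplex.mappingCone ψ, isKInjective_mappingCone ψ, ι, φ, fun f ↦ ?_,
      fun f hf X hX n x ↦ ?_⟩
    · have hz : ι ≫ Q.map (φ f) ≫ inv ε -
          (singleFunctor (ModuleCat.{0} R) 0).map (ModuleCat.ofHom f) = 0 := by
        refine eq_zero_of_singleFunctor_map_comp_eq_zero hS _ ?_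
        change (singleFunctor (ModuleCat.{0} R) 0).map (ModuleCat.ofHom π) ≫ _ = 0
        have h₁ : CochainComplex.mappingCone.inr ψ ≫ φ f = β f := by
          simp [φ]
        rw [Preadditive.comp_sub, ← Category.assoc, hι', Category.assoc, ← Category.assoc (Q.map _),
          ← Functor.map_comp, h₁, ← Category.assoc, hβ, Category.assoc, IsIso.hom_inv_id,
          Category.comp_id, ← Functor.map_comp, ← ModuleCat.ofHom_comp, sub_self]
      rw [sub_eq_zero] at hz
      rw [← hz]
      simp
    · have h₁ : (φ f).f n =
          (CochainComplex.mappingCone.snd ψ).v n n (add_zero n) ≫ (β f).f n := by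
        simp [φ, CochainComplex.mappingCone.desc_f _ _ _ _ n (n + 1) rfl]
      have h₂ : (β f).f n =
          ∑ j, f (π (Pi.single j 1)) • (biproduct.π (fun _ : Fin g ↦ J) j).f n :=
        map_sum ((HomologicalComplex.eval (ModuleCat.{0} R) (.up ℤ) n).mapAddHom) _ _
      rw [h₁, h₂, Preadditive.comp_sum, Preadditive.comp_sum]
      refine Finset.sum_eq_zero fun j _ ↦ ?_
      have h₃ : f (π (Pi.single j 1)) • x = 0 := by
        ext y
        have := Module.mem_annihilator.mp (hX (hf ⟨π (Pi.single j 1), rfl⟩)) y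
        simp [← map_smul, this]
      rw [Linear.comp_smul, Linear.comp_smul, ← Linear.smul_comp, h₃, zero_comp]

end Model

section Main
open Abelian Limits DerivedCategory
variable {R : Type} [CommRing R] [IsLocalRing R] [IsNoetherianRing R]

/-- A linear form `f : K → R` with values in the maximal ideal, on a finitely generated module of
finite projective dimension, induces zero on the `Ext`-groups out of a module killed by the
maximal ideal. -/
theorem ext_comp_mk₀_eq_zero (p : ℕ) (K : Type) [AddCommGroup K] [Module R K] [Module.Finite R K]
    (hK : HasProjectiveDimensionLT (ModuleCat.of R K) p) (f : K →ₗ[R] R)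
    (hf : LinearMap.range f ≤ IsLocalRing.maximalIdeal R) (X : ModuleCat.{0} R)
    (hX : IsLocalRing.maximalIdeal R ≤ Module.annihilator R X) (i : ℕ)
    (x : Ext X (ModuleCat.of R K) i) :
    x.comp (Ext.mk₀ (ModuleCat.ofHom f)) (add_zero i) = 0 := by
  let := HasDerivedCategory.standard (ModuleCat.{0} R)
  let I := injectiveResolution (ModuleCat.of R R)
  let ε : (singleFunctor (ModuleCat.{0} R) 0).obj (ModuleCat.of R R) ⟶ Q.obj I.cochainComplex :=
    Q.map I.ι'
  have : IsIso ε := inferInstanceAs (IsIso (Q.map I.ι'))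
  obtain ⟨E, hE, ι, φ, compat, socle⟩ := exists_kInjective_model I.cochainComplex ε p K hK
  have h := comp_shift_map_eq_zero (φ f) (socle f hf X hX) i (x.hom ≫ ι⟦(i : ℤ)⟧')
  rw [Category.assoc, ← Functor.map_comp, compat, Functor.map_comp, ← Category.assoc,
    Preadditive.IsIso.comp_right_eq_zero] at h
  ext
  rw [Ext.comp_hom, Ext.mk₀_hom, ShiftedHom.comp_mk₀, Ext.zero_hom]
  exact h

/-- For a nonzero finitely generated module `M` of finite projective dimension, `Ext i k M = 0`
forces `Ext i k R = 0`. -/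
theorem subsingleton_ext_residueField_ring (p : ℕ) (M : Type) [AddCommGroup M] [Module R M]
    [Module.Finite R M] [Nontrivial M] (hM : HasProjectiveDimensionLT (ModuleCat.of R M) (p + 1))
    (X : ModuleCat.{0} R) (hX : IsLocalRing.maximalIdeal R ≤ Module.annihilator R X)
    (i : ℕ) (h : Subsingleton (Ext X (ModuleCat.of R M) i)) :
    Subsingleton (Ext X (ModuleCat.of R R) i) := by
  obtain ⟨N, hN⟩ := IsCoatomic.exists_coatom (Submodule R M)
  obtain ⟨g₁, -, hg₁⟩ := SetLike.exists_of_lt hN.lt_top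
  obtain ⟨s, q, hq⟩ := Module.Finite.exists_fin' R N
  let π : (R × (Fin s → R)) →ₗ[R] M :=
    LinearMap.coprod (LinearMap.toSpanSingleton R M g₁) (N.subtype ∘ₗ q)
  have hπ : Function.Surjective π := by
    rw [← LinearMap.range_eq_top, LinearMap.range_coprod, LinearMap.range_comp,
      LinearMap.range_eq_top.mpr hq, Submodule.map_top, Submodule.range_subtype]
    refine hN.2 _ (lt_of_le_of_ne le_sup_right fun h ↦ hg₁ ?_)
    rw [h]
    exact Submodule.mem_sup_left ⟨1, by simp⟩
  have hS := LinearMap.shortExact_shortComplexKer hπ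
  have : Projective π.shortComplexKer.X₂ :=
    (IsProjective.iff_projective (R × (Fin s → R))).mp inferInstance
  have hK : HasProjectiveDimensionLT (ModuleCat.of R (LinearMap.ker π)) (p + 1) :=
    (hS.hasProjectiveDimensionLT_X₃_iff p this).mp
      (hasProjectiveDimensionLT_of_ge (ModuleCat.of R M) (p + 1) (p + 2) (by simp))
  let f : LinearMap.ker π →ₗ[R] R := LinearMap.fst R R (Fin s → R) ∘ₗ (LinearMap.ker π).subtype
  have hf : LinearMap.range f ≤ IsLocalRing.maximalIdeal R := by
    rintro _ ⟨⟨⟨a, b⟩, hab⟩, rfl⟩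
    rw [IsLocalRing.mem_maximalIdeal, mem_nonunits_iff]
    intro (ha : IsUnit a)
    refine hg₁ ((Submodule.smul_mem_iff_of_isUnit N ha).mp ?_)
    have : a • g₁ = -(q b : M) := by
      simpa [π, add_eq_zero_iff_eq_neg] using hab
    rw [this]
    exact N.neg_mem (q b).2
  let inl : ModuleCat.of R R ⟶ π.shortComplexKer.X₂ :=
    ModuleCat.ofHom (LinearMap.inl R R (Fin s → R))
  let fst : π.shortComplexKer.X₂ ⟶ ModuleCat.of R R :=
    ModuleCat.ofHom (LinearMap.fst R R (Fin s → R))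
  have hinl : inl ≫ fst = 𝟙 _ := by
    ext
    simp [inl, fst]
  refine subsingleton_of_forall_eq 0 fun z ↦ ?_
  obtain ⟨x, hx⟩ := Ext.covariant_sequence_exact₂ X hS (z.comp (Ext.mk₀ inl) (add_zero i))
    (h.elim _ _)
  have h₀ := ext_comp_mk₀_eq_zero (p + 1) _ hK f hf X hX i x
  have h₁ : ModuleCat.ofHom f = π.shortComplexKer.f ≫ fst := rfl
  have h₂ := congrArg (fun y ↦ y.comp (Ext.mk₀ fst) (add_zero i)) hx
  simp only [Ext.comp_assoc_of_third_deg_zero, Ext.mk₀_comp_mk₀, hinl, Ext.comp_mk₀_id] at h₂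
  rw [← h₂]
  exact h₀

theorem idLE_ring_iff (M : Type) [AddCommGroup M] [Module R M] [Module.Finite R M] [Nontrivial M]
    (hpd : ∃ p : ℕ, pdLE R p M inferInstance inferInstance) (n : ℕ) :
    idLE R n R inferInstance inferInstance ↔ idLE R n M inferInstance inferInstance := by
  obtain ⟨p, hp⟩ := hpd
  have hM := hasProjectiveDimensionLE_of_pdLE p M hp
  rw [idLE_iff_hasInjectiveDimensionLE, idLE_iff_hasInjectiveDimensionLE]
  refine ⟨fun h ↦ hasInjectiveDimensionLE_of_hasProjectiveDimensionLT n h (p + 1) M hM,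
    fun h ↦ hasInjectiveDimensionLE_of_subsingleton_ext_residueField _ n fun i hi ↦ ?_⟩
  refine subsingleton_ext_residueField_ring p M hM _ ?_ i
    (HasInjectiveDimensionLT.subsingleton _ (n + 1) i hi _)
  exact (Ideal.annihilator_quotient (I := IsLocalRing.maximalIdeal R)).ge

end Main

/-- If `M` is a nonzero finitely generated module of finite injective and finite projective
dimension over a commutative noetherian local ring `R`, then `id_R R = id_R M`;
in particular `id_R R` is finite. -/
theorem injDim_ring_eq_injDim_module (R : Type) [CommRing R] [IsNoetherianRing R] [IsLocalRing R]
    (M : Type) [AddCommGroup M] [Module R M] [Module.Finite R M] [Nontrivial M]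
    (hpd : ∃ n : ℕ, pdLE R n M inferInstance inferInstance)
    (hid : ∃ n : ℕ, idLE R n M inferInstance inferInstance) :
    injDim R R = injDim R M ∧ injDim R R ≠ ⊤ := by
  have h : injDim R R = injDim R M := by
    simp only [injDim, idLE_ring_iff M hpd]
  obtain ⟨n, hn⟩ := hid
  refine ⟨h, ne_top_of_le_ne_top (ENat.natCast_ne_top n) ?_⟩
  rw [h]
  exact sInf_le ⟨n, rfl, hn⟩
end

section
/- Let R be a commutative noetherian ring, C a semidualizing R-module, and M a finitely generated R-module with finite C-projective dimension and finite C-injective dimension. Then the localization R_p is a Gorenstein local ring for every prime ideal p in the support of M. -/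
set_option linter.unusedVariables false
open CategoryTheory TensorProduct

/-- `ExtVanish R X Y n` : the group `Ext^n_R(X, Y)` is zero. -/
def ExtVanish (R : Type) [CommRing R] (X Y : Type) [AddCommGroup X] [Module R X]
    [AddCommGroup Y] [Module R Y] (n : ℕ) : Prop :=
  ∀ e : Abelian.Ext.{0} (ModuleCat.of R X) (ModuleCat.of R Y) n, e = 0

namespace ExtVanish

variable {R : Type} [CommRing R] {X Y A B D : Type} [AddCommGroup X] [Module R X]
  [AddCommGroup Y] [Module R Y] [AddCommGroup A] [Module R A] [AddCommGroup B] [Module R B]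
  [AddCommGroup D] [Module R D]

theorem of_injective [Module.Injective R Y] {n : ℕ} (hn : 0 < n) : ExtVanish R X Y n := by
  obtain ⟨n, rfl⟩ : ∃ m, n = m + 1 := ⟨n - 1, by omega⟩
  have : CategoryTheory.Injective (ModuleCat.of R Y) :=
    (Module.injective_iff_injective_object R Y).1 inferInstance
  exact fun e => Abelian.Ext.eq_zero_of_injective e

theorem of_projective [Module.Projective R X] {n : ℕ} (hn : 0 < n) : ExtVanish R X Y n := by
  obtain ⟨n, rfl⟩ : ∃ m, n = m + 1 := ⟨n - 1, by omega⟩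
  have : CategoryTheory.Projective (ModuleCat.of R X) :=
    (IsProjective.iff_projective X).1 inferInstance
  exact fun e => Abelian.Ext.eq_zero_of_projective e

theorem congr_left (e : A ≃ₗ[R] B) {n : ℕ} (h : ExtVanish R A Y n) : ExtVanish R B Y n := by
  intro x
  have h1 := h ((Abelian.Ext.mk₀ (ModuleCat.ofHom e.toLinearMap)).comp x (zero_add n))
  have h2 := congrArg
    (fun z => (Abelian.Ext.mk₀ (ModuleCat.ofHom e.symm.toLinearMap)).comp z (zero_add n)) h1
  simp only [Abelian.Ext.mk₀_comp_mk₀_assoc, Abelian.Ext.comp_zero] at h2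
  rw [← ModuleCat.ofHom_comp, LinearEquiv.comp_symm] at h2
  erw [Abelian.Ext.mk₀_id_comp] at h2
  exact h2

theorem congr_right (e : A ≃ₗ[R] B) {n : ℕ} (h : ExtVanish R X A n) : ExtVanish R X B n := by
  intro x
  have h1 := h (x.comp (Abelian.Ext.mk₀ (ModuleCat.ofHom e.symm.toLinearMap)) (add_zero n))
  have h2 := congrArg
    (fun z => z.comp (Abelian.Ext.mk₀ (ModuleCat.ofHom e.toLinearMap)) (add_zero n)) h1
  simp only [Abelian.Ext.comp_assoc_of_third_deg_zero, Abelian.Ext.mk₀_comp_mk₀,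
    Abelian.Ext.zero_comp] at h2
  rw [← ModuleCat.ofHom_comp, LinearEquiv.comp_symm] at h2
  erw [Abelian.Ext.comp_mk₀_id] at h2
  exact h2

section ses

variable {f : A →ₗ[R] B} {g : B →ₗ[R] D} (hf : Function.Injective f) (hfg : Function.Exact f g)
  (hg : Function.Surjective g)

include hf hfg hg in
theorem shortExact : ∃ h, (ShortComplex.mk (ModuleCat.ofHom f) (ModuleCat.ofHom g) h).ShortExact :=
  ⟨by ext x; exact hfg.apply_apply_eq_zero x,
    ModuleCat.shortComplex_shortExact _ hfg hf hg⟩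

include hf hfg hg

theorem middle_right {n : ℕ} (hA : ExtVanish R X A n) (hD : ExtVanish R X D n) :
    ExtVanish R X B n := by
  obtain ⟨_, hS⟩ := shortExact hf hfg hg
  intro x
  obtain ⟨y, rfl⟩ := Abelian.Ext.covariant_sequence_exact₂ _ hS x (hD _)
  rw [hA y, Abelian.Ext.zero_comp]

theorem third_right {n : ℕ} (hB : ExtVanish R X B n) (hA : ExtVanish R X A (n + 1)) :
    ExtVanish R X D n := by
  obtain ⟨_, hS⟩ := shortExact hf hfg hg
  intro x
  obtain ⟨y, rfl⟩ := Abelian.Ext.covariant_sequence_exact₃ _ hS x rfl (hA _)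
  rw [hB y, Abelian.Ext.zero_comp]

theorem first_right {n : ℕ} (hD : ExtVanish R X D n) (hB : ExtVanish R X B (n + 1)) :
    ExtVanish R X A (n + 1) := by
  obtain ⟨_, hS⟩ := shortExact hf hfg hg
  intro x
  obtain ⟨y, rfl⟩ := Abelian.Ext.covariant_sequence_exact₁ _ hS x (hB _) rfl
  rw [hD y, Abelian.Ext.zero_comp]

theorem middle_left {n : ℕ} (hA : ExtVanish R A Y n) (hD : ExtVanish R D Y n) :
    ExtVanish R B Y n := by
  obtain ⟨_, hS⟩ := shortExact hf hfg hg
  intro x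
  obtain ⟨y, rfl⟩ := Abelian.Ext.contravariant_sequence_exact₂ hS _ x (hA _)
  rw [hD y, Abelian.Ext.comp_zero]

theorem first_left {n : ℕ} (hB : ExtVanish R B Y n) (hD : ExtVanish R D Y (n + 1)) :
    ExtVanish R A Y n := by
  obtain ⟨_, hS⟩ := shortExact hf hfg hg
  intro x
  obtain ⟨y, rfl⟩ := Abelian.Ext.contravariant_sequence_exact₁ hS _ x (Nat.add_comm 1 n) (hD _)
  rw [hB y, Abelian.Ext.comp_zero]

theorem third_left {n : ℕ} (hA : ExtVanish R A Y n) (hB : ExtVanish R B Y (n + 1)) :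
    ExtVanish R D Y (n + 1) := by
  obtain ⟨_, hS⟩ := shortExact hf hfg hg
  intro x
  obtain ⟨y, rfl⟩ := Abelian.Ext.contravariant_sequence_exact₃ hS _ x (hB _) (Nat.add_comm 1 n)
  rw [hA y, Abelian.Ext.comp_zero]

theorem exists_lift (hA : ExtVanish R X A 1) (h : X →ₗ[R] D) : ∃ k : X →ₗ[R] B, g ∘ₗ k = h := by
  obtain ⟨_, hS⟩ := shortExact hf hfg hg
  obtain ⟨y, hy⟩ := Abelian.Ext.covariant_sequence_exact₃ _ hS
    (Abelian.Ext.mk₀ (ModuleCat.ofHom h)) (zero_add 1) (hA _)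
  obtain ⟨k, rfl⟩ := Abelian.Ext.mk₀_bijective _ _ |>.2 y
  rw [Abelian.Ext.mk₀_comp_mk₀] at hy
  have := Abelian.Ext.mk₀_bijective _ _ |>.1 hy
  exact ⟨k.hom, congrArg ModuleCat.Hom.hom this⟩

theorem exists_extend (hD : ExtVanish R D Y 1) (h : A →ₗ[R] Y) :
    ∃ k : B →ₗ[R] Y, k ∘ₗ f = h := by
  obtain ⟨_, hS⟩ := shortExact hf hfg hg
  obtain ⟨y, hy⟩ := Abelian.Ext.contravariant_sequence_exact₁ hS _
    (Abelian.Ext.mk₀ (ModuleCat.ofHom h)) (add_zero 1) (hD _)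
  obtain ⟨k, rfl⟩ := Abelian.Ext.mk₀_bijective _ _ |>.2 y
  rw [Abelian.Ext.mk₀_comp_mk₀] at hy
  have := Abelian.Ext.mk₀_bijective _ _ |>.1 hy
  exact ⟨k.hom, congrArg ModuleCat.Hom.hom this⟩

theorem one_of_lift (hB : ExtVanish R X B 1)
    (H : ∀ h : X →ₗ[R] D, ∃ k : X →ₗ[R] B, g ∘ₗ k = h) : ExtVanish R X A 1 := by
  obtain ⟨_, hS⟩ := shortExact hf hfg hg
  intro x
  obtain ⟨y, rfl⟩ := Abelian.Ext.covariant_sequence_exact₁ _ hS x (hB _) (zero_add 1)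
  obtain ⟨h, rfl⟩ := Abelian.Ext.mk₀_bijective _ _ |>.2 y
  obtain ⟨k, hk⟩ := H h.hom
  have : h = ModuleCat.ofHom k ≫ ModuleCat.ofHom g := by
    ext x; exact (LinearMap.congr_fun hk x).symm
  rw [this, ← Abelian.Ext.mk₀_comp_mk₀, Abelian.Ext.comp_assoc_of_second_deg_zero,
    hS.comp_extClass, Abelian.Ext.comp_zero]

theorem one_of_extend (hB : ExtVanish R B Y 1)
    (H : ∀ h : A →ₗ[R] Y, ∃ k : B →ₗ[R] Y, k ∘ₗ f = h) : ExtVanish R D Y 1 := by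
  obtain ⟨_, hS⟩ := shortExact hf hfg hg
  intro x
  obtain ⟨y, rfl⟩ := Abelian.Ext.contravariant_sequence_exact₃ hS _ x (hB _) (add_zero 1)
  obtain ⟨h, rfl⟩ := Abelian.Ext.mk₀_bijective _ _ |>.2 y
  obtain ⟨k, hk⟩ := H h.hom
  have : h = ModuleCat.ofHom f ≫ ModuleCat.ofHom k := by
    ext x; exact (LinearMap.congr_fun hk x).symm
  rw [this, ← Abelian.Ext.mk₀_comp_mk₀, hS.extClass_comp_assoc]

end ses

end ExtVanish

/-- Vanishing of the derived functor `Ext` gives vanishing of the group of extensions. -/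
theorem ExtVanish.of_subsingleton_extGroup {R X Y : Type} [CommRing R] [AddCommGroup X]
    [Module R X] [AddCommGroup Y] [Module R Y] {n : ℕ}
    (h : Subsingleton (extGroup R X Y (n + 1))) : ExtVanish R X Y (n + 1) := by
  let P := projectiveResolution (ModuleCat.of R X)
  have h0 : ((P.complex.linearYonedaObj R (ModuleCat.of R Y))).ExactAt (n + 1) := by
    rw [HomologicalComplex.exactAt_iff_isZero_homology]
    refine Limits.IsZero.of_iso ?_ (P.isoExt (n + 1) (ModuleCat.of R Y)).symm
    exact @ModuleCat.isZero_of_subsingleton R _ (extGroup R X Y (n + 1)) h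
  rw [HomologicalComplex.exactAt_iff' _ n (n + 1) (n + 2) (by simp) (by simp)] at h0
  rw [ShortComplex.moduleCat_exact_iff] at h0
  intro e
  obtain ⟨f, hf, rfl⟩ := P.extMk_surjective e (n + 2) rfl
  obtain ⟨g, hg⟩ := h0 f hf
  exact (P.extMk_eq_zero_iff f (n + 2) rfl hf n rfl).2 ⟨g, hg⟩

section injective

variable {R : Type} [CommRing R] {A B I : Type} [AddCommGroup A] [Module R A]
  [AddCommGroup B] [Module R B] [AddCommGroup I] [Module R I]

/-- A map into an injective module extends along any map with a smaller kernel. -/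
theorem Module.Injective.exists_comp_eq_of_ker_le (hI : Module.Injective R I) (f : A →ₗ[R] B)
    (φ : A →ₗ[R] I) (h : LinearMap.ker f ≤ LinearMap.ker φ) :
    ∃ ψ : B →ₗ[R] I, ψ ∘ₗ f = φ := by
  obtain ⟨ψ, hψ⟩ := hI.out ((LinearMap.ker f).liftQ f le_rfl)
    (LinearMap.ker_eq_bot.1 (Submodule.ker_liftQ_eq_bot _ _ _ le_rfl))
    ((LinearMap.ker f).liftQ φ h)
  refine ⟨ψ, LinearMap.ext fun x => ?_⟩
  simpa using hψ (Submodule.Quotient.mk x)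

end injective

section homEvaluation

variable (R : Type) [CommRing R] (N C I : Type) [AddCommGroup N] [Module R N]
  [AddCommGroup C] [Module R C] [AddCommGroup I] [Module R I]

/-- The Hom-evaluation map `n ⊗ f ↦ (g ↦ f (g n))`. -/
noncomputable def homEvaluation : N ⊗[R] (C →ₗ[R] I) →ₗ[R] ((N →ₗ[R] C) →ₗ[R] I) :=
  TensorProduct.lift (LinearMap.mk₂ R (fun n f => f ∘ₗ LinearMap.applyₗ n)
    (by intros; ext; simp) (by intros; ext; simp) (by intros; ext; simp) (by intros; ext; simp))

variable {R N C I}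

@[simp]
theorem homEvaluation_tmul (n : N) (f : C →ₗ[R] I) (g : N →ₗ[R] C) :
    homEvaluation R N C I (n ⊗ₜ f) g = f (g n) := rfl

theorem homEvaluation_naturality {N' : Type} [AddCommGroup N'] [Module R N'] (h : N →ₗ[R] N')
    (x : N ⊗[R] (C →ₗ[R] I)) (g : N' →ₗ[R] C) :
    homEvaluation R N' C I (h.rTensor _ x) g = homEvaluation R N C I x (g ∘ₗ h) := by
  induction x with
  | zero => simp
  | tmul n f => simp
  | add x y hx hy => simp [hx, hy]

theorem homEvaluation_bijective_pi (n : ℕ) :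
    Function.Bijective (homEvaluation R (Fin n → R) C I) := by
  let inv : ((((Fin n → R) →ₗ[R] C) →ₗ[R] I)) → (Fin n → R) ⊗[R] (C →ₗ[R] I) :=
    fun Φ => ∑ i, Pi.single i 1 ⊗ₜ (Φ ∘ₗ (LinearMap.smulRightₗ (LinearMap.proj i)))
  refine Function.bijective_iff_has_inverse.2 ⟨inv, fun x => ?_, fun Φ => ?_⟩
  · induction x with
    | zero => simp [inv]
    | tmul r f =>
      simp only [inv]
      have : ∀ i, (homEvaluation R (Fin n → R) C I (r ⊗ₜ f)) ∘ₗ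
          (LinearMap.smulRightₗ (LinearMap.proj i)) = r i • f := by
        intro i; ext c; simp
      simp only [this, TensorProduct.tmul_smul, TensorProduct.smul_tmul', ← TensorProduct.sum_tmul]
      congr 1
      ext j
      simp [Finset.sum_apply, Pi.single_apply]
    | add x y hx hy =>
      simp only [inv, map_add, LinearMap.add_comp, TensorProduct.tmul_add,
        Finset.sum_add_distrib] at hx hy ⊢
      rw [hx, hy]
  · ext g
    simp only [inv, map_sum, LinearMap.sum_apply, homEvaluation_tmul, LinearMap.comp_apply]
    rw [← map_sum]
    congr 1
    ext j
    simp [Pi.single_apply]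

theorem homEvaluation_surjective [Module.Finite R N] (hI : Module.Injective R I) :
    Function.Surjective (homEvaluation R N C I) := by
  intro Φ
  obtain ⟨n, π, hπ⟩ := Module.Finite.exists_fin' R N
  obtain ⟨Ψ, hΨ⟩ := hI.exists_comp_eq_of_ker_le (LinearMap.lcomp R C π) Φ (by
    intro g hg
    have : g = 0 := by
      ext x
      obtain ⟨y, rfl⟩ := hπ x
      exact LinearMap.congr_fun (LinearMap.mem_ker.1 hg) y
    simp [this])
  obtain ⟨x, rfl⟩ := (homEvaluation_bijective_pi n).2 Ψ
  refine ⟨π.rTensor _ x, LinearMap.ext fun g => ?_⟩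
  rw [homEvaluation_naturality, ← hΨ]
  rfl

theorem homEvaluation_bijective [IsNoetherianRing R] [Module.Finite R N]
    (hI : Module.Injective R I) : Function.Bijective (homEvaluation R N C I) := by
  refine ⟨(injective_iff_map_eq_zero _).2 fun y hy => ?_, homEvaluation_surjective hI⟩
  obtain ⟨n, π, hπ⟩ := Module.Finite.exists_fin' R N
  obtain ⟨x, rfl⟩ := LinearMap.rTensor_surjective (C →ₗ[R] I) hπ y
  obtain ⟨Φ, hΦ⟩ := hI.exists_comp_eq_of_ker_le
    (LinearMap.lcomp R C (LinearMap.ker π).subtype) (homEvaluation R _ C I x) (by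
    intro g hg
    have hle : LinearMap.ker π ≤ LinearMap.ker g := fun z hz =>
      LinearMap.congr_fun (LinearMap.mem_ker.1 hg) ⟨z, hz⟩
    have hg' : g = ((LinearMap.ker π).liftQ g hle ∘ₗ
        (LinearMap.quotKerEquivOfSurjective π hπ).symm.toLinearMap) ∘ₗ π := by
      ext i
      simp only [LinearMap.comp_apply, LinearEquiv.coe_coe]
      rw [show π (LinearMap.single R (fun _ => R) i 1) =
        LinearMap.quotKerEquivOfSurjective π hπ
          (Submodule.Quotient.mk (LinearMap.single R (fun _ => R) i 1)) from rfl]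
      simp
    rw [LinearMap.mem_ker, hg', ← homEvaluation_naturality, hy, LinearMap.zero_apply])
  obtain ⟨z, rfl⟩ := homEvaluation_surjective (N := LinearMap.ker π) hI Φ
  have : x = (LinearMap.ker π).subtype.rTensor _ z := by
    apply (homEvaluation_bijective_pi n).1
    ext1 g
    rw [← hΦ, homEvaluation_naturality]
    rfl
  rw [this, ← LinearMap.comp_apply, ← LinearMap.rTensor_comp]
  simp [LinearMap.comp_ker_subtype]

end homEvaluation

section unit

variable (R : Type) [CommRing R] (C M : Type) [AddCommGroup C] [Module R C]
  [AddCommGroup M] [Module R M]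

/-- The unit `m ↦ (c ↦ c ⊗ m)` of the tensor-hom adjunction. -/
noncomputable def tensorHomUnit : M →ₗ[R] C →ₗ[R] C ⊗[R] M := (TensorProduct.mk R C M).flip

variable {R C M}

@[simp]
theorem tensorHomUnit_apply (m : M) (c : C) : tensorHomUnit R C M m c = c ⊗ₜ m := rfl

theorem tensorHomUnit_bijective_of_equiv {M' : Type} [AddCommGroup M'] [Module R M']
    (e : M ≃ₗ[R] M') (h : Function.Bijective (tensorHomUnit R C M')) :
    Function.Bijective (tensorHomUnit R C M) := by
  have : ⇑(tensorHomUnit R C M) = (LinearEquiv.congrRight (M := C) (e.lTensor C).symm) ∘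
      (tensorHomUnit R C M') ∘ e := by
    funext m
    ext c
    simp [LinearEquiv.congrRight]
  rw [this]
  exact (LinearEquiv.bijective _).comp (h.comp e.bijective)

theorem evaluation_bijective [IsNoetherianRing R] [Module.Finite R C]
    (hC : Function.Bijective (LinearMap.lsmul R C)) {I : Type} [AddCommGroup I] [Module R I]
    (hI : Module.Injective R I) :
    Function.Bijective (TensorProduct.lift (LinearMap.applyₗ : C →ₗ[R] (C →ₗ[R] I) →ₗ[R] I)) := by
  let e := LinearEquiv.ofBijective (LinearMap.lsmul R C) hC
  have : ⇑(TensorProduct.lift (LinearMap.applyₗ : C →ₗ[R] (C →ₗ[R] I) →ₗ[R] I)) =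
      ((LinearEquiv.congrLeft I R e.symm).trans (LinearMap.ringLmapEquivSelf R R I)) ∘
        homEvaluation R C C I := by
    funext x
    induction x with
    | zero => simp
    | tmul c f => simp [LinearEquiv.congrLeft, e]
    | add x y hx hy => simp only [map_add, hx, hy, Function.comp_apply]
  rw [this]
  exact (LinearEquiv.bijective _).comp (homEvaluation_bijective hI)

theorem tensorHomUnit_bijective_hom [IsNoetherianRing R] [Module.Finite R C]
    (hC : Function.Bijective (LinearMap.lsmul R C)) {I : Type} [AddCommGroup I] [Module R I]
    (hI : Module.Injective R I) : Function.Bijective (tensorHomUnit R C (C →ₗ[R] I)) := by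
  let e := LinearEquiv.ofBijective _ (evaluation_bijective hC hI)
  have : ⇑(tensorHomUnit R C (C →ₗ[R] I)) = (LinearEquiv.congrRight (M := C) e).symm := by
    funext f
    rw [LinearEquiv.eq_symm_apply]
    ext c
    simp [e, LinearEquiv.congrRight]
  rw [this]
  exact LinearEquiv.bijective _

end unit

section characters

variable {R : Type} [CommRing R] {C : Type} [AddCommGroup C] [Module R C]

theorem extVanish_characterModule_hom [IsNoetherianRing R] {I : Type} [AddCommGroup I]
    [Module R I] (hI : Module.Injective R I) (i : ℕ) :
    ∀ (N : Type) [AddCommGroup N] [Module R N] [Module.Finite R N],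
      (∀ j, ExtVanish R N C (j + 1)) →
        ExtVanish R N (CharacterModule (C →ₗ[R] I)) (i + 1) := by
  induction i with
  | zero =>
    intro N _ _ _ hN
    obtain ⟨n, π, hπ⟩ := Module.Finite.exists_fin' R N
    have hex := LinearMap.exact_subtype_ker_map π
    refine ExtVanish.one_of_extend (Submodule.injective_subtype _) hex hπ
      (ExtVanish.of_projective one_pos) ?_
    refine rTensor_injective_iff_lcomp_surjective.1 ((injective_iff_map_eq_zero _).2 fun x hx => ?_)
    apply (homEvaluation_bijective hI).1
    rw [map_zero]
    ext g
    obtain ⟨g', rfl⟩ := ExtVanish.exists_extend (Submodule.injective_subtype _) hex hπ (hN 0) g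
    rw [← homEvaluation_naturality, hx, map_zero]
    rfl
  | succ i ih =>
    intro N _ _ _ hN
    obtain ⟨n, π, hπ⟩ := Module.Finite.exists_fin' R N
    have hex := LinearMap.exact_subtype_ker_map π
    refine ExtVanish.third_left (Submodule.injective_subtype _) hex hπ
      (ih _ fun j => ?_) (ExtVanish.of_projective (Nat.succ_pos _))
    exact ExtVanish.first_left (Submodule.injective_subtype _) hex hπ
      (ExtVanish.of_projective (Nat.succ_pos _)) (hN _)

variable {A B D : Type} [AddCommGroup A] [Module R A] [AddCommGroup B] [Module R B]
  [AddCommGroup D] [Module R D] {f : A →ₗ[R] B} {g : B →ₗ[R] D}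

theorem characterModule_dual_exact (hfg : Function.Exact f g) :
    Function.Exact (CharacterModule.dual g) (CharacterModule.dual f) := by
  intro χ
  constructor
  · intro h
    have hker : LinearMap.ker g.toAddMonoidHom.toIntLinearMap ≤
        LinearMap.ker (AddMonoidHom.toIntLinearMap χ) := by
      intro x hx
      obtain ⟨y, rfl⟩ := (hfg x).1 hx
      exact DFunLike.congr_fun h y
    obtain ⟨ψ, hψ⟩ := (show Module.Injective ℤ (AddCircle (1 : ℚ)) from
      (Module.Baer.of_divisible _).injective).exists_comp_eq_of_ker_le
        g.toAddMonoidHom.toIntLinearMap (AddMonoidHom.toIntLinearMap χ) hker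
    exact ⟨ψ.toAddMonoidHom, DFunLike.ext _ _ fun x => LinearMap.congr_fun hψ x⟩
  · rintro ⟨ψ, rfl⟩
    refine DFunLike.ext _ _ fun x => ?_
    change ψ (g (f x)) = 0
    rw [hfg.apply_apply_eq_zero, map_zero]

theorem lTensor_injective_of_extVanish (hf : Function.Injective f) (hfg : Function.Exact f g)
    (hg : Function.Surjective g) (h : ExtVanish R C (CharacterModule D) 1) :
    Function.Injective (f.lTensor C) := by
  rw [← CharacterModule.dual_surjective_iff_injective]
  intro χ
  obtain ⟨k, hk⟩ := ExtVanish.exists_lift (CharacterModule.dual_injective_of_surjective _ hg)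
    (characterModule_dual_exact hfg) (CharacterModule.dual_surjective_of_injective _ hf) h
    (CharacterModule.curry χ)
  refine ⟨CharacterModule.uncurry k, DFunLike.ext _ _ fun x => ?_⟩
  induction x with
  | zero => simp
  | tmul c a => exact DFunLike.congr_fun (LinearMap.congr_fun hk c) a
  | add x y hx hy => simp only [map_add, hx, hy]

theorem tensorHomUnit_bijective_of_exact (hf : Function.Injective f) (hfg : Function.Exact f g)
    (hfC : Function.Injective (f.lTensor C))
    (hB : Function.Bijective (tensorHomUnit R C B))
    (hD : Function.Injective (tensorHomUnit R C D)) :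
    Function.Bijective (tensorHomUnit R C A) := by
  refine ⟨(injective_iff_map_eq_zero _).2 fun a ha => ?_, fun φ => ?_⟩
  · apply hf
    rw [map_zero]
    apply hB.1
    rw [map_zero]
    ext c
    have := congrArg (f.lTensor C) (LinearMap.congr_fun ha c)
    simpa using this
  · obtain ⟨b, hb⟩ := hB.2 (f.lTensor C ∘ₗ φ)
    obtain ⟨a, rfl⟩ := (hfg b).1 (by
      apply hD
      rw [map_zero]
      ext c
      have := congrArg (g.lTensor C) (LinearMap.congr_fun hb c)
      rw [LinearMap.comp_apply, ← LinearMap.lTensor_comp_apply,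
        hfg.linearMap_comp_eq_zero] at this
      simpa using this)
    refine ⟨a, LinearMap.ext fun c => hfC ?_⟩
    have := LinearMap.congr_fun hb c
    simpa using this

theorem CidLE.extVanish_and_tensorHomUnit_bijective [IsNoetherianRing R]
    (hC : IsSemidualizing R C) (n : ℕ) :
    ∀ (M : Type) (iM : AddCommGroup M) (jM : Module R M), CidLE R C n M iM jM →
      (∀ i, ExtVanish R C (CharacterModule M) (i + 1)) ∧
        Function.Bijective (tensorHomUnit R C M) := by
  obtain ⟨_, hbij, hext⟩ := hC
  have hext' : ∀ j, ExtVanish R C C (j + 1) := fun j =>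
    ExtVanish.of_subsingleton_extGroup (hext _ (Nat.succ_pos j))
  induction n with
  | zero =>
    rintro M iM jM ⟨I, iI, jI, hI, ⟨e⟩⟩
    refine ⟨fun i => ?_, tensorHomUnit_bijective_of_equiv e (tensorHomUnit_bijective_hom hbij hI)⟩
    exact (extVanish_characterModule_hom hI i C hext').congr_right (CharacterModule.congr e.symm)
  | succ n ih =>
    rintro M iM jM ⟨I, iI, jI, f, hI, hf, h⟩
    obtain ⟨hQ, hQ'⟩ := ih _ _ _ h
    have hex := LinearMap.exact_map_mkQ_range f
    have hs := Submodule.mkQ_surjective (LinearMap.range f)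
    refine ⟨fun i => ?_, tensorHomUnit_bijective_of_exact hf hex
      (lTensor_injective_of_extVanish hf hex hs (hQ 0)) (tensorHomUnit_bijective_hom hbij hI)
      hQ'.1⟩
    exact ExtVanish.third_right (CharacterModule.dual_injective_of_surjective _ hs)
      (characterModule_dual_exact hex) (CharacterModule.dual_surjective_of_injective _ hf)
      (extVanish_characterModule_hom hI i C hext') (hQ (i + 1))

end characters

section cyclic

variable {R : Type} [CommRing R] {C M : Type} [AddCommGroup C] [Module R C]

theorem CpdLE.exists_surjective {n : ℕ} {iM : AddCommGroup M} {jM : Module R M}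
    (h : CpdLE R C n M iM jM) :
    ∃ (P : Type) (_ : AddCommGroup P) (_ : Module R P) (f : C ⊗[R] P →ₗ[R] M),
      Function.Surjective f := by
  cases n with
  | zero => obtain ⟨P, iP, jP, -, ⟨e⟩⟩ := h; exact ⟨P, iP, jP, e.toLinearMap, e.surjective⟩
  | succ n => obtain ⟨P, iP, jP, f, -, hf, -⟩ := h; exact ⟨P, iP, jP, f, hf⟩

variable [AddCommGroup M] [Module R M]

theorem notMem_support_of_one_tmul_eq_zero [Module.Finite R M] {p : PrimeSpectrum R}
    (h : ∀ m : M, (1 : p.asIdeal.ResidueField) ⊗ₜ[R] m = 0) : p ∉ Module.support R M := by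
  rw [Module.mem_support_iff_nontrivial_residueField_tensorProduct, not_nontrivial_iff_subsingleton]
  refine subsingleton_of_forall_eq 0 fun z => ?_
  induction z with
  | zero => rfl
  | tmul a m =>
    rw [show a ⊗ₜ[R] m = a • ((1 : p.asIdeal.ResidueField) ⊗ₜ[R] m) by
      simp [TensorProduct.smul_tmul'], h, smul_zero]
  | add x y hx hy => rw [hx, hy, add_zero]

/-- If `M ≅ Hom(C, C ⊗ M)` and `M` is covered by copies of `C`, then `C` is locally cyclic on the
support of `M`. -/
theorem exists_smul_mem_span_singleton [Module.Finite R C] [Module.Finite R M]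
    (hM : Function.Bijective (tensorHomUnit R C M)) {P : Type} [AddCommGroup P] [Module R P]
    {f : C ⊗[R] P →ₗ[R] M} (hf : Function.Surjective f) {p : PrimeSpectrum R}
    (hp : p ∈ Module.support R M) :
    ∃ (c₀ : C) (s : R), s ∉ p.asIdeal ∧ ∀ c : C, ∃ r : R, r • c₀ = s • c := by
  let κ := p.asIdeal.ResidueField
  obtain ⟨φ, c₀, hφ⟩ : ∃ (φ : C →ₗ[R] M) (c₀ : C), (1 : κ) ⊗ₜ[R] φ c₀ ≠ 0 := by
    by_contra! H
    refine notMem_support_of_one_tmul_eq_zero (fun m => ?_) hp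
    obtain ⟨x, rfl⟩ := hf m
    induction x with
    | zero => simp
    | tmul c y => exact H (f ∘ₗ (TensorProduct.mk R C P).flip y) c
    | add x y hx hy => rw [map_add, TensorProduct.tmul_add, hx, hy, add_zero]
  obtain ⟨l, hl⟩ := Module.Projective.exists_dual_eq_one κ hφ
  let g : M →ₗ[R] κ := l.restrictScalars R ∘ₗ TensorProduct.mk R κ M 1
  have hg : g (φ c₀) = 1 := hl
  have key : ∀ c : C, ∃ a : κ, (1 : κ) ⊗ₜ[R] c = a ⊗ₜ[R] c₀ := by
    intro c
    obtain ⟨m, hm⟩ := hM.2 (TensorProduct.mk R C M c ∘ₗ φ)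
    refine ⟨g m, ?_⟩
    have := congrArg (g.rTensor C ∘ₗ (TensorProduct.comm R C M).toLinearMap)
      (LinearMap.congr_fun hm c₀)
    simp only [tensorHomUnit_apply, LinearMap.comp_apply, LinearEquiv.coe_coe,
      TensorProduct.comm_tmul, LinearMap.rTensor_tmul, TensorProduct.mk_apply, hg] at this
    exact this.symm
  have hQ : p ∉ Module.support R (C ⧸ Submodule.span R {c₀}) := by
    refine notMem_support_of_one_tmul_eq_zero fun x => ?_
    obtain ⟨c, rfl⟩ := Submodule.mkQ_surjective _ x
    obtain ⟨a, ha⟩ := key c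
    have := congrArg ((Submodule.mkQ (Submodule.span R {c₀})).lTensor κ) ha
    rw [LinearMap.lTensor_tmul, LinearMap.lTensor_tmul] at this
    rw [this, Submodule.mkQ_apply, (Submodule.Quotient.mk_eq_zero _).2
      (Submodule.mem_span_singleton_self c₀), TensorProduct.tmul_zero]
  rw [Module.mem_support_iff_of_finite, SetLike.not_le_iff_exists] at hQ
  obtain ⟨s, hs, hsp⟩ := hQ
  refine ⟨c₀, s, hsp, fun c => ?_⟩
  have := Module.mem_annihilator.1 hs (Submodule.Quotient.mk c)
  rw [← Submodule.Quotient.mk_smul, Submodule.Quotient.mk_eq_zero] at this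
  exact Submodule.mem_span_singleton.1 this

/-- A faithful locally cyclic module is locally free of rank one. -/
theorem exists_comp_eq_smul_id (hC : Function.Injective (LinearMap.lsmul R C)) {c₀ : C} {s : R}
    (h : ∀ c : C, ∃ r : R, r • c₀ = s • c) :
    ∃ (j : R →ₗ[R] C) (j' : C →ₗ[R] R), j' ∘ₗ j = (s * s) • LinearMap.id ∧
      j ∘ₗ j' = (s * s) • LinearMap.id := by
  choose r hr using h
  have hz : ∀ a : R, a • c₀ = 0 → s * a = 0 := by
    intro a ha
    apply hC
    rw [map_zero]
    ext c
    rw [LinearMap.lsmul_apply, mul_comm, mul_smul, ← hr, smul_comm, ha, smul_zero,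
      LinearMap.zero_apply]
  have hz' : ∀ a b : R, a • c₀ = b • c₀ → s * a = s * b := fun a b hab => by
    rw [← sub_eq_zero, ← mul_sub]
    exact hz _ (by rw [sub_smul, hab, sub_self])
  refine ⟨LinearMap.toSpanSingleton R C c₀,
    { toFun := fun c => s * r c
      map_add' := fun c d => by
        rw [← mul_add]
        exact hz' _ _ (by rw [add_smul, hr, hr, hr, smul_add])
      map_smul' := fun a c => by
        rw [smul_eq_mul, RingHom.id_apply, mul_left_comm]
        exact hz' _ _ (by rw [mul_smul, hr, hr, smul_comm]) }, ?_, ?_⟩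
  · ext
    simp only [LinearMap.comp_apply, LinearMap.toSpanSingleton_apply, one_smul, LinearMap.coe_mk,
      AddHom.coe_mk, LinearMap.smul_apply, LinearMap.id_apply, smul_eq_mul, mul_one]
    exact hz' _ _ (hr c₀)
  · ext c
    simp [mul_smul, hr]

end cyclic

section localization

variable {R : Type} [CommRing R] {C : Type} [AddCommGroup C] [Module R C] (T : Submonoid R)
  {A B D : Type} [AddCommGroup A] [Module R A] [AddCommGroup B] [Module R B]
  [AddCommGroup D] [Module R D]

theorem LocalizedModule.map_map_eq_smul {f : A →ₗ[R] B} {g : B →ₗ[R] A} {t : R}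
    (h : g ∘ₗ f = t • LinearMap.id) (x : LocalizedModule T A) :
    LocalizedModule.map T g (LocalizedModule.map T f x) = t • x := by
  induction x with
  | h m s =>
    rw [LocalizedModule.map_mk, LocalizedModule.map_mk, ← LinearMap.comp_apply, h,
      LinearMap.smul_apply, LinearMap.id_apply, LocalizedModule.smul'_mk]

/-- Maps that are mutually inverse up to a scalar become invertible after inverting the scalar. -/
theorem LocalizedModule.nonempty_equiv {f : A →ₗ[R] B} {g : B →ₗ[R] A} {t : R} (ht : t ∈ T)
    (h : g ∘ₗ f = t • LinearMap.id) (h' : f ∘ₗ g = t • LinearMap.id) :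
    Nonempty (LocalizedModule T A ≃ₗ[Localization T] LocalizedModule T B) := by
  refine ⟨LinearEquiv.ofBijective (LocalizedModule.map T f) ⟨fun x y hxy => ?_, fun y => ?_⟩⟩
  · have := congrArg (LocalizedModule.map T g) hxy
    rw [LocalizedModule.map_map_eq_smul T h, LocalizedModule.map_map_eq_smul T h] at this
    exact IsLocalizedModule.smul_injective (LocalizedModule.mkLinearMap T A) ⟨t, ht⟩ this
  · refine ⟨Localization.mk 1 ⟨t, ht⟩ • LocalizedModule.map T g y, ?_⟩
    rw [map_smul, LocalizedModule.map_map_eq_smul T h']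
    induction y with
    | h m s =>
      rw [LocalizedModule.smul'_mk, LocalizedModule.mk_smul_mk, one_smul]
      exact LocalizedModule.mk_cancel_common_left ⟨t, ht⟩ s m

theorem LocalizedModule.exact_map {f : A →ₗ[R] B} {g : B →ₗ[R] D} (h : Function.Exact f g) :
    Function.Exact (LocalizedModule.map T f) (LocalizedModule.map T g) :=
  LocalizedModule.map_exact T f g h

theorem CpdLE.extVanish_localizedModule {j : R →ₗ[R] C} {j' : C →ₗ[R] R} {t : R} (ht : t ∈ T)
    (h : j' ∘ₗ j = t • LinearMap.id) (h' : j ∘ₗ j' = t • LinearMap.id) (n : ℕ) :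
    ∀ (M : Type) (iM : AddCommGroup M) (jM : Module R M), CpdLE R C n M iM jM →
      ∀ (Y : Type) [AddCommGroup Y] [Module (Localization T) Y],
        ExtVanish (Localization T) (LocalizedModule T M) Y (n + 1) := by
  have key : ∀ (P : Type) [AddCommGroup P] [Module R P], Module.Projective R P →
      Module.Projective (Localization T) (LocalizedModule T (C ⊗[R] P)) := by
    intro P _ _ hP
    have : Module.Projective (Localization T) (LocalizedModule T (R ⊗[R] P)) :=
      inferInstance
    obtain ⟨e⟩ := LocalizedModule.nonempty_equiv T (f := j.rTensor P) (g := j'.rTensor P) ht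
      (by rw [← LinearMap.rTensor_comp, h, LinearMap.rTensor_smul, LinearMap.rTensor_id])
      (by rw [← LinearMap.rTensor_comp, h', LinearMap.rTensor_smul, LinearMap.rTensor_id])
    exact Module.Projective.of_equiv e
  induction n with
  | zero =>
    rintro M iM jM ⟨P, iP, jP, hP, ⟨e⟩⟩ Y _ _
    have := key P hP
    obtain ⟨e'⟩ := LocalizedModule.nonempty_equiv T (f := e.toLinearMap) (g := e.symm.toLinearMap)
      T.one_mem (by ext; simp) (by ext; simp)
    exact (ExtVanish.of_projective one_pos).congr_left e'
  | succ n ih =>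
    rintro M iM jM ⟨P, iP, jP, f, hP, hf, hK⟩ Y _ _
    have := key P hP
    exact ExtVanish.third_left
      (LocalizedModule.map_injective T _ (Submodule.injective_subtype (LinearMap.ker f)))
      (LocalizedModule.exact_map T (LinearMap.exact_subtype_ker_map f))
      (LocalizedModule.map_surjective T _ hf) (ih _ _ _ hK Y)
      (ExtVanish.of_projective (Nat.succ_pos _))

theorem CidLE.extVanish_localizedModule [IsNoetherianRing R] {j : R →ₗ[R] C} {j' : C →ₗ[R] R}
    {t : R} (ht : t ∈ T)
    (h : j' ∘ₗ j = t • LinearMap.id) (h' : j ∘ₗ j' = t • LinearMap.id) (n : ℕ) :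
    ∀ (M : Type) (iM : AddCommGroup M) (jM : Module R M), CidLE R C n M iM jM →
      ∀ i, n < i → ∀ (X : Type) [AddCommGroup X] [Module (Localization T) X],
        ExtVanish (Localization T) X (LocalizedModule T M) i := by
  have key : ∀ (I : Type) [AddCommGroup I] [Module R I], Module.Injective R I →
      Module.Injective (Localization T) (LocalizedModule T (C →ₗ[R] I)) := by
    intro I _ _ hI
    have : Module.Injective (Localization T) (LocalizedModule T I) :=
      Module.injective_of_isLocalizedModule T (LocalizedModule.mkLinearMap T I)
    let e₀ := LinearMap.ringLmapEquivSelf R R I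
    obtain ⟨e⟩ := LocalizedModule.nonempty_equiv T
      (f := LinearMap.lcomp R I j' ∘ₗ e₀.symm.toLinearMap)
      (g := e₀.toLinearMap ∘ₗ LinearMap.lcomp R I j) ht
      (by
        ext x
        have := LinearMap.congr_fun h 1
        simp only [LinearMap.comp_apply, LinearMap.smul_apply, LinearMap.id_apply] at this
        simp [e₀, this])
      (by
        ext φ c
        have := LinearMap.congr_fun h' c
        simp only [LinearMap.comp_apply, LinearMap.smul_apply, LinearMap.id_apply] at this
        simp only [LinearMap.comp_apply, LinearMap.smul_apply, LinearMap.id_apply,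
          LinearEquiv.coe_coe, LinearEquiv.symm_apply_apply, LinearMap.lcomp_apply, this,
          map_smul])
    exact (Module.Baer.of_equiv e (Module.Baer.of_injective inferInstance)).injective
  induction n with
  | zero =>
    rintro M iM jM ⟨I, iI, jI, hI, ⟨e⟩⟩ i hi X _ _
    have := key I hI
    obtain ⟨e'⟩ := LocalizedModule.nonempty_equiv T (f := e.toLinearMap) (g := e.symm.toLinearMap)
      T.one_mem (by ext; simp) (by ext; simp)
    exact (ExtVanish.of_injective hi).congr_right e'.symm
  | succ n ih =>
    rintro M iM jM ⟨I, iI, jI, f, hI, hf, hQ⟩ i hi X _ _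
    have := key I hI
    obtain ⟨i, rfl⟩ : ∃ k, i = k + 1 := ⟨i - 1, by omega⟩
    exact ExtVanish.first_right (LocalizedModule.map_injective T _ hf)
      (LocalizedModule.exact_map T (LinearMap.exact_map_mkQ_range f))
      (LocalizedModule.map_surjective T _ (Submodule.mkQ_surjective _))
      (ih _ _ _ hQ i (by omega) X) (ExtVanish.of_injective (Nat.succ_pos _))

end localization

section finiteInjectiveDimension

variable {S : Type} [CommRing S]

/-- Nakayama's lemma for `Ext`. -/
theorem ExtVanish.of_exact_smul [IsLocalRing S] [IsNoetherianRing S] {A D Y : Type}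
    [AddCommGroup A] [Module S A] [Module.Finite S A] [AddCommGroup D] [Module S D]
    [AddCommGroup Y] [Module S Y] [Module.Finite S Y] {x : S}
    (hx : x ∈ IsLocalRing.maximalIdeal S) {g : A →ₗ[S] D}
    (hf : Function.Injective (x • (LinearMap.id : A →ₗ[S] A)))
    (hfg : Function.Exact (x • (LinearMap.id : A →ₗ[S] A)) g) (hg : Function.Surjective g)
    {n : ℕ} (hD : ExtVanish S D Y (n + 1)) : ExtVanish S A Y n := by
  obtain ⟨_, hS⟩ := ExtVanish.shortExact hf hfg hg
  have hfin : Module.Finite S (Abelian.Ext.{0} (ModuleCat.of S A) (ModuleCat.of S Y) n) :=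
    ModuleCat.finite_ext _ (ModuleCat.of S A) (ModuleCat.of S Y) n
  have key : (⊤ : Submodule S (Abelian.Ext.{0} (ModuleCat.of S A) (ModuleCat.of S Y) n)) = ⊥ := by
    apply Submodule.eq_bot_of_le_smul_of_le_jacobson_bot (IsLocalRing.maximalIdeal S) _
      hfin.fg_top
    · intro e _
      obtain ⟨e', rfl⟩ := Abelian.Ext.contravariant_sequence_exact₁ hS _ e (Nat.add_comm 1 n) (hD _)
      have : ModuleCat.ofHom (x • (LinearMap.id : A →ₗ[S] A)) = x • 𝟙 (ModuleCat.of S A) := rfl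
      dsimp only
      rw [this, Abelian.Ext.mk₀_smul, Abelian.Ext.smul_comp, Abelian.Ext.mk₀_id_comp]
      exact Submodule.smul_mem_smul hx trivial
    · exact (IsLocalRing.jacobson_eq_maximalIdeal _ bot_ne_top).ge
  intro e
  have : e ∈ (⊤ : Submodule S (Abelian.Ext.{0} (ModuleCat.of S A) (ModuleCat.of S Y) n)) := trivial
  rwa [key, Submodule.mem_bot] at this

theorem ExtVanish.quotient_of_residueField [IsLocalRing S] [IsNoetherianRing S] {Y : Type}
    [AddCommGroup Y] [Module S Y] [Module.Finite S Y] {m : ℕ}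
    (hk : ∀ j, m ≤ j → ExtVanish S (S ⧸ IsLocalRing.maximalIdeal S) Y j) (𝔞 : Ideal S) :
    ∀ j, m ≤ j → ExtVanish S (S ⧸ 𝔞) Y j := by
  induction 𝔞 using WellFoundedGT.induction with
  | ind 𝔞 ih =>
  intro j hj
  by_cases htop : 𝔞 = ⊤
  · subst htop
    have : Subsingleton (S ⧸ (⊤ : Ideal S)) := Submodule.Quotient.subsingleton_iff.2 rfl
    have h := ModuleCat.isZero_of_subsingleton (ModuleCat.of S (S ⧸ (⊤ : Ideal S)))
    intro e
    rw [← Abelian.Ext.mk₀_id_comp e, h.eq_of_src (𝟙 _) 0, Abelian.Ext.mk₀_zero,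
      Abelian.Ext.zero_comp]
  by_cases hmax : 𝔞 = IsLocalRing.maximalIdeal S
  · subst hmax
    exact hk j hj
  obtain ⟨x, hx, hx𝔞⟩ : ∃ x ∈ IsLocalRing.maximalIdeal S, x ∉ 𝔞 := by
    by_contra! h
    exact hmax (le_antisymm (IsLocalRing.le_maximalIdeal htop) h)
  let f : S →ₗ[S] S ⧸ 𝔞 := LinearMap.toSpanSingleton S _ (Submodule.Quotient.mk x)
  let g : (S ⧸ 𝔞) →ₗ[S] S ⧸ (𝔞 ⊔ Ideal.span {x}) := Submodule.factor le_sup_left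
  have hle : 𝔞 ≤ LinearMap.ker f := by
    intro a ha
    rw [LinearMap.mem_ker, LinearMap.toSpanSingleton_apply, ← Submodule.Quotient.mk_smul,
      Submodule.Quotient.mk_eq_zero]
    exact 𝔞.mul_mem_right _ ha
  have hg : Function.Surjective g := Submodule.factor_surjective _
  have hex : ∀ 𝔟 (h𝔟 : 𝔟 ≤ LinearMap.ker f), Function.Exact (𝔟.liftQ f h𝔟) g := by
    intro 𝔟 h𝔟 y
    obtain ⟨y, rfl⟩ := Submodule.Quotient.mk_surjective _ y
    constructor
    · intro hy
      have : y ∈ 𝔞 ⊔ Ideal.span {x} := (Submodule.Quotient.mk_eq_zero _).1 hy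
      obtain ⟨a, ha, z, hz, rfl⟩ := Submodule.mem_sup.1 this
      obtain ⟨r, rfl⟩ := Ideal.mem_span_singleton'.1 hz
      refine ⟨Submodule.Quotient.mk r, ?_⟩
      rw [Submodule.liftQ_apply, Submodule.Quotient.mk_add, (Submodule.Quotient.mk_eq_zero _).2 ha,
        zero_add]
      rfl
    · rintro ⟨r, hr⟩
      obtain ⟨r, rfl⟩ := Submodule.Quotient.mk_surjective _ r
      rw [← hr]
      refine (Submodule.Quotient.mk_eq_zero _).2 ?_
      exact Ideal.mul_mem_left _ r (Ideal.mem_sup_right (Ideal.mem_span_singleton_self x))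
  have hD := ih (𝔞 ⊔ Ideal.span {x})
    (lt_of_le_of_ne le_sup_left fun h => hx𝔞 (h ▸ Ideal.mem_sup_right
      (Ideal.mem_span_singleton_self x)))
  by_cases hker : LinearMap.ker f = 𝔞
  · have hfx : 𝔞.liftQ f hle = x • LinearMap.id := by
      ext
      change (1 : S) • (Submodule.Quotient.mk x : S ⧸ 𝔞) = x • Submodule.Quotient.mk 1
      rw [← Submodule.Quotient.mk_smul, ← Submodule.Quotient.mk_smul, smul_eq_mul, smul_eq_mul,
        mul_comm]
    refine ExtVanish.of_exact_smul hx (g := g) ?_ ?_ hg (hD (j + 1) (by omega))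
    · rw [← hfx, ← LinearMap.ker_eq_bot]
      exact Submodule.ker_liftQ_eq_bot _ _ _ hker.le
    · rw [← hfx]
      exact hex 𝔞 hle
  · exact ExtVanish.middle_left (LinearMap.ker_eq_bot.1
      (Submodule.ker_liftQ_eq_bot _ f le_rfl le_rfl)) (hex _ le_rfl) hg
      (ih _ (lt_of_le_of_ne hle (Ne.symm hker)) j hj) (hD j hj)

theorem exists_injective_module_embedding (X : Type) [AddCommGroup X] [Module S X] :
    ∃ (I : ModuleCat.{0} S) (f : X →ₗ[S] I), Module.Injective S I ∧ Function.Injective f := by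
  let J : ModuleCat.{0} S := CategoryTheory.Injective.under (ModuleCat.of S X)
  have hJ : CategoryTheory.Injective (ModuleCat.of S J) :=
    inferInstanceAs (CategoryTheory.Injective (CategoryTheory.Injective.under (ModuleCat.of S X)))
  exact ⟨J, (CategoryTheory.Injective.ι (ModuleCat.of S X)).hom,
    (Module.injective_iff_injective_object S J).2 hJ,
    (ModuleCat.mono_iff_injective _).1 inferInstance⟩

theorem idLE_of_extVanish (n : ℕ) : ∀ (X : Type) (iX : AddCommGroup X) (jX : Module S X),
    (∀ 𝔞 : Ideal S, ExtVanish S (S ⧸ 𝔞) X (n + 1)) → idLE S n X iX jX := by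
  induction n with
  | zero =>
    intro X iX jX h
    change Module.Injective S X
    refine Module.Baer.injective fun 𝔞 φ => ?_
    obtain ⟨k, hk⟩ := ExtVanish.exists_extend (R := S) (Y := X) (f := 𝔞.subtype) (g := 𝔞.mkQ)
      𝔞.injective_subtype (LinearMap.exact_subtype_mkQ 𝔞) 𝔞.mkQ_surjective (h 𝔞) φ
    exact ⟨k, fun r hr => LinearMap.congr_fun hk ⟨r, hr⟩⟩
  | succ n ih =>
    intro X _ _ h
    obtain ⟨I, f, hI, hf⟩ := exists_injective_module_embedding (S := S) X
    refine ⟨I, inferInstance, inferInstance, f, hI, hf, ih _ _ _ fun 𝔞 => ?_⟩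
    exact ExtVanish.third_right (R := S) hf (LinearMap.exact_map_mkQ_range f)
      (Submodule.mkQ_surjective _) (ExtVanish.of_injective (Nat.succ_pos _)) (h 𝔞)

theorem idLE_self_of_residueField [IsLocalRing S] [IsNoetherianRing S] {m : ℕ}
    (hk : ∀ j, m ≤ j → ExtVanish S (S ⧸ IsLocalRing.maximalIdeal S) S j) :
    idLE S m S inferInstance inferInstance :=
  idLE_of_extVanish m _ _ _ fun 𝔞 =>
    ExtVanish.quotient_of_residueField hk 𝔞 (m + 1) (Nat.le_succ m)

end finiteInjectiveDimension

section complexes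

/-- A bounded below cochain complex of injective modules with cohomology only in degree `0`. -/
structure InjComplex (S : Type) [CommRing S] where
  /-- the terms -/
  X : ℤ → ModuleCat.{0} S
  inj : ∀ i, Module.Injective S (X i)
  /-- the differential -/
  d : ∀ i, X i →ₗ[S] X (i + 1)
  d_d : ∀ i x, d (i + 1) (d i x) = 0
  exact : ∀ i, i ≠ -1 → ∀ x, d (i + 1) x = 0 → ∃ y, d i y = x
  /-- a lower bound for the nonzero terms -/
  lo : ℤ
  subsingleton : ∀ i, i < lo → Subsingleton (X i)

/-- An injective resolution of the ring, the augmentation being given by the image `e (-1)`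
of `1`. -/
structure SelfInjRes (S : Type) [CommRing S] extends InjComplex S where
  /-- the image of `1` under the augmentation, relevant for `i = -1` only -/
  e : ∀ i, X (i + 1)
  d_eq_zero_iff : ∀ i, i = -1 → ∀ x, d (i + 1) x = 0 ↔ ∃ r : S, r • e i = x
  eq_zero_of_smul_e : ∀ i, i = -1 → ∀ r : S, r • e i = 0 → r = 0
  subsingleton_of_neg : ∀ i, i < 0 → Subsingleton (X i)

/-- A bounded below complex of injectives resolving `(Fin b → S) ⧸ K`, together with a copy of
`Fin b → E`. The projection onto that copy is compatible with the differentials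
on the socle, and after applying functionals vanishing on `K`. -/
structure SelfInjRes.Model {S : Type} [CommRing S] [IsLocalRing S] (E : SelfInjRes S) (b : ℕ)
    (K : Submodule S (Fin b → S)) extends InjComplex S where
  /-- the inclusion of `Fin b → E` -/
  ι : ∀ i, (Fin b → E.X i) →ₗ[S] X i
  /-- the projection to `Fin b → E` -/
  π : ∀ i, X i →ₗ[S] (Fin b → E.X i)
  d_ι : ∀ i x, d i (ι i x) = ι (i + 1) (fun l => E.d i (x l))
  π_ι : ∀ i x, π i (ι i x) = x
  exists_of_d_eq_zero : ∀ i, i = -1 → ∀ x, d (i + 1) x = 0 →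
    ∃ (f : Fin b → S) (y : X i), ι (i + 1) (fun l => f l • E.e i) + d i y = x
  mem_iff : ∀ i, i = -1 → ∀ f : Fin b → S,
    f ∈ K ↔ ∃ y, d i y = ι (i + 1) (fun l => f l • E.e i)
  sum_smul_π_d : ∀ w : Fin b → S, (∀ f ∈ K, ∑ l, w l * f l = 0) → ∀ i a,
    ∑ l, w l • π (i + 1) (d i a) l = ∑ l, w l • E.d i (π i a l)
  π_d_of_socle : ∀ i a, (∀ x ∈ IsLocalRing.maximalIdeal S, x • a = 0) →
    π (i + 1) (d i a) = fun l => E.d i (π i a l)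

theorem SelfInjRes.nonempty (S : Type) [CommRing S] : Nonempty (SelfInjRes S) := by
  choose I f hI hf using fun Y : ModuleCat.{0} S => exists_injective_module_embedding (S := S) Y
  let coker : ModuleCat.{0} S → ModuleCat.{0} S := fun Y =>
    ModuleCat.of S (I Y ⧸ LinearMap.range (f Y))
  let δ : ∀ Y, I Y →ₗ[S] I (coker Y) := fun Y => f (coker Y) ∘ₗ (LinearMap.range (f Y)).mkQ
  have hδ : ∀ Y x, δ Y x = 0 ↔ ∃ y, f Y y = x := by
    intro Y x
    have h1 : δ Y x = f (coker Y) ((LinearMap.range (f Y)).mkQ x) := rfl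
    rw [h1, map_eq_zero_iff _ (hf _)]
    exact Submodule.Quotient.mk_eq_zero _
  let Q : ℕ → ModuleCat.{0} S := fun n => Nat.rec (ModuleCat.of S S) (fun _ Y => coker Y) n
  let g : ∀ n, I (Q n) →ₗ[S] I (Q (n + 1)) := fun n => δ (Q n)
  have hg : ∀ (n : ℕ) (x : I (Q n)), g n x = 0 ↔ ∃ y, f (Q n) y = x := fun n => hδ (Q n)
  let ε : S →ₗ[S] I (Q 0) := f (ModuleCat.of S S)
  have hε : Function.Injective ε := hf (ModuleCat.of S S)
  have hgε : ∀ x : I (Q 0), g 0 x = 0 ↔ ∃ r : S, ε r = x := hg 0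
  let X : ℤ → ModuleCat.{0} S := fun i =>
    match i with
    | Int.ofNat n => I (Q n)
    | Int.negSucc _ => ModuleCat.of S PUnit
  let d : ∀ i, X i →ₗ[S] X (i + 1) := fun i =>
    match i with
    | Int.ofNat n => g n
    | Int.negSucc _ => 0
  have hneg : ∀ i, i < 0 → Subsingleton (X i) := by
    rintro (n | n) hn
    · exact absurd hn (by simp)
    · exact inferInstanceAs (Subsingleton PUnit)
  let e : ∀ i, X (i + 1) := fun i =>
    match i with
    | Int.negSucc 0 => ε 1
    | _ => 0
  refine ⟨{ X := X, d := d, lo := 0, e := e, subsingleton := hneg, subsingleton_of_neg := hneg,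
            inj := ?_, d_d := ?_, exact := ?_, d_eq_zero_iff := ?_, eq_zero_of_smul_e := ?_ }⟩
  · rintro (n | n)
    · exact hI _
    · exact ⟨fun _ _ _ _ _ _ _ _ _ => ⟨0, fun _ => rfl⟩⟩
  · rintro (n | n) x
    · exact (hg (n + 1) _).2 ⟨_, rfl⟩
    · exact map_zero _
  · rintro (n | n) hi x hx
    · obtain ⟨y, rfl⟩ := (hg (n + 1) x).1 hx
      obtain ⟨y, rfl⟩ := Submodule.mkQ_surjective _ y
      exact ⟨y, rfl⟩
    · have := hneg (Int.negSucc n + 1) (by omega)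
      exact ⟨0, Subsingleton.elim _ _⟩
  · rintro i rfl x
    have h (r : S) : r • ε 1 = ε r := by rw [← map_smul, smul_eq_mul, mul_one]
    exact (hgε x).trans (exists_congr fun r => by rw [← h r]; rfl)
  · rintro i rfl r hr
    have h : r • ε 1 = 0 := hr
    rw [← map_smul, smul_eq_mul, mul_one] at h
    exact (map_eq_zero_iff ε hε).1 h

variable {S : Type} [CommRing S] [IsLocalRing S] (E : SelfInjRes S)

/-- The model of a finite free module. -/
def SelfInjRes.Model.free (b : ℕ) : E.Model b ⊥ where
  X i := ModuleCat.of S (Fin b → E.X i)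
  inj i := by
    have := E.inj
    exact inferInstanceAs (Module.Injective S (Fin b → E.X i))
  d i := (E.d i).compLeft (Fin b)
  d_d i x := funext fun l => E.d_d i (x l)
  exact i hi x hx := by
    choose y hy using fun l => E.exact i hi (x l) (congrFun hx l)
    exact ⟨y, funext hy⟩
  lo := 0
  subsingleton i hi := by
    have := E.subsingleton_of_neg i hi
    exact inferInstanceAs (Subsingleton (Fin b → E.X i))
  ι i := LinearMap.id
  π i := LinearMap.id
  d_ι i x := rfl
  π_ι i x := rfl
  exists_of_d_eq_zero i hi x hx := by
    choose f hf using fun l => (E.d_eq_zero_iff i hi (x l)).1 (congrFun hx l)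
    refine ⟨f, 0, ?_⟩
    rw [map_zero, add_zero]
    exact funext hf
  mem_iff i hi f := by
    have := E.subsingleton_of_neg i (by omega)
    rw [Submodule.mem_bot]
    constructor
    · rintro rfl
      refine ⟨0, ?_⟩
      rw [map_zero]
      exact funext fun l => (zero_smul S _).symm
    · rintro ⟨y, hy⟩
      funext l
      refine E.eq_zero_of_smul_e i hi _ ?_
      have h1 : E.d i (y l) = f l • E.e i := congrFun hy l
      rw [← h1, Subsingleton.elim (y l) 0, map_zero]
  sum_smul_π_d w hw i a := rfl
  π_d_of_socle i a ha := rfl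

variable {E}
variable {b₁ b₀ : ℕ} {K₁ : Submodule S (Fin b₁ → S)} {K₀ : Submodule S (Fin b₀ → S)}

namespace SelfInjRes.Model

/-- The map induced by a matrix on the distinguished direct summands. -/
def matrixMap (A : E.Model b₁ K₁) (M : Fin b₀ → Fin b₁ → S) (i : ℤ) :
    A.X i →ₗ[S] (Fin b₀ → E.X i) :=
  LinearMap.pi fun l₀ => ∑ l₁, M l₀ l₁ • (LinearMap.proj l₁ ∘ₗ A.π i)

theorem matrixMap_apply (A : E.Model b₁ K₁) (M : Fin b₀ → Fin b₁ → S) (i : ℤ) (a : A.X i)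
    (l₀ : Fin b₀) : A.matrixMap M i a l₀ = ∑ l₁, M l₀ l₁ • A.π i a l₁ := by
  simp [matrixMap]

theorem matrixMap_ι (A : E.Model b₁ K₁) (M : Fin b₀ → Fin b₁ → S) (i : ℤ) (f : Fin b₁ → S) :
    A.matrixMap M (i + 1) (A.ι (i + 1) (fun l => f l • E.e i)) =
      fun l₀ => (∑ l₁, M l₀ l₁ * f l₁) • E.e i := by
  funext l₀
  rw [matrixMap_apply, A.π_ι, Finset.sum_smul]
  simp only [mul_smul]

theorem matrixMap_d (A : E.Model b₁ K₁) {M : Fin b₀ → Fin b₁ → S}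
    (hK₁ : ∀ f, f ∈ K₁ ↔ ∀ l₀, ∑ l₁, M l₀ l₁ * f l₁ = 0) (i : ℤ) (a : A.X i) :
    A.matrixMap M (i + 1) (A.d i a) = fun l₀ => E.d i (A.matrixMap M i a l₀) := by
  funext l₀
  rw [matrixMap_apply, matrixMap_apply, A.sum_smul_π_d (M l₀) (fun f hf => (hK₁ f).1 hf l₀),
    map_sum]
  simp only [map_smul]

/-- The differential of the mapping cone. -/
def coneD (A : E.Model b₁ K₁) (M : Fin b₀ → Fin b₁ → S) (i : ℤ) :
    (A.X (i + 1) × (Fin b₀ → E.X i)) →ₗ[S] (A.X (i + 1 + 1) × (Fin b₀ → E.X (i + 1))) :=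
  LinearMap.prod (-(A.d (i + 1)) ∘ₗ LinearMap.fst S _ _)
    (LinearMap.coprod (A.matrixMap M (i + 1)) ((E.d i).compLeft (Fin b₀)))

theorem coneD_apply (A : E.Model b₁ K₁) (M : Fin b₀ → Fin b₁ → S) (i : ℤ) (a : A.X (i + 1))
    (b : Fin b₀ → E.X i) : A.coneD M i (a, b) =
      (-(A.d (i + 1) a), A.matrixMap M (i + 1) a + fun l => E.d i (b l)) := rfl

theorem coneD_eq_zero (A : E.Model b₁ K₁) (M : Fin b₀ → Fin b₁ → S) (i : ℤ) (a : A.X (i + 1))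
    (b : Fin b₀ → E.X i) (h : A.coneD M i (a, b) = 0) :
    A.d (i + 1) a = 0 ∧ A.matrixMap M (i + 1) a + (fun l => E.d i (b l)) = 0 := by
  rw [coneD_apply, Prod.mk_eq_zero, neg_eq_zero] at h
  exact h

theorem d_ι_smul_e (A : E.Model b₁ K₁) (i : ℤ) (hi : i = -1) (f : Fin b₁ → S) :
    A.d (i + 1) (A.ι (i + 1) (fun l => f l • E.e i)) = 0 := by
  rw [A.d_ι]
  have : (fun l => E.d (i + 1) (f l • E.e i)) = 0 :=
    funext fun l => (E.d_eq_zero_iff i hi _).2 ⟨f l, rfl⟩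
  rw [this, map_zero]

theorem coneD_exact (A : E.Model b₁ K₁) {M : Fin b₀ → Fin b₁ → S}
    (hK₁ : ∀ f, f ∈ K₁ ↔ ∀ l₀, ∑ l₁, M l₀ l₁ * f l₁ = 0) (i : ℤ) (hi : i ≠ -1)
    (x : A.X (i + 1 + 1) × (Fin b₀ → E.X (i + 1))) (hx : A.coneD M (i + 1) x = 0) :
    ∃ y, A.coneD M i y = x := by
  obtain ⟨a, b⟩ := x
  obtain ⟨h1, h2⟩ := A.coneD_eq_zero M _ a b hx
  by_cases hi2 : i + 1 = -1
  · have hsub := E.subsingleton_of_neg (i + 1) (by omega)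
    obtain ⟨f, y, rfl⟩ := A.exists_of_d_eq_zero (i + 1) hi2 a h1
    have h3 : (fun l => E.d (i + 1) (b l)) = 0 := by
      funext l
      rw [Subsingleton.elim (b l) 0, map_zero, Pi.zero_apply]
    have h4 : A.matrixMap M (i + 1 + 1) (A.d (i + 1) y) = 0 := by
      rw [A.matrixMap_d hK₁]
      funext l
      rw [Subsingleton.elim (A.matrixMap M (i + 1) y l) 0, map_zero, Pi.zero_apply]
    rw [h3, add_zero, map_add, h4, add_zero, A.matrixMap_ι] at h2
    have hf : f ∈ K₁ := (hK₁ f).2 fun l₀ => E.eq_zero_of_smul_e (i + 1) hi2 _ (congrFun h2 l₀)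
    obtain ⟨z, hz⟩ := (A.mem_iff (i + 1) hi2 f).1 hf
    refine ⟨(-(z + y), 0), ?_⟩
    rw [coneD_apply]
    refine Prod.ext ?_ (Subsingleton.elim _ _)
    simp only [map_neg, neg_neg, map_add, hz]
  · obtain ⟨a', rfl⟩ := A.exact (i + 1) hi2 a h1
    have h3 : ∀ l, E.d (i + 1) ((b + A.matrixMap M (i + 1) a') l) = 0 := by
      intro l
      have := congrFun h2 l
      rw [A.matrixMap_d hK₁] at this
      rw [Pi.add_apply, map_add]
      exact (add_comm _ _).trans this
    choose c hc using fun l => E.exact i hi _ (h3 l)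
    refine ⟨(-a', c), ?_⟩
    rw [coneD_apply, map_neg, map_neg, neg_neg]
    refine Prod.ext rfl ?_
    funext l
    simp [hc]

/-- The mapping cone of the map induced by a matrix. -/
def cone (A : E.Model b₁ K₁) (M : Fin b₀ → Fin b₁ → S)
    (hM : ∀ l₀ l₁, M l₀ l₁ ∈ IsLocalRing.maximalIdeal S)
    (hK₁ : ∀ f, f ∈ K₁ ↔ ∀ l₀, ∑ l₁, M l₀ l₁ * f l₁ = 0)
    (hK₀ : ∀ f, f ∈ K₀ ↔ ∃ f₁ : Fin b₁ → S, ∀ l₀, ∑ l₁, M l₀ l₁ * f₁ l₁ = f l₀) :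
    E.Model b₀ K₀ where
  X i := ModuleCat.of S (A.X (i + 1) × (Fin b₀ → E.X i))
  inj i := by
    have h1 := E.inj i
    have h2 := A.inj (i + 1)
    refine ⟨fun P Q _ _ _ _ f hf g => ?_⟩
    obtain ⟨k₁, hk₁⟩ := Module.Injective.extension_property S (A.X (i + 1)) P Q f hf
      (LinearMap.fst S (A.X (i + 1)) (Fin b₀ → E.X i) ∘ₗ g)
    obtain ⟨k₂, hk₂⟩ := Module.Injective.extension_property S (Fin b₀ → E.X i) P Q f hf
      (LinearMap.snd S (A.X (i + 1)) (Fin b₀ → E.X i) ∘ₗ g)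
    exact ⟨LinearMap.prod k₁ k₂, fun x =>
      Prod.ext (LinearMap.congr_fun hk₁ x) (LinearMap.congr_fun hk₂ x)⟩
  d i := A.coneD M i
  d_d i := by
    rintro ⟨a, b⟩
    change A.coneD M (i + 1) (A.coneD M i (a, b)) = 0
    rw [coneD_apply, coneD_apply, map_neg, A.d_d, map_neg, A.matrixMap_d hK₁]
    refine Prod.ext (by simp) ?_
    funext l
    simp [E.d_d]
  exact i hi x hx := A.coneD_exact hK₁ i hi x hx
  lo := min (A.lo - 1) 0
  subsingleton i hi := by
    have h1 := E.subsingleton_of_neg i (by omega)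
    have h2 := A.subsingleton (i + 1) (by omega)
    exact inferInstanceAs (Subsingleton (A.X (i + 1) × (Fin b₀ → E.X i)))
  ι i := LinearMap.inr S (A.X (i + 1)) (Fin b₀ → E.X i)
  π i := LinearMap.snd S (A.X (i + 1)) (Fin b₀ → E.X i)
  d_ι i x := by
    change A.coneD M i (0, x) = _
    rw [coneD_apply, map_zero, map_zero, neg_zero, zero_add]
    rfl
  π_ι i x := rfl
  exists_of_d_eq_zero i hi := by
    rintro ⟨a, b⟩ hx
    obtain ⟨h1, h2⟩ := A.coneD_eq_zero M _ a b hx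
    obtain ⟨a', rfl⟩ := A.exact (i + 1) (by omega) a h1
    have h3 : ∀ l, E.d (i + 1) ((b + A.matrixMap M (i + 1) a') l) = 0 := by
      intro l
      have := congrFun h2 l
      rw [A.matrixMap_d hK₁] at this
      rw [Pi.add_apply, map_add]
      exact (add_comm _ _).trans this
    choose f hf using fun l => (E.d_eq_zero_iff i hi _).1 (h3 l)
    refine ⟨f, (-a', 0), ?_⟩
    change ((0 : A.X (i + 1 + 1)), fun l => f l • E.e i) + A.coneD M i (-a', 0) = _
    rw [coneD_apply, map_neg, map_neg, neg_neg]
    refine Prod.ext (zero_add _) ?_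
    funext l
    simp [hf]
  mem_iff i hi f := by
    have hsub := E.subsingleton_of_neg i (by omega)
    rw [hK₀]
    constructor
    · rintro ⟨f₁, hf₁⟩
      refine ⟨(A.ι (i + 1) (fun l => f₁ l • E.e i), 0), ?_⟩
      change A.coneD M i (A.ι (i + 1) (fun l => f₁ l • E.e i), 0) =
        ((0 : A.X (i + 1 + 1)), fun l => f l • E.e i)
      rw [coneD_apply, A.d_ι_smul_e i hi, A.matrixMap_ι, neg_zero]
      refine Prod.ext rfl ?_
      funext l
      simp [hf₁]
    · rintro ⟨⟨a, b⟩, hy⟩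
      change A.coneD M i (a, b) = ((0 : A.X (i + 1 + 1)), fun l => f l • E.e i) at hy
      rw [coneD_apply, Prod.mk.injEq, neg_eq_zero] at hy
      obtain ⟨f₁, y, rfl⟩ := A.exists_of_d_eq_zero i hi a hy.1
      refine ⟨f₁, fun l => sub_eq_zero.1 (E.eq_zero_of_smul_e i hi _ ?_)⟩
      have h := congrFun hy.2 l
      rw [map_add, A.matrixMap_ι, A.matrixMap_d hK₁] at h
      simp only [Pi.add_apply] at h
      rw [Subsingleton.elim (b l) 0, Subsingleton.elim (A.matrixMap M i y l) 0, map_zero, add_zero,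
        add_zero] at h
      rw [sub_smul, h, sub_self]
  sum_smul_π_d w hw i := by
    rintro ⟨a, b⟩
    change ∑ l, w l • (A.matrixMap M (i + 1) a + fun l => E.d i (b l)) l = ∑ l, w l • E.d i (b l)
    simp only [Pi.add_apply, smul_add, Finset.sum_add_distrib, matrixMap_apply, Finset.smul_sum,
      smul_smul]
    rw [Finset.sum_comm]
    simp only [← Finset.sum_smul]
    rw [Finset.sum_eq_zero, zero_add]
    intro l₁ _
    rw [hw (fun l₀ => M l₀ l₁) ((hK₀ _).2 ⟨Pi.single l₁ 1, fun l₀ => by simp [Pi.single_apply]⟩),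
      zero_smul]
  π_d_of_socle i := by
    rintro ⟨a, b⟩ h
    change (A.matrixMap M (i + 1) a + fun l => E.d i (b l)) = fun l => E.d i (b l)
    rw [add_eq_right]
    funext l
    rw [matrixMap_apply]
    refine Finset.sum_eq_zero fun l₁ _ => ?_
    have h1 : M l l₁ • a = 0 := congrArg Prod.fst (h _ (hM l l₁))
    rw [← Pi.smul_apply, ← map_smul, h1, map_zero, Pi.zero_apply]

end SelfInjRes.Model

end complexes

section minimalCover

variable {S : Type} [CommRing S] [IsLocalRing S]

theorem exists_minimal_cover (N : Type) [AddCommGroup N] [Module S N] [Module.Finite S N] :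
    ∃ (b : ℕ) (q : (Fin b → S) →ₗ[S] N), Function.Surjective q ∧
      ∀ f, q f = 0 → ∀ l, f l ∈ IsLocalRing.maximalIdeal S := by
  classical
  have hex : ∃ b, ∃ v : Fin b → N, Function.Surjective (Fintype.linearCombination S v) := by
    obtain ⟨b, q, hq⟩ := Module.Finite.exists_fin' S N
    refine ⟨b, fun l => q (Pi.single l 1), fun y => ?_⟩
    obtain ⟨f, rfl⟩ := hq y
    refine ⟨f, ?_⟩
    rw [Fintype.linearCombination_apply]
    conv_rhs => rw [pi_eq_sum_univ' f]
    rw [map_sum]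
    refine Finset.sum_congr rfl fun l _ => ?_
    rw [map_smul]
  obtain ⟨v, hv⟩ := Nat.find_spec hex
  refine ⟨Nat.find hex, Fintype.linearCombination S v, hv, ?_⟩
  by_contra! h
  obtain ⟨f, hf, l, hl⟩ := h
  have hmin := fun m => Nat.find_min hex (m := m)
  generalize Nat.find hex = b at v hv f l hf hl hmin
  obtain _ | b := b
  · exact l.elim0
  refine hmin b (Nat.lt_succ_self b) ⟨v ∘ l.succAbove, fun y => ?_⟩
  obtain ⟨u, hu⟩ : IsUnit (f l) := by
    by_contra h
    exact hl h
  obtain ⟨g, rfl⟩ := hv y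
  let g' := g - (g l * (↑u⁻¹ : S)) • f
  have hg' : Fintype.linearCombination S v g' = Fintype.linearCombination S v g := by
    rw [map_sub, map_smul, hf, smul_zero, sub_zero]
  have hl0 : g' l = 0 := by
    simp [g', ← hu, mul_assoc]
  refine ⟨g' ∘ l.succAbove, ?_⟩
  rw [← hg', Fintype.linearCombination_apply, Fintype.linearCombination_apply,
    Fin.sum_univ_succAbove _ l, hl0, zero_smul, zero_add]
  rfl

theorem ker_eq_bot_of_extVanish [IsNoetherianRing S] {N : Type} [AddCommGroup N] [Module S N]
    {b : ℕ} {q : (Fin b → S) →ₗ[S] N} (hq : Function.Surjective q)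
    (hmin : ∀ f, q f = 0 → ∀ l, f l ∈ IsLocalRing.maximalIdeal S)
    (h : ExtVanish S N (LinearMap.ker q) 1) : LinearMap.ker q = ⊥ := by
  obtain ⟨σ, hσ⟩ := ExtVanish.exists_lift (R := S) (f := (LinearMap.ker q).subtype) (g := q)
    (LinearMap.ker q).injective_subtype (LinearMap.exact_subtype_ker_map q) hq h LinearMap.id
  apply Submodule.eq_bot_of_le_smul_of_le_jacobson_bot (IsLocalRing.maximalIdeal S) _
    (IsNoetherian.noetherian _) _ (IsLocalRing.jacobson_eq_maximalIdeal _ bot_ne_top).ge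
  intro f hf
  let ρ : (Fin b → S) →ₗ[S] (Fin b → S) := LinearMap.id - σ ∘ₗ q
  have hρ : ∀ x, ρ x ∈ LinearMap.ker q := by
    intro x
    have h1 : q (σ (q x)) = q x := LinearMap.congr_fun hσ (q x)
    simp [ρ, h1]
  have hρf : ρ f = f := by
    have h1 : q f = 0 := hf
    simp [ρ, h1]
  rw [← hρf, LinearMap.pi_apply_eq_sum_univ ρ f]
  exact Submodule.sum_mem _ fun l _ => Submodule.smul_mem_smul (hmin f hf l) (hρ _)

theorem SelfInjRes.exists_model [IsNoetherianRing S] (E : SelfInjRes S) (n : ℕ) :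
    ∀ (N : Type) [AddCommGroup N] [Module S N] [Module.Finite S N],
      (∀ (Y : Type) [AddCommGroup Y] [Module S Y], ExtVanish S N Y (n + 1)) →
      ∃ (b : ℕ) (q : (Fin b → S) →ₗ[S] N), Function.Surjective q ∧
        (∀ f, q f = 0 → ∀ l, f l ∈ IsLocalRing.maximalIdeal S) ∧
        Nonempty (E.Model b (LinearMap.ker q)) := by
  induction n with
  | zero =>
    intro N _ _ _ h
    obtain ⟨b, q, hq, hmin⟩ := exists_minimal_cover (S := S) N
    refine ⟨b, q, hq, hmin, ?_⟩
    rw [ker_eq_bot_of_extVanish hq hmin (h _)]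
    exact ⟨SelfInjRes.Model.free E b⟩
  | succ n ih =>
    intro N _ _ _ h
    obtain ⟨b, q, hq, hmin⟩ := exists_minimal_cover (S := S) N
    obtain ⟨b₁, q₁, hq₁, -, ⟨A⟩⟩ := ih (LinearMap.ker q) fun Y _ _ =>
      ExtVanish.first_left (R := S) (LinearMap.ker q).injective_subtype
        (LinearMap.exact_subtype_ker_map q) hq (ExtVanish.of_projective (Nat.succ_pos _)) (h Y)
    let M : Fin b → Fin b₁ → S := fun l₀ l₁ => (q₁ (fun j => if l₁ = j then 1 else 0)).1 l₀
    have hM : ∀ f l₀, ∑ l₁, M l₀ l₁ * f l₁ = (q₁ f).1 l₀ := by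
      intro f l₀
      rw [LinearMap.pi_apply_eq_sum_univ q₁ f]
      simp [M, mul_comm]
    refine ⟨b, q, hq, hmin, ⟨A.cone M (fun l₀ l₁ => hmin _ (q₁ _).2 l₀) ?_ ?_⟩⟩
    · intro f
      simp only [hM, LinearMap.mem_ker]
      constructor
      · intro h l
        rw [h]
        rfl
      · exact fun h => Subtype.ext (funext h)
    · intro f
      simp only [hM]
      constructor
      · intro hf
        obtain ⟨f₁, hf₁⟩ := hq₁ ⟨f, hf⟩
        exact ⟨f₁, fun l => by rw [hf₁]⟩
      · rintro ⟨f₁, hf₁⟩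
        rw [← funext hf₁]
        exact (q₁ f₁).2

end minimalCover

section cocycles

variable {S : Type} [CommRing S]

theorem ExtVanish.of_subsingleton_right {X Y : Type} [AddCommGroup X] [Module S X]
    [AddCommGroup Y] [Module S Y] [Subsingleton Y] (n : ℕ) : ExtVanish S X Y n := by
  intro e
  rw [← Abelian.Ext.comp_mk₀_id e,
    (ModuleCat.isZero_of_subsingleton (ModuleCat.of S Y)).eq_of_src (𝟙 _) 0,
    Abelian.Ext.mk₀_zero, Abelian.Ext.comp_zero]

namespace InjComplex

variable (A : InjComplex S)

/-- The differential, with values in the cocycles. -/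
def toCocycles (i : ℤ) : A.X i →ₗ[S] LinearMap.ker (A.d (i + 1)) :=
  (A.d i).codRestrict _ (A.d_d i)

theorem exact_subtype_toCocycles (i : ℤ) :
    Function.Exact (LinearMap.ker (A.d i)).subtype (A.toCocycles i) := by
  intro x
  rw [Subtype.ext_iff]
  exact LinearMap.exact_subtype_ker_map (A.d i) x

theorem toCocycles_surjective {i : ℤ} (hi : i ≠ -1) : Function.Surjective (A.toCocycles i) := by
  rintro ⟨x, hx⟩
  obtain ⟨y, rfl⟩ := A.exact i hi x hx
  exact ⟨y, rfl⟩

variable {X : Type} [AddCommGroup X] [Module S X]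

theorem extVanish_range_toCocycles {i : ℤ} {j : ℕ}
    (h : ExtVanish S X (LinearMap.ker (A.d i)) (j + 2)) :
    ExtVanish S X (LinearMap.range (A.toCocycles i)) (j + 1) := by
  have := A.inj i
  refine ExtVanish.third_right (R := S) (LinearMap.ker (A.d i)).injective_subtype
    (g := (A.toCocycles i).rangeRestrict) ?_ (LinearMap.surjective_rangeRestrict _)
    (ExtVanish.of_injective (Nat.succ_pos _)) h
  intro x
  rw [← A.exact_subtype_toCocycles i x, Subtype.ext_iff]
  rfl

theorem extVanish_ker_succ {i : ℤ} (hi : i ≠ -1) {j : ℕ}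
    (h : ExtVanish S X (LinearMap.ker (A.d i)) (j + 2)) :
    ExtVanish S X (LinearMap.ker (A.d (i + 1))) (j + 1) := by
  have := A.inj i
  exact ExtVanish.third_right (R := S) (LinearMap.ker (A.d i)).injective_subtype
    (A.exact_subtype_toCocycles i) (A.toCocycles_surjective hi)
    (ExtVanish.of_injective (Nat.succ_pos _)) h

theorem extVanish_ker_of_succ {i : ℤ} (hi : i ≠ -1) {j : ℕ}
    (h : ExtVanish S X (LinearMap.ker (A.d (i + 1))) j) :
    ExtVanish S X (LinearMap.ker (A.d i)) (j + 1) := by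
  have := A.inj i
  exact ExtVanish.first_right (R := S) (LinearMap.ker (A.d i)).injective_subtype
    (A.exact_subtype_toCocycles i) (A.toCocycles_surjective hi) h
    (ExtVanish.of_injective (Nat.succ_pos _))

theorem extVanish_ker_natCast (n : ℕ) : ∀ {j : ℕ},
    ExtVanish S X (LinearMap.ker (A.d 0)) (n + j + 1) →
      ExtVanish S X (LinearMap.ker (A.d n)) (j + 1) := by
  induction n with
  | zero =>
    intro j h
    rw [Nat.zero_add] at h
    exact h
  | succ n ih =>
    intro j h
    rw [Nat.cast_succ]
    refine A.extVanish_ker_succ (by omega) (ih ?_)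
    rwa [show n + (j + 1) + 1 = n + 1 + j + 1 by omega]

theorem extVanish_ker_zero (n : ℕ) : ∀ {j : ℕ}, ExtVanish S X (LinearMap.ker (A.d n)) j →
    ExtVanish S X (LinearMap.ker (A.d 0)) (n + j) := by
  induction n with
  | zero =>
    intro j h
    rw [Nat.zero_add]
    exact h
  | succ n ih =>
    intro j h
    rw [Nat.cast_succ] at h
    have := ih (A.extVanish_ker_of_succ (by omega) h)
    rwa [show n + 1 + j = n + (j + 1) by omega]

theorem exists_extVanish_ker {N : Type} [AddCommGroup N] [Module S N]
    (hN : ∃ m, ∀ j, m ≤ j → ExtVanish S X N j)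
    (e : ∀ i, i = -1 → Nonempty
      (N ≃ₗ[S] LinearMap.ker (A.d (i + 1)) ⧸ LinearMap.range (A.toCocycles i))) (i : ℤ)
    (hi : A.lo - 1 ≤ i) :
    ∃ m, ∀ j, m ≤ j → ExtVanish S X (LinearMap.ker (A.d i)) j := by
  induction i, hi using Int.leInduction with
  | base =>
    have := A.subsingleton (A.lo - 1) (by omega)
    exact ⟨0, fun j _ => ExtVanish.of_subsingleton_right j⟩
  | succ i hi ih =>
    obtain ⟨m, hm⟩ := ih
    obtain ⟨m', hm'⟩ := hN
    refine ⟨m + m' + 1, fun j hj => ?_⟩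
    obtain ⟨j, rfl⟩ : ∃ k, j = k + 1 := ⟨j - 1, by omega⟩
    refine ExtVanish.middle_right (R := S)
      (LinearMap.range (A.toCocycles i)).injective_subtype
      (LinearMap.exact_subtype_mkQ _) (Submodule.mkQ_surjective _)
      (A.extVanish_range_toCocycles (hm _ (by omega))) ?_
    by_cases h : i = -1
    · obtain ⟨e⟩ := e i h
      exact (hm' _ (by omega)).congr_right e
    · have : Subsingleton (LinearMap.ker (A.d (i + 1)) ⧸ LinearMap.range (A.toCocycles i)) :=
        Submodule.Quotient.subsingleton_iff.2
          (LinearMap.range_eq_top.2 (A.toCocycles_surjective h))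
      exact ExtVanish.of_subsingleton_right _

theorem exists_socle_lift [IsLocalRing S] {i : ℤ}
    (h : ExtVanish S (S ⧸ IsLocalRing.maximalIdeal S) (LinearMap.ker (A.d i)) 1) (a : A.X i)
    (ha : ∀ x ∈ IsLocalRing.maximalIdeal S, x • A.d i a = 0) :
    ∃ a', A.d i a' = A.d i a ∧ ∀ x ∈ IsLocalRing.maximalIdeal S, x • a' = 0 := by
  let s : LinearMap.range (A.d i) := ⟨A.d i a, a, rfl⟩
  obtain ⟨κ, hκ⟩ := ExtVanish.exists_lift (R := S) (LinearMap.ker (A.d i)).injective_subtype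
    (g := (A.d i).rangeRestrict) (fun x => by
      rw [← LinearMap.exact_subtype_ker_map (A.d i) x, Subtype.ext_iff]
      rfl) (LinearMap.surjective_rangeRestrict _) h
    ((IsLocalRing.maximalIdeal S).liftQ (LinearMap.toSpanSingleton S _ s)
      (fun x hx => Subtype.ext (ha x hx)))
  refine ⟨κ (Submodule.Quotient.mk 1), ?_, fun x hx => ?_⟩
  · have := congrArg Subtype.val (LinearMap.congr_fun hκ (Submodule.Quotient.mk 1))
    refine this.trans ?_
    exact one_smul S _
  · rw [← map_smul, ← Submodule.Quotient.mk_smul, (Submodule.Quotient.mk_eq_zero _).2, map_zero]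
    exact Ideal.mul_mem_right _ _ hx

theorem extVanish_of_socle_lift [IsLocalRing S] {i : ℤ}
    (h : ∀ a : A.X i, (∀ x ∈ IsLocalRing.maximalIdeal S, x • A.d i a = 0) →
      ∃ a', A.d i a' = A.d i a ∧ ∀ x ∈ IsLocalRing.maximalIdeal S, x • a' = 0) :
    ExtVanish S (S ⧸ IsLocalRing.maximalIdeal S) (LinearMap.ker (A.d i)) 1 := by
  have := A.inj i
  refine ExtVanish.one_of_lift (R := S) (LinearMap.ker (A.d i)).injective_subtype
    (g := (A.d i).rangeRestrict) (fun x => by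
      rw [← LinearMap.exact_subtype_ker_map (A.d i) x, Subtype.ext_iff]
      rfl) (LinearMap.surjective_rangeRestrict _) (ExtVanish.of_injective one_pos) fun φ => ?_
  obtain ⟨a, ha⟩ := (φ (Submodule.Quotient.mk 1)).2
  obtain ⟨a', ha', h0⟩ := h a fun x hx => by
    rw [ha, ← Submodule.coe_smul, ← map_smul, ← Submodule.Quotient.mk_smul,
      smul_eq_mul,
      (Submodule.Quotient.mk_eq_zero _).2 (Ideal.mul_mem_right _ _ hx), map_zero]
    rfl
  refine ⟨(IsLocalRing.maximalIdeal S).liftQ (LinearMap.toSpanSingleton S _ a')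
    (fun x hx => h0 x hx), ?_⟩
  refine Submodule.linearMap_qext _ (LinearMap.ext_ring (Subtype.ext ?_))
  change A.d i ((1 : S) • a') = _
  rw [one_smul, ha', ha]
  rfl

end InjComplex

theorem SelfInjRes.nonempty_equiv_ker (E : SelfInjRes S) (i : ℤ) (hi : i = -1) :
    Nonempty (LinearMap.ker (E.d (i + 1)) ≃ₗ[S] S) := by
  let φ : S →ₗ[S] LinearMap.ker (E.d (i + 1)) :=
    (LinearMap.toSpanSingleton S _ (E.e i)).codRestrict _
      fun r => (E.d_eq_zero_iff i hi _).2 ⟨r, rfl⟩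
  refine ⟨(LinearEquiv.ofBijective φ ⟨?_, ?_⟩).symm⟩
  · refine (injective_iff_map_eq_zero φ).2 fun r hr => E.eq_zero_of_smul_e i hi r ?_
    exact congrArg Subtype.val hr
  · rintro ⟨x, hx⟩
    obtain ⟨r, rfl⟩ := (E.d_eq_zero_iff i hi x).1 hx
    exact ⟨r, rfl⟩

theorem SelfInjRes.Model.nonempty_equiv [IsLocalRing S] {E : SelfInjRes S} {N : Type}
    [AddCommGroup N] [Module S N] {b : ℕ} {q : (Fin b → S) →ₗ[S] N}
    (hq : Function.Surjective q) (A : E.Model b (LinearMap.ker q)) (i : ℤ) (hi : i = -1) :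
    Nonempty (N ≃ₗ[S] LinearMap.ker (A.d (i + 1)) ⧸ LinearMap.range (A.toCocycles i)) := by
  let φ : (Fin b → S) →ₗ[S] LinearMap.ker (A.d (i + 1)) :=
    (A.ι (i + 1) ∘ₗ LinearMap.pi fun l =>
      LinearMap.toSpanSingleton S _ (E.e i) ∘ₗ LinearMap.proj l).codRestrict _
      (A.d_ι_smul_e i hi)
  let ψ := (LinearMap.range (A.toCocycles i)).mkQ ∘ₗ φ
  have hψ : Function.Surjective ψ := by
    intro z
    obtain ⟨⟨z, hz⟩, rfl⟩ := Submodule.mkQ_surjective _ z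
    obtain ⟨f, y, rfl⟩ := A.exists_of_d_eq_zero i hi z hz
    refine ⟨f, (Submodule.Quotient.eq _).2 ⟨-y, Subtype.ext ?_⟩⟩
    change A.d i (-y) = A.ι (i + 1) (fun l => f l • E.e i) -
      (A.ι (i + 1) (fun l => f l • E.e i) + A.d i y)
    rw [map_neg]
    abel
  have hker : LinearMap.ker q = LinearMap.ker ψ := by
    ext f
    rw [A.mem_iff i hi f, LinearMap.mem_ker]
    refine Iff.trans ?_ (Submodule.Quotient.mk_eq_zero _).symm
    exact exists_congr fun y => (Subtype.ext_iff (a1 := A.toCocycles i y) (a2 := φ f)).symm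
  exact ⟨(q.quotKerEquivOfSurjective hq).symm ≪≫ₗ Submodule.quotEquivOfEq _ _ hker ≪≫ₗ
    ψ.quotKerEquivOfSurjective hψ⟩

theorem exists_extVanish_self [IsLocalRing S] [IsNoetherianRing S] {N : Type} [AddCommGroup N]
    [Module S N] [Module.Finite S N] [Nontrivial N]
    (hpd : ∃ n, ∀ (Y : Type) [AddCommGroup Y] [Module S Y], ExtVanish S N Y (n + 1))
    (hid : ∃ n, ∀ j, n ≤ j → ExtVanish S (S ⧸ IsLocalRing.maximalIdeal S) N j) :
    ∃ m, ∀ j, m ≤ j → ExtVanish S (S ⧸ IsLocalRing.maximalIdeal S) S j := by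
  obtain ⟨E⟩ := SelfInjRes.nonempty S
  obtain ⟨n, hn⟩ := hpd
  obtain ⟨b, q, hq, -, ⟨A⟩⟩ := E.exists_model n N hn
  obtain ⟨l⟩ : Nonempty (Fin b) := by
    by_contra h
    rw [not_nonempty_iff] at h
    exact not_subsingleton N hq.subsingleton
  have hZ : ∀ i, ∃ m, ∀ j, m ≤ j →
      ExtVanish S (S ⧸ IsLocalRing.maximalIdeal S) (LinearMap.ker (A.d i)) j := by
    intro i
    by_cases hi : A.lo - 1 ≤ i
    · exact A.exists_extVanish_ker hid (A.nonempty_equiv hq) i hi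
    · have := A.subsingleton i (by omega)
      exact ⟨0, fun j _ => ExtVanish.of_subsingleton_right j⟩
  obtain ⟨m, hm⟩ := hZ 0
  refine ⟨m + 1, fun j hj => ?_⟩
  obtain ⟨j, rfl⟩ : ∃ k, j = k + 1 := ⟨j - 1, by omega⟩
  have hA : ExtVanish S (S ⧸ IsLocalRing.maximalIdeal S) (LinearMap.ker (A.d j)) 1 :=
    A.extVanish_ker_natCast j (j := 0) (hm _ (by omega))
  have hE : ExtVanish S (S ⧸ IsLocalRing.maximalIdeal S) (LinearMap.ker (E.d j)) 1 := by
    refine E.extVanish_of_socle_lift fun a ha => ?_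
    let v : Fin b → E.X j := Pi.single l a
    have hv : A.d j (A.ι j v) = A.ι (j + 1) (Pi.single l (E.d j a)) := by
      rw [A.d_ι]
      congr 1
      funext l'
      by_cases h : l' = l
      · subst h
        simp [v]
      · simp [v, h]
    obtain ⟨a', ha', h0⟩ := A.exists_socle_lift hA (A.ι j v) fun x hx => by
      rw [hv, ← map_smul, ← Pi.single_smul, ha x hx, Pi.single_zero, map_zero]
    refine ⟨A.π j a' l, ?_, fun x hx => ?_⟩
    · have h1 := congrFun (A.π_d_of_socle j a' h0) l
      rw [ha', hv, A.π_ι, Pi.single_eq_same] at h1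
      exact h1.symm
    · rw [← Pi.smul_apply, ← map_smul, h0 x hx, map_zero, Pi.zero_apply]
  obtain ⟨e⟩ := E.nonempty_equiv_ker (-1) rfl
  exact (E.extVanish_ker_zero j hE).congr_right e

end cocycles

/-- **Main theorem.** Let `R` be a commutative noetherian ring, `C` a semidualizing `R`-module
and `M` a finitely generated `R`-module of finite `C`-projective dimension and finite
`C`-injective dimension. Then `R_p` is Gorenstein for every prime `p` in the support of `M`. -/
theorem main_theorem (R : Type) [CommRing R] [IsNoetherianRing R]
    (C : Type) [AddCommGroup C] [Module R C] (hC : IsSemidualizing R C)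
    (M : Type) [AddCommGroup M] [Module R M] [Module.Finite R M]
    (hCpd : ∃ n : ℕ, CpdLE R C n M inferInstance inferInstance)
    (hCid : ∃ n : ℕ, CidLE R C n M inferInstance inferInstance) :
    ∀ p ∈ Module.support R M, IsGorensteinRing (Localization.AtPrime p.asIdeal) := by
  intro p hp
  obtain ⟨n, hn⟩ := hCpd
  obtain ⟨n', hn'⟩ := hCid
  have := hC.1
  obtain ⟨P, _, _, f, hf⟩ := hn.exists_surjective
  have hunit := (CidLE.extVanish_and_tensorHomUnit_bijective hC n' M _ _ hn').2
  obtain ⟨c₀, s, hs, h⟩ := exists_smul_mem_span_singleton hunit hf hp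
  obtain ⟨j, j', hj, hj'⟩ := exists_comp_eq_smul_id hC.2.1.1 h
  have ht : s * s ∈ p.asIdeal.primeCompl := p.asIdeal.primeCompl.mul_mem hs hs
  have hnoeth : IsNoetherianRing (Localization.AtPrime p.asIdeal) :=
    IsLocalization.isNoetherianRing p.asIdeal.primeCompl _ inferInstance
  have hfin : Module.Finite (Localization.AtPrime p.asIdeal)
      (LocalizedModule p.asIdeal.primeCompl M) :=
    Module.Finite.of_isLocalizedModule p.asIdeal.primeCompl
      (LocalizedModule.mkLinearMap p.asIdeal.primeCompl M)
  have hnontriv : Nontrivial (LocalizedModule p.asIdeal.primeCompl M) :=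
    Module.mem_support_iff.1 hp
  obtain ⟨m, hm⟩ := exists_extVanish_self (S := Localization.AtPrime p.asIdeal)
    (N := LocalizedModule p.asIdeal.primeCompl M)
    ⟨n, CpdLE.extVanish_localizedModule _ ht hj hj' n M _ _ hn⟩
    ⟨n' + 1, fun i hi => CidLE.extVanish_localizedModule _ ht hj hj' n' M _ _ hn' i hi _⟩
  exact ⟨m, idLE_self_of_residueField hm⟩
end

section
/- Let R be a commutative noetherian local ring, C a semidualizing R-module, and M a finitely generated R-module of finite C-projective dimension. Then Hom_R(C, M) is a finitely generated R-module of finite projective dimension, and M ≅ C ⊗_R Hom_R(C,M); moreover if M is nonzero then Hom_R(C,M) is nonzero. -/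
set_option linter.unusedVariables false
open CategoryTheory TensorProduct

section Resolution

variable {R : Type} [CommRing R]

/-- A chosen number of generators of a finite module. -/
noncomputable def coverRank (M : {M : ModuleCat.{0} R // Module.Finite R M}) : ℕ :=
  haveI := M.2
  (Module.Finite.exists_fin' R M.1).choose

/-- A chosen surjection from a finite free module onto a finite module. -/
noncomputable def coverMap (M : {M : ModuleCat.{0} R // Module.Finite R M}) :
    (Fin (coverRank M) → R) →ₗ[R] M.1 :=
  haveI := M.2
  (Module.Finite.exists_fin' R M.1).choose_spec.choose

lemma coverMap_surjective (M : {M : ModuleCat.{0} R // Module.Finite R M}) :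
    Function.Surjective (coverMap M) :=
  haveI := M.2
  (Module.Finite.exists_fin' R M.1).choose_spec.choose_spec

variable [IsNoetherianRing R]

/-- The iterated syzygies of a finite module over a noetherian ring. -/
noncomputable def syzygyModule (M : {M : ModuleCat.{0} R // Module.Finite R M}) :
    ℕ → {M : ModuleCat.{0} R // Module.Finite R M}
  | 0 => M
  | n + 1 => ⟨ModuleCat.of R (LinearMap.ker (coverMap (syzygyModule M n))),
      inferInstanceAs (Module.Finite R (LinearMap.ker (coverMap (syzygyModule M n))))⟩

/-- A finite module over a noetherian ring has a resolution by finite free modules. -/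
lemma exists_finite_free_resolution (C : Type) [AddCommGroup C] [Module R C] [Module.Finite R C] :
    ∃ (k : ℕ → ℕ) (d : ∀ n, (Fin (k (n + 1)) → R) →ₗ[R] (Fin (k n) → R))
      (ε : (Fin (k 0) → R) →ₗ[R] C), Function.Surjective ε ∧ Function.Exact (d 0) ε ∧
        ∀ n, Function.Exact (d (n + 1)) (d n) := by
  let M : {M : ModuleCat.{0} R // Module.Finite R M} := ⟨ModuleCat.of R C, ‹_›⟩
  let p (n : ℕ) : (Fin (coverRank (syzygyModule M (n + 1))) → R) →ₗ[R]
      LinearMap.ker (coverMap (syzygyModule M n)) := coverMap (syzygyModule M (n + 1))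
  have hp (n : ℕ) : Function.Surjective (p n) := coverMap_surjective (syzygyModule M (n + 1))
  have key (n : ℕ) : Function.Exact ((LinearMap.ker (coverMap (syzygyModule M n))).subtype ∘ₗ p n)
      (coverMap (syzygyModule M n)) := by
    rw [LinearMap.exact_iff, LinearMap.range_comp, LinearMap.range_eq_top.2 (hp n),
      Submodule.map_top, Submodule.range_subtype]
  refine ⟨fun n => coverRank (syzygyModule M n),
    fun n => (LinearMap.ker (coverMap (syzygyModule M n))).subtype ∘ₗ p n,
    coverMap M, coverMap_surjective M, key 0, fun n => ?_⟩
  rw [LinearMap.exact_iff, LinearMap.ker_comp_of_ker_eq_bot _ (Submodule.ker_subtype _)]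
  exact (LinearMap.exact_iff.1 (key (n + 1)))

/-- Contravariant `Hom` into `N` keeps the sequence `d` exact in all positive degrees. -/
def HomAcyclic {k : ℕ → ℕ} (d : ∀ n, (Fin (k (n + 1)) → R) →ₗ[R] (Fin (k n) → R))
    (N : Type) [AddCommGroup N] [Module R N] : Prop :=
  ∀ (i : ℕ) (g : (Fin (k (i + 1)) → R) →ₗ[R] N), g ∘ₗ d (i + 1) = 0 →
    ∃ h : (Fin (k i) → R) →ₗ[R] N, h ∘ₗ d i = g

end Resolution

open Limits in
lemma homAcyclic_of_subsingleton_extGroup {R : Type} [CommRing R]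
    {C N : Type} [AddCommGroup C] [Module R C] [AddCommGroup N] [Module R N]
    {k : ℕ → ℕ} {d : ∀ n, (Fin (k (n + 1)) → R) →ₗ[R] (Fin (k n) → R)}
    {ε : (Fin (k 0) → R) →ₗ[R] C} (hε : Function.Surjective ε) (h0 : Function.Exact (d 0) ε)
    (hd : ∀ n, Function.Exact (d (n + 1)) (d n))
    (hExt : ∀ i : ℕ, 0 < i → Subsingleton (extGroup R C N i)) : HomAcyclic d N := by
  let K : ChainComplex (ModuleCat.{0} R) ℕ :=
    ChainComplex.of (fun n => ModuleCat.of R (Fin (k n) → R)) (fun n => ModuleCat.ofHom (d n))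
      (fun n => by ext1; exact (hd n).linearMap_comp_eq_zero)
  have hKd (n : ℕ) : K.d (n + 1) n = ModuleCat.ofHom (d n) := by simp [K]
  let P : ProjectiveResolution (ModuleCat.of R C) :=
    { complex := K
      projective := fun n => ModuleCat.projective_of_free (Pi.basisFun R (Fin (k n)))
      π := (ChainComplex.toSingle₀Equiv _ _).symm ⟨ModuleCat.ofHom ε, by
          rw [hKd]; ext1; exact h0.linearMap_comp_eq_zero⟩
      quasiIso := ⟨fun n => by
        cases n
        · rw [ChainComplex.quasiIsoAt₀_iff, ShortComplex.quasiIso_iff_of_zeros']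
          · have hε' : Epi (ModuleCat.ofHom ε) := (ModuleCat.epi_iff_surjective _).2 hε
            let S : ShortComplex (ModuleCat.{0} R) := ShortComplex.mk (ModuleCat.ofHom (d 0))
              (ModuleCat.ofHom ε) (by ext1; exact h0.linearMap_comp_eq_zero)
            have hS : S.Exact := (ShortComplex.ShortExact.moduleCat_exact_iff_function_exact S).2 h0
            refine (ShortComplex.exact_and_epi_g_iff_of_iso ?_).2 ⟨hS, hε'⟩
            exact ShortComplex.isoMk (Iso.refl _) (Iso.refl _) (Iso.refl _)
              (by simp [S, hKd]; rfl) (by simp [S]; rfl)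
          all_goals rfl
        · rename_i n
          rw [quasiIsoAt_iff_exactAt']
          · rw [HomologicalComplex.exactAt_iff' _ (n + 1 + 1) (n + 1) n (by simp) (by simp)]
            rw [ShortComplex.ShortExact.moduleCat_exact_iff_function_exact]
            change Function.Exact (K.d (n + 1 + 1) (n + 1)) (K.d (n + 1) n)
            rw [hKd, hKd]
            exact hd n
          · apply ChainComplex.exactAt_succ_single_obj⟩ }
  intro i g hg
  have hz : IsZero ((P.complex.linearYonedaObj R (ModuleCat.of R N)).homology (i + 1)) := by
    have : Subsingleton (((Ext R (ModuleCat R) (i + 1)).obj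
      (Opposite.op (ModuleCat.of R C))).obj (ModuleCat.of R N)) := hExt (i + 1) i.succ_pos
    exact (ModuleCat.isZero_of_subsingleton _).of_iso (P.isoExt (i + 1) _).symm
  rw [← HomologicalComplex.exactAt_iff_isZero_homology,
    HomologicalComplex.exactAt_iff' _ i (i + 1) (i + 2) (by simp) (by simp),
    ShortComplex.moduleCat_exact_iff] at hz
  obtain ⟨h, hh⟩ := hz (ModuleCat.ofHom g) (by
    change P.complex.d (i + 2) (i + 1) ≫ ModuleCat.ofHom g = 0
    change K.d (i + 2) (i + 1) ≫ ModuleCat.ofHom g = 0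
    rw [hKd]
    ext1
    exact hg)
  refine ⟨h.hom, ?_⟩
  change K.d (i + 1) i ≫ h = ModuleCat.ofHom g at hh
  rw [hKd] at hh
  exact congrArg ModuleCat.Hom.hom hh

section HomAcyclic

variable {R : Type} [CommRing R] {k : ℕ → ℕ}
  {d : ∀ n, (Fin (k (n + 1)) → R) →ₗ[R] (Fin (k n) → R)}
  {N N' K M P C : Type} [AddCommGroup N] [Module R N] [AddCommGroup N'] [Module R N']
  [AddCommGroup K] [Module R K] [AddCommGroup M] [Module R M] [AddCommGroup P] [Module R P]
  [AddCommGroup C] [Module R C]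

lemma HomAcyclic.of_retract (hN : HomAcyclic d N) (s : N' →ₗ[R] N) (r : N →ₗ[R] N')
    (hrs : r ∘ₗ s = LinearMap.id) : HomAcyclic d N' := by
  intro i g hg
  obtain ⟨h, hh⟩ := hN i (s ∘ₗ g) (by rw [LinearMap.comp_assoc, hg, LinearMap.comp_zero])
  exact ⟨r ∘ₗ h, by rw [LinearMap.comp_assoc, hh, ← LinearMap.comp_assoc, hrs, LinearMap.id_comp]⟩

lemma LinearMap.exists_finset_finsupp_apply_eq_zero [Module.Finite R M] {ι : Type}
    (φ : M →ₗ[R] (ι →₀ N)) : ∃ s : Finset ι, ∀ m, ∀ i ∉ s, φ m i = 0 := by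
  classical
  obtain ⟨t, ht⟩ := Module.Finite.fg_top (R := R) (M := M)
  refine ⟨t.biUnion fun m => (φ m).support, fun m i hi => ?_⟩
  have hle : (⊤ : Submodule R M) ≤ LinearMap.ker (Finsupp.lapply i ∘ₗ φ) := by
    rw [← ht, Submodule.span_le]
    intro x hx
    by_contra h
    exact hi (Finset.mem_biUnion.2 ⟨x, hx, Finsupp.mem_support_iff.2 h⟩)
  exact hle (Submodule.mem_top (x := m))

lemma HomAcyclic.finsupp (hN : HomAcyclic d N) (ι : Type) : HomAcyclic d (ι →₀ N) := by
  classical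
  intro i g hg
  obtain ⟨s, hs⟩ := LinearMap.exists_finset_finsupp_apply_eq_zero g
  have (j : ι) := hN i (Finsupp.lapply j ∘ₗ g)
    (by rw [LinearMap.comp_assoc, hg, LinearMap.comp_zero])
  choose h hh using this
  refine ⟨∑ j ∈ s, Finsupp.lsingle j ∘ₗ h j, LinearMap.ext fun x => Finsupp.ext fun j => ?_⟩
  have hj : h j (d i x) = g x j := LinearMap.congr_fun (hh j) x
  by_cases hjs : j ∈ s
  · simp [Finsupp.finsetSum_apply, Finsupp.single_apply, hjs, hj]
  · simp [Finsupp.finsetSum_apply, Finsupp.single_apply, hjs, hs x j hjs]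

lemma HomAcyclic.tensor_projective [Module.Projective R P] (hC : HomAcyclic d C) :
    HomAcyclic d (C ⊗[R] P) := by
  classical
  obtain ⟨s, hs⟩ := (Module.projective_def' (R := R) (P := P)).1 inferInstance
  let e := TensorProduct.finsuppScalarRight R R C P
  refine (hC.finsupp P).of_retract (e.toLinearMap ∘ₗ s.lTensor C)
    ((Finsupp.linearCombination R id).lTensor C ∘ₗ e.symm.toLinearMap) ?_
  ext c p
  simpa using congrArg (fun x => c ⊗ₜ[R] x) (LinearMap.congr_fun hs p)

lemma HomAcyclic.of_surjective (hd : ∀ n, Function.Exact (d (n + 1)) (d n)) (f : N →ₗ[R] M)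
    (hf : Function.Surjective f) (hN : HomAcyclic d N) (hK : HomAcyclic d (LinearMap.ker f)) :
    HomAcyclic d M := by
  intro i g hg
  obtain ⟨g', hg'⟩ := Module.projective_lifting_property f g hf
  let u : (Fin (k (i + 2)) → R) →ₗ[R] LinearMap.ker f := (g' ∘ₗ d (i + 1)).codRestrict _ fun x => by
    simpa [← hg'] using LinearMap.congr_fun hg x
  obtain ⟨h, hh⟩ := hK (i + 1) u (by
    ext1 x
    ext
    simp [u, (hd (i + 1)).apply_apply_eq_zero])
  obtain ⟨h', hh'⟩ := hN i (g' - (LinearMap.ker f).subtype ∘ₗ h) (by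
    rw [LinearMap.sub_comp, LinearMap.comp_assoc, hh, sub_eq_zero]
    rfl)
  refine ⟨f ∘ₗ h', ?_⟩
  rw [LinearMap.comp_assoc, hh', LinearMap.comp_sub, hg', ← LinearMap.comp_assoc,
    f.comp_ker_subtype, LinearMap.zero_comp, sub_zero]

lemma HomAcyclic.exists_lift {ε : (Fin (k 0) → R) →ₗ[R] C} (hε : Function.Surjective ε)
    (h0 : Function.Exact (d 0) ε) (hd : Function.Exact (d 1) (d 0)) (f : N →ₗ[R] M)
    (hf : Function.Surjective f) (hK : HomAcyclic d (LinearMap.ker f)) (g : C →ₗ[R] M) :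
    ∃ g' : C →ₗ[R] N, f ∘ₗ g' = g := by
  obtain ⟨v, hv⟩ := Module.projective_lifting_property f (g ∘ₗ ε) hf
  let u : (Fin (k 1) → R) →ₗ[R] LinearMap.ker f := (v ∘ₗ d 0).codRestrict _ fun x => by
    simpa [h0.apply_apply_eq_zero] using LinearMap.congr_fun hv (d 0 x)
  obtain ⟨h, hh⟩ := hK 0 u (by
    ext1 x
    ext
    simp [u, hd.apply_apply_eq_zero])
  let w := v - (LinearMap.ker f).subtype ∘ₗ h
  have hw : LinearMap.ker ε ≤ LinearMap.ker w := by
    rw [LinearMap.exact_iff.1 h0]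
    rintro _ ⟨x, rfl⟩
    have := congrArg Subtype.val (LinearMap.congr_fun hh x)
    simp only [LinearMap.comp_apply] at this
    simp [w, this, u]
  let e := ε.quotKerEquivOfSurjective hε
  refine ⟨(LinearMap.ker ε).liftQ w hw ∘ₗ e.symm.toLinearMap, LinearMap.ext fun c => ?_⟩
  obtain ⟨x, rfl⟩ := hε c
  have he : e.symm (ε x) = (LinearMap.ker ε).mkQ x := by
    rw [LinearEquiv.symm_apply_eq]; rfl
  have := LinearMap.congr_fun hv x
  simpa [he, w] using this

end HomAcyclic

section Unit

variable {R : Type} [CommRing R] {C : Type} [AddCommGroup C] [Module R C]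
  {P Q : Type} [AddCommGroup P] [Module R P] [AddCommGroup Q] [Module R Q]

lemma lTensor_comp_mk_flip (f : P →ₗ[R] Q) (p : P) :
    f.lTensor C ∘ₗ (TensorProduct.mk R C P).flip p = (TensorProduct.mk R C Q).flip (f p) := by
  ext c
  simp

lemma bijective_mk_flip_finsupp [Module.Finite R C]
    (hC : Function.Bijective (LinearMap.lsmul R C)) (ι : Type) :
    Function.Bijective (TensorProduct.mk R C (ι →₀ R)).flip := by
  classical
  let e := TensorProduct.finsuppScalarRight R R C ι
  have he (c : C) (p : ι →₀ R) (i : ι) : e (c ⊗ₜ p) i = p i • c :=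
    TensorProduct.finsuppScalarRight_apply_tmul_apply c p i
  constructor
  · rw [injective_iff_map_eq_zero]
    intro p hp
    ext i
    refine hC.1 (LinearMap.ext fun c => ?_)
    have := LinearMap.congr_fun hp c
    simp only [LinearMap.flip_apply, TensorProduct.mk_apply, LinearMap.zero_apply] at this
    simp [← he, this]
  · intro φ
    obtain ⟨s, hs⟩ := LinearMap.exists_finset_finsupp_apply_eq_zero (e.toLinearMap ∘ₗ φ)
    have (i : ι) := hC.2 (Finsupp.lapply i ∘ₗ e.toLinearMap ∘ₗ φ)
    choose r hr using this
    have hr (i : ι) (c : C) : r i • c = e (φ c) i := LinearMap.congr_fun (hr i) c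
    refine ⟨Finsupp.onFinset s r fun i hi => ?_, LinearMap.ext fun c => ?_⟩
    · by_contra his
      refine hi (hC.1 (LinearMap.ext fun c => ?_))
      simpa [hr] using hs c i his
    · apply e.injective
      ext i
      simp [he, hr]

/-- For `C` with bijective homothety map and `P` projective, the unit `P → Hom(C, C ⊗ P)` of the
tensor-hom adjunction is bijective. -/
lemma bijective_mk_flip_of_projective [Module.Finite R C] [Module.Projective R P]
    (hC : Function.Bijective (LinearMap.lsmul R C)) :
    Function.Bijective (TensorProduct.mk R C P).flip := by
  obtain ⟨s, hs⟩ := (Module.projective_def' (R := R) (P := P)).1 inferInstance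
  have hs' (p : P) : Finsupp.linearCombination R id (s p) = p := LinearMap.congr_fun hs p
  obtain ⟨hinj, hsurj⟩ := bijective_mk_flip_finsupp hC P
  constructor
  · intro p q hpq
    have : s p = s q := hinj (by rw [← lTensor_comp_mk_flip, ← lTensor_comp_mk_flip, hpq])
    rw [← hs' p, this, hs']
  · intro φ
    obtain ⟨q, hq⟩ := hsurj (s.lTensor C ∘ₗ φ)
    refine ⟨Finsupp.linearCombination R id q, ?_⟩
    rw [← lTensor_comp_mk_flip, hq, ← LinearMap.comp_assoc, ← LinearMap.lTensor_comp, hs,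
      LinearMap.lTensor_id, LinearMap.id_comp]

end Unit

section Evaluation

variable {R : Type} [CommRing R] (C : Type) [AddCommGroup C] [Module R C]
  {M N P : Type} [AddCommGroup M] [Module R M] [AddCommGroup N] [Module R N]
  [AddCommGroup P] [Module R P]

variable (R M) in
/-- The evaluation map `C ⊗ Hom(C, M) → M`. -/
noncomputable def homEval : C ⊗[R] (C →ₗ[R] M) →ₗ[R] M :=
  TensorProduct.lift ((LinearMap.id : (C →ₗ[R] M) →ₗ[R] (C →ₗ[R] M)).flip)

@[simp]
lemma homEval_tmul (c : C) (g : C →ₗ[R] M) : homEval R C M (c ⊗ₜ g) = g c := rfl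

variable {C}

lemma homEval_comp_lTensor (f : C ⊗[R] P →ₗ[R] M) :
    homEval R C M ∘ₗ ((f.compRight R) ∘ₗ (TensorProduct.mk R C P).flip).lTensor C = f := by
  ext c p
  simp

lemma bijective_homEval_of_equiv (hP : Function.Bijective (TensorProduct.mk R C P).flip)
    (e : C ⊗[R] P ≃ₗ[R] M) : Function.Bijective (homEval R C M) := by
  let η : P ≃ₗ[R] (C →ₗ[R] M) := (LinearEquiv.ofBijective _ hP).trans (e.congrRight)
  have h : homEval R C M ∘ₗ (η.lTensor C).toLinearMap = e.toLinearMap := by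
    ext c p
    rfl
  have h' : ⇑(homEval R C M) ∘ ⇑(η.lTensor C) = e := congrArg DFunLike.coe h
  rw [← Function.Bijective.of_comp_iff _ (η.lTensor C).bijective, h']
  exact e.bijective

variable (f : C ⊗[R] P →ₗ[R] M)

/-- The kernel of `P ≅ Hom(C, C ⊗ P) → Hom(C, M)` is `Hom(C, ker f)`. -/
noncomputable def homKerEquiv (hP : Function.Bijective (TensorProduct.mk R C P).flip) :
    (C →ₗ[R] LinearMap.ker f) ≃ₗ[R]
      LinearMap.ker ((f.compRight R) ∘ₗ (TensorProduct.mk R C P).flip) :=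
  let η := LinearEquiv.ofBijective _ hP
  LinearEquiv.ofBijective
    ((η.symm.toLinearMap ∘ₗ (LinearMap.ker f).subtype.compRight R).codRestrict _ fun ψ => by
      have : (TensorProduct.mk R C P).flip (η.symm ((LinearMap.ker f).subtype ∘ₗ ψ)) = _ :=
        η.apply_symm_apply _
      simp only [LinearMap.mem_ker, LinearMap.comp_apply, LinearEquiv.coe_coe,
        LinearMap.compRight_apply, this]
      ext c
      simp) <| by
    constructor
    · intro ψ ψ' h
      have h := η.symm.injective (congrArg Subtype.val h)
      ext c
      exact LinearMap.congr_fun h c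
    · rintro ⟨p, hp⟩
      refine ⟨(η p).codRestrict _ fun c => LinearMap.congr_fun hp c, Subtype.ext ?_⟩
      exact η.symm_apply_apply p

lemma tmul_homKerEquiv (hP : Function.Bijective (TensorProduct.mk R C P).flip)
    (c : C) (ψ : C →ₗ[R] LinearMap.ker f) :
    c ⊗ₜ[R] (homKerEquiv f hP ψ : P) = (ψ c : C ⊗[R] P) :=
  LinearMap.congr_fun ((LinearEquiv.ofBijective _ hP).apply_symm_apply
    ((LinearMap.ker f).subtype ∘ₗ ψ)) c

lemma bijective_homEval_of_surjective (hP : Function.Bijective (TensorProduct.mk R C P).flip)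
    (hf : Function.Surjective f)
    (hg : Function.Surjective ((f.compRight R) ∘ₗ (TensorProduct.mk R C P).flip))
    (hK : Function.Surjective (homEval R C (LinearMap.ker f))) :
    Function.Bijective (homEval R C M) := by
  have hcomp (t : C ⊗[R] P) := LinearMap.congr_fun (homEval_comp_lTensor f) t
  set g := (f.compRight R) ∘ₗ (TensorProduct.mk R C P).flip with hgdef
  constructor
  · rw [injective_iff_map_eq_zero]
    intro x hx
    obtain ⟨t, rfl⟩ := LinearMap.lTensor_surjective C hg x
    have ht : f t = 0 := (hcomp t).symm.trans hx
    obtain ⟨y, hy⟩ := hK ⟨t, ht⟩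
    have key : (LinearMap.ker f).subtype ∘ₗ homEval R C (LinearMap.ker f) =
        ((LinearMap.ker g).subtype ∘ₗ (homKerEquiv f hP).toLinearMap).lTensor C := by
      ext c ψ
      simpa using (tmul_homKerEquiv f hP c ψ).symm
    have hty : t = ((LinearMap.ker g).subtype ∘ₗ (homKerEquiv f hP).toLinearMap).lTensor C y := by
      rw [← key, LinearMap.comp_apply, hy]
      rfl
    have hzero : g ∘ₗ (LinearMap.ker g).subtype ∘ₗ (homKerEquiv f hP).toLinearMap = 0 := by
      ext1 ψ
      exact (homKerEquiv f hP ψ).2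
    rw [hty, ← LinearMap.comp_apply, ← LinearMap.lTensor_comp, hzero, LinearMap.lTensor_zero,
      LinearMap.zero_apply]
  · intro m
    obtain ⟨t, rfl⟩ := hf m
    exact ⟨_, hcomp t⟩

end Evaluation

lemma pdLE.of_equiv {R : Type} [CommRing R] {n : ℕ} {M N : Type} [AddCommGroup M] [Module R M]
    [AddCommGroup N] [Module R N] (e : M ≃ₗ[R] N)
    (h : pdLE R n M inferInstance inferInstance) : pdLE R n N inferInstance inferInstance := by
  induction n generalizing M N with
  | zero =>
    have : Module.Projective R M := h
    exact Module.Projective.of_equiv e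
  | succ n ih =>
    obtain ⟨P, iP, jP, f, hP, hf, hK⟩ := h
    refine ⟨P, iP, jP, e.toLinearMap ∘ₗ f, hP, e.surjective.comp hf, ih ?_ hK⟩
    exact LinearEquiv.ofEq _ _ (LinearEquiv.ker_comp e f).symm

/-- Over a resolution of `C` by finite free modules on which `Hom(-, C)` is acyclic, modules of
finite `C`-projective dimension satisfy the defining conditions of the Bass class. -/
lemma CpdLE.homAcyclic_and_pdLE_and_bijective {R : Type} [CommRing R] {C : Type} [AddCommGroup C]
    [Module R C] [Module.Finite R C] (hC : Function.Bijective (LinearMap.lsmul R C)) {k : ℕ → ℕ}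
    {d : ∀ n, (Fin (k (n + 1)) → R) →ₗ[R] (Fin (k n) → R)} {ε : (Fin (k 0) → R) →ₗ[R] C}
    (hε : Function.Surjective ε) (h0 : Function.Exact (d 0) ε)
    (hd : ∀ n, Function.Exact (d (n + 1)) (d n)) (hdC : HomAcyclic d C) {n : ℕ}
    {M : Type} [AddCommGroup M] [Module R M] (hM : CpdLE R C n M inferInstance inferInstance) :
    HomAcyclic d M ∧ pdLE R n (C →ₗ[R] M) inferInstance inferInstance ∧
      Function.Bijective (homEval R C M) := by
  induction n generalizing M with
  | zero =>
    obtain ⟨P, iP, jP, hP, ⟨e⟩⟩ := hM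
    have hη := bijective_mk_flip_of_projective (P := P) hC
    refine ⟨hdC.tensor_projective.of_retract e.symm.toLinearMap e.toLinearMap (by ext; simp), ?_,
      bijective_homEval_of_equiv hη e⟩
    exact Module.Projective.of_equiv ((LinearEquiv.ofBijective _ hη).trans e.congrRight)
  | succ n ih =>
    obtain ⟨P, iP, jP, f, hP, hf, hK⟩ := hM
    obtain ⟨hKd, hKpd, hKev⟩ := ih hK
    have hη := bijective_mk_flip_of_projective (P := P) hC
    have hg : Function.Surjective ((f.compRight R) ∘ₗ (TensorProduct.mk R C P).flip) := by
      rw [LinearMap.coe_comp]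
      exact Function.Surjective.comp (hKd.exists_lift hε h0 (hd 0) f hf) hη.2
    exact ⟨.of_surjective hd f hf hdC.tensor_projective hKd,
      ⟨P, iP, jP, _, hP, hg, hKpd.of_equiv (homKerEquiv f hη)⟩,
      bijective_homEval_of_surjective f hη hf hg hKev.2⟩

/-- If `C` is semidualizing and `M` is finitely generated of finite `C`-projective dimension
over a noetherian local ring, then `Hom_R(C,M)` is finitely generated of finite projective
dimension, the evaluation map `C ⊗ Hom_R(C,M) → M` is an isomorphism, and `Hom_R(C,M) ≠ 0`
whenever `M ≠ 0`. -/
theorem finite_Cpd_mem_Bass_class (R : Type) [CommRing R] [IsNoetherianRing R] [IsLocalRing R]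
    (C : Type) [AddCommGroup C] [Module R C] (hC : IsSemidualizing R C)
    (M : Type) [AddCommGroup M] [Module R M] [Module.Finite R M]
    (hCpd : ∃ n : ℕ, CpdLE R C n M inferInstance inferInstance) :
    Module.Finite R (C →ₗ[R] M) ∧
    (∃ n : ℕ, pdLE R n (C →ₗ[R] M) inferInstance inferInstance) ∧
    Function.Bijective
      (TensorProduct.lift ((LinearMap.id : (C →ₗ[R] M) →ₗ[R] (C →ₗ[R] M)).flip)) ∧
    (Nontrivial M → Nontrivial (C →ₗ[R] M)) := by
  obtain ⟨hfin, hsmul, hExt⟩ := hC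
  obtain ⟨n, hn⟩ := hCpd
  obtain ⟨k, d, ε, hε, h0, hd⟩ := exists_finite_free_resolution (R := R) C
  obtain ⟨-, hpd, hev⟩ := hn.homAcyclic_and_pdLE_and_bijective hsmul hε h0 hd
    (homAcyclic_of_subsingleton_extGroup hε h0 hd hExt)
  refine ⟨inferInstance, ⟨n, hpd⟩, hev, fun hM => ?_⟩
  by_contra h
  rw [not_nontrivial_iff_subsingleton] at h
  have : Subsingleton M := hev.2.subsingleton
  exact not_subsingleton M this
end
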